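/- For every prime p and every v ∈ ℚ_p, the set of u ∈ ℝ such that (u,v) does not satisfy condition (1.2) has Hausdorff dimension zero. -/

import Mathlib

/-- Condition (1.2): `liminf_{|q|,|q₀| → ∞} |q|·|qu − q₀|·|qv − q₀|_p = 0`. -/
def Cond12 (p : ℕ) [Fact p.Prime] (u : ℝ) (v : ℚ_[p]) : Prop :=
  ∀ ε : ℝ, 0 < ε → ∀ N : ℕ, ∃ q q₀ : ℤ,
    (N : ℤ) ≤ |q| ∧ (N : ℤ) ≤ |q₀| ∧
    (|q| : ℝ) * |(q : ℝ) * u - (q₀ : ℝ)| * ‖(q : ℚ_[p]) * v - (q₀ : ℚ_[p])‖ < ε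

/-!
For `v ∈ ℤ_p`, the lattices `{(q, q₀) : ‖q v - q₀‖ ≤ p ^ (-2 n)}`, rescaled to covolume one, form a
sequence `Λ` indexed by `n`, and `s` enters through the flow `t ↦ dilation (B ^ t)⁻¹ * lowerShear s`
acting on all of them at once. If `s` is irrational and fails the condition, the lattices `Λ n` with
`n` in a window growing with `t` stay uniformly away from the coordinate axes along this flow.

Suppose that the `s` in a unit interval failing the condition with a fixed constant met at least
`exp (10 T)` of the cells of length `B ^ (-2 T)` for infinitely many `T`. Counting entropy, for many
pairs `(s, t)` the sample points in the cell of `s` at level `t` spread over many of its subcells.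
Two facts then contradict each other.

* Almost minimising a quadratic functional yields a function of the sequence which, on average over
  the sample, hardly changes when `n` is replaced by `n + k` for many values of `k`, but which does
  change under shears of bounded size.
* By pigeonhole, some `h ∈ SL(2, ℝ)` near `1` maps the sequence from index `k` to the sequence from
  another index `k'`. The lattices are commensurable and avoid the axes, so `h` is not too close to
  a lower unipotent matrix. Passing from `s` to another sample point `s'` and going back in time
  conjugates `h`; its lower left entry becomes a quadratic polynomial in `s' - s`, which is large at
  some `s'` since the sample is spread, and at a suitable time `h` becomes a shear of bounded size.

So fewer than `exp (10 T)` cells are met for large `T`, which bounds the dimension by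
`10 / log (B ^ 2)`, and `B` is arbitrary.
-/

open MeasureTheory Filter Topology Set
open scoped MatrixGroups Pointwise BigOperators

namespace MixedLittlewood

/-! ### Unimodular lattices in the plane -/

section SpecialLinearGroup

lemma smul_apply_zero (g : SL(2, ℝ)) (x : Fin 2 → ℝ) :
    (g • x) 0 = g 0 0 * x 0 + g 0 1 * x 1 := by
  simp [Matrix.SpecialLinearGroup.smul_def]

lemma smul_apply_one (g : SL(2, ℝ)) (x : Fin 2 → ℝ) :
    (g • x) 1 = g 1 0 * x 0 + g 1 1 * x 1 := by
  simp [Matrix.SpecialLinearGroup.smul_def]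

lemma mul_apply (g h : SL(2, ℝ)) (i j : Fin 2) :
    (g * h) i j = g i 0 * h 0 j + g i 1 * h 1 j := by
  simp [Matrix.mul_apply]

lemma det_eq_one (g : SL(2, ℝ)) : g 0 0 * g 1 1 - g 0 1 * g 1 0 = 1 := by
  have := g.det_coe
  rwa [Matrix.det_fin_two] at this

lemma abs_inv_apply_le {C : ℝ} {g : SL(2, ℝ)} (hg : ∀ i j, |g i j| ≤ C) (i j : Fin 2) :
    |g⁻¹ i j| ≤ C := by
  rw [Matrix.SpecialLinearGroup.SL2_inv_expl]
  fin_cases i <;> fin_cases j <;> simp [hg]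

/-- The lower unipotent matrix with off-diagonal entry `-δ`; the sign is chosen so that it moves
the lattices attached to `s` to those attached to `s + δ`. -/
def lowerShear (δ : ℝ) : SL(2, ℝ) := ⟨!![1, 0; -δ, 1], by simp⟩

lemma coe_lowerShear (δ : ℝ) :
    (lowerShear δ : Matrix (Fin 2) (Fin 2) ℝ) = !![1, 0; -δ, 1] := rfl

lemma lowerShear_add (δ δ' : ℝ) : lowerShear (δ + δ') = lowerShear δ * lowerShear δ' := by
  ext i j
  fin_cases i <;> fin_cases j <;> simp [coe_lowerShear, add_comm]

lemma lowerShear_smul_zero (δ : ℝ) (x : Fin 2 → ℝ) : (lowerShear δ • x) 0 = x 0 := by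
  simp [smul_apply_zero, coe_lowerShear]

lemma lowerShear_smul_one (δ : ℝ) (x : Fin 2 → ℝ) :
    (lowerShear δ • x) 1 = x 1 - δ * x 0 := by
  simp [smul_apply_one, coe_lowerShear]; ring

/-- The diagonal matrix with entries `b` and `b⁻¹`. -/
noncomputable def dilation (b : ℕ) [NeZero b] : SL(2, ℝ) :=
  ⟨!![(b : ℝ), 0; 0, (b : ℝ)⁻¹], by simp [NeZero.ne b]⟩

lemma coe_dilation (b : ℕ) [NeZero b] :
    (dilation b : Matrix (Fin 2) (Fin 2) ℝ) = !![(b : ℝ), 0; 0, (b : ℝ)⁻¹] := rfl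

lemma dilation_mul (b c : ℕ) [NeZero b] [NeZero c] :
    dilation (b * c) = dilation b * dilation c := by
  ext i j
  fin_cases i <;> fin_cases j <;> simp [coe_dilation, mul_comm]

/-- The entries of `g` are within `r` of those of the identity. -/
def NearOne (r : ℝ) (g : SL(2, ℝ)) : Prop :=
  ∀ i j, |(g - 1 : Matrix (Fin 2) (Fin 2) ℝ) i j| ≤ r

lemma nearOne_iff {r : ℝ} {g : SL(2, ℝ)} :
    NearOne r g ↔ |g 0 0 - 1| ≤ r ∧ |g 0 1| ≤ r ∧ |g 1 0| ≤ r ∧ |g 1 1 - 1| ≤ r := by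
  simp [NearOne, Fin.forall_fin_two, and_assoc]

lemma NearOne.mono {r r' : ℝ} (h : r ≤ r') {g : SL(2, ℝ)} (hg : NearOne r g) : NearOne r' g :=
  fun i j => (hg i j).trans h

lemma NearOne.abs_apply_le {r : ℝ} {g : SL(2, ℝ)} (hg : NearOne r g) (i j : Fin 2) :
    |g i j| ≤ 1 + r := by
  have h1 : |(1 : Matrix (Fin 2) (Fin 2) ℝ) i j| ≤ 1 := by
    rw [Matrix.one_apply]; split_ifs <;> simp
  have h2 := hg i j
  rw [Matrix.sub_apply] at h2
  linarith [abs_sub_abs_le_abs_sub (g i j) ((1 : Matrix (Fin 2) (Fin 2) ℝ) i j)]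

lemma NearOne.norm_smul_sub_le {r : ℝ} {g : SL(2, ℝ)} (hg : NearOne r g) (x : Fin 2 → ℝ) :
    ‖g • x - x‖ ≤ 2 * r * ‖x‖ := by
  obtain ⟨h00, h01, h10, h11⟩ := nearOne_iff.1 hg
  have hr : 0 ≤ r := (abs_nonneg _).trans h00
  have two {a b : ℝ} (ha : |a| ≤ r) (hb : |b| ≤ r) : |a * x 0 + b * x 1| ≤ 2 * r * ‖x‖ := by
    have h0 : |a * x 0| ≤ r * ‖x‖ := by
      rw [abs_mul]; exact mul_le_mul ha (norm_le_pi_norm x 0) (abs_nonneg _) hr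
    have h1 : |b * x 1| ≤ r * ‖x‖ := by
      rw [abs_mul]; exact mul_le_mul hb (norm_le_pi_norm x 1) (abs_nonneg _) hr
    linarith [abs_add_le (a * x 0) (b * x 1)]
  refine (pi_norm_le_iff_of_nonneg (by positivity)).2 (Fin.forall_fin_two.2 ⟨?_, ?_⟩)
  · rw [Real.norm_eq_abs, Pi.sub_apply, smul_apply_zero]
    convert two h00 h01 using 2; ring
  · rw [Real.norm_eq_abs, Pi.sub_apply, smul_apply_one]
    convert two h10 h11 using 2; ring

lemma nearOne_mul_inv {C ρ : ℝ} {g h : SL(2, ℝ)} (hg : ∀ i j, |g i j| ≤ C)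
    (hgh : ∀ i j, |h i j - g i j| ≤ ρ) : NearOne (2 * (ρ * C)) (h * g⁻¹) := by
  intro i j
  have hρ : 0 ≤ ρ := (abs_nonneg _).trans (hgh 0 0)
  have expand : ((h * g⁻¹ : SL(2, ℝ)) - 1 : Matrix (Fin 2) (Fin 2) ℝ) i j =
      (h i 0 - g i 0) * g⁻¹ 0 j + (h i 1 - g i 1) * g⁻¹ 1 j := by
    rw [Matrix.sub_apply, mul_apply, ← Matrix.SpecialLinearGroup.coe_one,
      ← mul_inv_cancel g, mul_apply]
    ring
  have term (k : Fin 2) : |(h i k - g i k) * g⁻¹ k j| ≤ ρ * C := by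
    rw [abs_mul]
    exact mul_le_mul (hgh i k) (abs_inv_apply_le hg k j) (abs_nonneg _) hρ
  rw [expand]
  linarith [abs_add_le ((h i 0 - g i 0) * g⁻¹ 0 j) ((h i 1 - g i 1) * g⁻¹ 1 j), term 0, term 1]

end SpecialLinearGroup

section Unimodular

/-- The vectors with integer coordinates. -/
def intLattice : AddSubgroup (Fin 2 → ℝ) := ((Int.castAddHom ℝ).compLeft (Fin 2)).range

lemma intCast_mem_intLattice (a : Fin 2 → ℤ) : (fun i => (a i : ℝ)) ∈ intLattice := ⟨a, rfl⟩

lemma intLattice_eq_span :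
    intLattice = (Submodule.span ℤ (range (Pi.basisFun ℝ (Fin 2)))).toAddSubgroup := by
  ext x
  rw [Submodule.mem_toAddSubgroup, Module.Basis.mem_span_iff_repr_mem]
  simp only [Pi.basisFun_repr, mem_range, intLattice, AddMonoidHom.mem_range]
  refine ⟨fun ⟨a, ha⟩ i => ⟨a i, congrFun ha i⟩, fun h => ?_⟩
  choose a ha using h
  exact ⟨a, funext ha⟩

lemma intMatrix_smul_intLattice (γ : SL(2, ℤ)) : (γ : SL(2, ℝ)) • intLattice = intLattice := by
  have hle (γ : SL(2, ℤ)) : (γ : SL(2, ℝ)) • intLattice ≤ intLattice := by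
    rintro _ ⟨_, ⟨a, rfl⟩, rfl⟩
    refine ⟨(γ : Matrix (Fin 2) (Fin 2) ℤ).mulVec a, ?_⟩
    ext i
    fin_cases i <;> simp [Matrix.SpecialLinearGroup.smul_def]
  refine (hle γ).antisymm ?_
  have := AddSubgroup.pointwise_smul_le_pointwise_smul_iff (a := (γ : SL(2, ℝ))) |>.2 (hle γ⁻¹)
  rwa [smul_smul, map_inv, mul_inv_cancel, one_smul] at this

/-- A lattice of covolume one in the plane. -/
def IsUnimodular (Λ : AddSubgroup (Fin 2 → ℝ)) : Prop :=
  ∃ g : SL(2, ℝ), Λ = g • intLattice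

lemma IsUnimodular.smul {Λ : AddSubgroup (Fin 2 → ℝ)} (hΛ : IsUnimodular Λ) (g : SL(2, ℝ)) :
    IsUnimodular (g • Λ) := by
  obtain ⟨h, rfl⟩ := hΛ
  exact ⟨g * h, smul_smul g h _⟩

lemma IsUnimodular.exists_mem_box {Λ : AddSubgroup (Fin 2 → ℝ)} (hΛ : IsUnimodular Λ) {l : ℝ}
    (hl : 0 < l) : ∃ x ∈ Λ, x ≠ 0 ∧ |x 0| ≤ l ∧ |x 1| ≤ 1 / l := by
  obtain ⟨g, rfl⟩ := hΛ
  let box : Set (Fin 2 → ℝ) := Icc ![-l, -(1 / l)] ![l, 1 / l]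
  let f : (Fin 2 → ℝ) →ₗ[ℝ] Fin 2 → ℝ := Matrix.toLin' (g⁻¹ : SL(2, ℝ))
  have hvol : volume (f '' box) = 4 := by
    have hbox : volume box = 4 := by
      simp only [box, Real.volume_Icc_pi, Fin.prod_univ_two, Matrix.cons_val_zero,
        Matrix.cons_val_one, sub_neg_eq_add]
      rw [← ENNReal.ofReal_mul (by positivity), show (l + l) * (1 / l + 1 / l) = 4 by
        field_simp; norm_num]
      simp
    rw [Measure.addHaar_image_linearMap, hbox, LinearMap.det_toLin', g⁻¹.det_coe]
    simp
  have hsymm : ∀ x ∈ f '' box, -x ∈ f '' box := by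
    rintro _ ⟨x, hx, rfl⟩
    refine ⟨-x, ?_, map_neg f x⟩
    simp only [box, mem_Icc, Pi.le_def, Fin.forall_fin_two, Matrix.cons_val_zero,
      Matrix.cons_val_one, Pi.neg_apply] at hx ⊢
    constructor <;> constructor <;> linarith [hx.1.1, hx.1.2, hx.2.1, hx.2.2]
  have : Countable (Submodule.span ℤ (range (Pi.basisFun ℝ (Fin 2)))).toAddSubgroup :=
    inferInstanceAs (Countable (Submodule.span ℤ (range (Pi.basisFun ℝ (Fin 2)))))
  obtain ⟨x, hx0, y, hy, hyx⟩ := exists_ne_zero_mem_lattice_of_measure_mul_two_pow_le_measure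
    (ZSpan.isAddFundamentalDomain' (Pi.basisFun ℝ (Fin 2)) volume) hsymm
    ((convex_Icc _ _).linear_image f) (isCompact_Icc.image (LinearMap.continuous_on_pi f))
    (by rw [hvol]; simp [ZSpan.fundamentalDomain_pi_basisFun, Real.volume_pi_Ico]; norm_num)
  have hgx : y = g • (x : Fin 2 → ℝ) := by
    rw [← hyx, eq_comm, ← eq_inv_smul_iff]; rfl
  have hy0 : y ≠ 0 := by
    rw [hgx, Ne, smul_eq_zero_iff_eq]
    exact fun h => hx0 (Subtype.ext h)
  simp only [box, mem_Icc, Pi.le_def, Fin.forall_fin_two, Matrix.cons_val_zero,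
    Matrix.cons_val_one] at hy
  refine ⟨y, ?_, hy0, abs_le.2 ⟨hy.1.1, hy.2.1⟩, abs_le.2 ⟨hy.1.2, hy.2.2⟩⟩
  rw [hgx]
  exact AddSubgroup.smul_mem_pointwise_smul _ _ _ (by rw [intLattice_eq_span]; exact x.2)

lemma IsUnimodular.exists_basis_of_mem {Λ : AddSubgroup (Fin 2 → ℝ)} (hΛ : IsUnimodular Λ)
    {x : Fin 2 → ℝ} (hx : x ∈ Λ) (hx0 : x ≠ 0) :
    ∃ g : SL(2, ℝ), Λ = g • intLattice ∧ ∃ m : ℝ, 1 ≤ m ∧ ∀ i, x i = m * g i 0 := by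
  obtain ⟨g, rfl⟩ := hΛ
  obtain ⟨_, ⟨a, rfl⟩, rfl⟩ := hx
  have ha : 0 < Int.gcd (a 0) (a 1) := by
    rw [Int.gcd_pos_iff]
    contrapose! hx0
    have : a = 0 := funext (Fin.forall_fin_two.2 hx0)
    simp [this]
  obtain ⟨q, d, hqd, hq, hd⟩ := Int.exists_gcd_one ha
  obtain ⟨γ, h0, h1⟩ := (Int.isCoprime_iff_gcd_eq_one.2 hqd).exists_SL2_col 0
  refine ⟨g * γ, ?_, Int.gcd (a 0) (a 1), by exact_mod_cast ha, fun i => ?_⟩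
  · rw [← smul_smul, intMatrix_smul_intLattice]
  · have hq' : (a 0 : ℝ) = q * Int.gcd (a 0) (a 1) := by exact_mod_cast hq
    have hd' : (a 1 : ℝ) = d * Int.gcd (a 0) (a 1) := by exact_mod_cast hd
    have hx (i : Fin 2) : (g • fun i => (a i : ℝ)) i = g i 0 * a 0 + g i 1 * a 1 := by
      fin_cases i
      exacts [smul_apply_zero g _, smul_apply_one g _]
    change (g • fun i => (a i : ℝ)) i = _
    rw [hx, mul_apply]
    simp only [Matrix.SpecialLinearGroup.map_apply_coe, RingHom.mapMatrix_apply, Matrix.map_apply,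
      eq_intCast, h0, h1]
    linear_combination g i 0 * hq' + g i 1 * hd'

/-- The second basis vector is reduced modulo the first one. -/
lemma exists_smul_intLattice_eq_of_col {g : SL(2, ℝ)} {ρ : ℝ} (hρ : 0 < ρ)
    (h0 : |g 0 0| ≤ 1) (h1 : |g 1 0| ≤ 1) (hg : ρ ≤ g 0 0 ^ 2 + g 1 0 ^ 2) :
    ∃ g' : SL(2, ℝ), g • intLattice = g' • intLattice ∧ ∀ i j, |g' i j| ≤ 1 + 1 / ρ := by
  set N : ℝ := g 0 0 ^ 2 + g 1 0 ^ 2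
  have hN : 0 < N := hρ.trans_le hg
  set y : ℝ := (g 0 1 * g 0 0 + g 1 1 * g 1 0) / N with hy
  let γ : SL(2, ℤ) := ⟨!![1, -round y; 0, 1], by simp⟩
  have hγ (i j : Fin 2) : (γ : SL(2, ℝ)) i j =
      ((!![1, -round y; 0, 1] : Matrix (Fin 2) (Fin 2) ℤ) i j : ℤ) := rfl
  have hy2 : |y - round y| ≤ 1 / 2 := abs_sub_round y
  have hdet := det_eq_one g
  have e00 : (g * (γ : SL(2, ℝ))) 0 0 = g 0 0 := by simp [mul_apply, hγ]
  have e10 : (g * (γ : SL(2, ℝ))) 1 0 = g 1 0 := by simp [mul_apply, hγ]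
  have e01 : (g * (γ : SL(2, ℝ))) 0 1 = (y - round y) * g 0 0 - g 1 0 / N := by
    have : (g * (γ : SL(2, ℝ))) 0 1 = g 0 1 - round y * g 0 0 := by simp [mul_apply, hγ]; ring
    rw [this, hy]; field_simp; linear_combination -g 1 0 * hdet
  have e11 : (g * (γ : SL(2, ℝ))) 1 1 = (y - round y) * g 1 0 + g 0 0 / N := by
    have : (g * (γ : SL(2, ℝ))) 1 1 = g 1 1 - round y * g 1 0 := by simp [mul_apply, hγ]; ring
    rw [this, hy]; field_simp; linear_combination g 0 0 * hdet
  have hdiv {z : ℝ} (hz : |z| ≤ 1) : |z / N| ≤ 1 / ρ := by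
    rw [abs_div, abs_of_pos hN]
    exact div_le_div₀ zero_le_one hz hρ hg
  have hmul {z : ℝ} (hz : |z| ≤ 1) : |(y - round y) * z| ≤ 1 := by
    rw [abs_mul]
    nlinarith [abs_nonneg (y - round y), abs_nonneg z]
  have hρ' : 0 < 1 / ρ := by positivity
  refine ⟨g * γ, by rw [← smul_smul, intMatrix_smul_intLattice], fun i j => ?_⟩
  fin_cases i <;> fin_cases j <;> simp only [Fin.zero_eta, Fin.mk_one, e00, e01, e10, e11]
  · linarith
  · exact (abs_sub _ _).trans (add_le_add (hmul h0) (hdiv h1))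
  · linarith
  · exact (abs_add_le _ _).trans (add_le_add (hmul h1) (hdiv h0))

/-- Quantitative nondegeneracy of a plane lattice: nonzero vectors have coordinate product at
least `ε`, unless their second coordinate is at least `Θ`. -/
def IsFat (ε Θ : ℝ) (Λ : AddSubgroup (Fin 2 → ℝ)) : Prop :=
  ∀ x ∈ Λ, x ≠ 0 → ε ≤ |x 0 * x 1| ∨ Θ ≤ |x 1|

lemma IsFat.exists_basis {ε Θ : ℝ} {Λ : AddSubgroup (Fin 2 → ℝ)} (hΛ : IsUnimodular Λ)
    (hε : 0 < ε) (hΘ : 1 < Θ) (hF : IsFat ε Θ Λ) :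
    ∃ g : SL(2, ℝ), Λ = g • intLattice ∧ ∀ i j, |g i j| ≤ 1 + 1 / ε := by
  obtain ⟨x, hx, hx0, hx1, hx2⟩ := hΛ.exists_mem_box one_pos
  obtain ⟨g, rfl, m, hm, hxg⟩ := hΛ.exists_basis_of_mem hx hx0
  have habs (i : Fin 2) : |g i 0| ≤ |x i| := by
    rw [hxg, abs_mul, abs_of_nonneg (zero_le_one.trans hm)]
    exact le_mul_of_one_le_left (abs_nonneg _) hm
  have hcol : (fun i => g i 0) ∈ g • intLattice := by
    refine ⟨_, intCast_mem_intLattice (Pi.single 0 1), ?_⟩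
    ext i
    fin_cases i
    exacts [(smul_apply_zero g _).trans (by simp), (smul_apply_one g _).trans (by simp)]
  have hcol0 : (fun i => g i 0) ≠ 0 := fun h => hx0 (funext fun i => by
    rw [hxg, congrFun h i, Pi.zero_apply, mul_zero])
  have h0 : |g 0 0| ≤ 1 := (habs 0).trans hx1
  have h1 : |g 1 0| ≤ 1 := (habs 1).trans (by simpa using hx2)
  have hprod : ε ≤ |g 0 0 * g 1 0| := (hF _ hcol hcol0).resolve_right (by linarith)
  refine exists_smul_intLattice_eq_of_col hε h0 h1 (hprod.trans ?_)
  rw [abs_le']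
  constructor <;> nlinarith [sq_nonneg (g 0 0 - g 1 0), sq_nonneg (g 0 0 + g 1 0),
    sq_nonneg (g 0 0), sq_nonneg (g 1 0)]

end Unimodular

/-! ### Sequences of commensurable lattices -/

section LatticeSeq

/-- Sequences of subgroups of the plane; those of interest consist of lattices. `SL(2, ℝ)` acts on
them termwise. -/
abbrev SubgroupSeq := ℕ → AddSubgroup (Fin 2 → ℝ)

/-- A sequence of distinct unimodular lattices in which the `n`-th and the `(n + j)`-th contain
`p ^ j` times each other. -/
structure IsLatticeSeq (p : ℕ) (Λ : SubgroupSeq) : Prop where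
  isUnimodular (n : ℕ) : IsUnimodular (Λ n)
  down {n j : ℕ} {x : Fin 2 → ℝ} : x ∈ Λ (n + j) → (p : ℝ) ^ j • x ∈ Λ n
  up {n j : ℕ} {x : Fin 2 → ℝ} : x ∈ Λ n → (p : ℝ) ^ j • x ∈ Λ (n + j)
  injective : Function.Injective Λ

variable {p : ℕ} {Λ : SubgroupSeq}

lemma IsLatticeSeq.smul (hΛ : IsLatticeSeq p Λ) (g : SL(2, ℝ)) :
    IsLatticeSeq p (g • Λ) where
  isUnimodular n := (hΛ.isUnimodular n).smul g
  down := by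
    rintro n j _ ⟨x, hx, rfl⟩
    exact ⟨_, hΛ.down hx, smul_comm g ((p : ℝ) ^ j) x⟩
  up := by
    rintro n j _ ⟨x, hx, rfl⟩
    exact ⟨_, hΛ.up hx, smul_comm g ((p : ℝ) ^ j) x⟩
  injective _ _ h := hΛ.injective (smul_left_cancel g h)

lemma natCast_smul_mem (L : AddSubgroup (Fin 2 → ℝ)) (m : ℕ) {x : Fin 2 → ℝ} (hx : x ∈ L) :
    (m : ℝ) • x ∈ L := by
  rw [Nat.cast_smul_eq_nsmul]
  exact L.nsmul_mem hx m

lemma smul_ne_of_basis {g h : SL(2, ℝ)} (hh : h ≠ 1) {C : ℝ} (hg : ∀ i j, |g i j| ≤ C) :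
    ∃ x ∈ g • intLattice, (∀ i, |x i| ≤ C) ∧ h • x ≠ x := by
  have hcol (j : Fin 2) :
      (fun i => g i j) = g • fun i => (((Pi.single j 1 : Fin 2 → ℤ) i : ℤ) : ℝ) := by
    ext i
    fin_cases i <;> fin_cases j <;> simp [smul_apply_zero, smul_apply_one]
  have hmem (j : Fin 2) : (fun i => g i j) ∈ g • intLattice :=
    hcol j ▸ AddSubgroup.smul_mem_pointwise_smul _ _ _ (intCast_mem_intLattice _)
  by_contra! hfix
  have hcolfix (j : Fin 2) : h • (fun i => g i j) = fun i => g i j :=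
    hfix _ (hmem j) fun i => hg i j
  refine hh ((mul_eq_right (a := h) (b := g)).1 ?_)
  ext i j
  rw [mul_apply]
  have := congrFun (hcolfix j) i
  fin_cases i
  exacts [(smul_apply_zero h _).symm.trans this, (smul_apply_one h _).symm.trans this]

lemma NearOne.abs_apply_zero_sub_one_le {h : SL(2, ℝ)} (hh : NearOne 1 h) :
    |h 0 0 - 1| ≤ |h 0 1| + 2 * |h 1 1 - h 0 0| := by
  obtain ⟨h00, -, h10, -⟩ := nearOne_iff.1 hh
  have hpos := (abs_le.1 h00).1
  have h00' : |h 0 0| ≤ 2 := (hh.abs_apply_le 0 0).trans (by norm_num)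
  have factor : (h 0 0 - 1) * (h 0 0 + 1) = h 0 1 * h 1 0 - (h 1 1 - h 0 0) * h 0 0 := by
    linear_combination det_eq_one h
  calc |h 0 0 - 1| ≤ |h 0 0 - 1| * |h 0 0 + 1| :=
        le_mul_of_one_le_right (abs_nonneg _) (by rw [abs_of_nonneg] <;> linarith)
    _ = |h 0 1 * h 1 0 - (h 1 1 - h 0 0) * h 0 0| := by rw [← abs_mul, factor]
    _ ≤ |h 0 1| * |h 1 0| + |h 1 1 - h 0 0| * |h 0 0| := by
        rw [← abs_mul, ← abs_mul]; exact abs_sub _ _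
    _ ≤ |h 0 1| * 1 + |h 1 1 - h 0 0| * 2 := by gcongr
    _ = _ := by ring

lemma NearOne.abs_smul_sub_le {h : SL(2, ℝ)} (hh : NearOne 1 h) {x : Fin 2 → ℝ} {C : ℝ}
    (hx : ∀ i, |x i| ≤ C) :
    |(h • x - x) 0| ≤ C * (|h 0 0 - 1| + |h 0 1|) ∧ |(h • x - x) 1| ≤ 2 * C := by
  obtain ⟨-, -, h10, h11⟩ := nearOne_iff.1 hh
  constructor
  · have : (h • x - x) 0 = (h 0 0 - 1) * x 0 + h 0 1 * x 1 := by
      rw [Pi.sub_apply, smul_apply_zero]; ring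
    rw [this]
    refine (abs_add_le _ _).trans ?_
    rw [abs_mul, abs_mul]
    nlinarith [hx 0, hx 1, abs_nonneg (h 0 0 - 1), abs_nonneg (h 0 1)]
  · have : (h • x - x) 1 = h 1 0 * x 0 + (h 1 1 - 1) * x 1 := by
      rw [Pi.sub_apply, smul_apply_one]; ring
    rw [this]
    refine (abs_add_le _ _).trans ?_
    rw [abs_mul, abs_mul]
    nlinarith [hx 0, hx 1, abs_nonneg (x 0), abs_nonneg (x 1)]

/-- A matrix carrying one lattice of the sequence to a later one is not too close to a lower
unipotent one: `p ^ k • (h • x - x)` is a vector of the first lattice with bounded second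
coordinate, so fatness bounds its first coordinate from below. -/
lemma IsLatticeSeq.le_abs_of_smul_eq (hp : p ≠ 0) (hΛ : IsLatticeSeq p Λ) {n k : ℕ} (hk : 0 < k)
    {ε Θ C : ℝ} (hΘ : 2 * C * (p : ℝ) ^ k < Θ) (hF : IsFat ε Θ (Λ n))
    {g : SL(2, ℝ)} (hg : Λ n = g • intLattice) (hgC : ∀ i j, |g i j| ≤ C)
    {h : SL(2, ℝ)} (hh : NearOne 1 h) (hmap : Λ (n + k) = h • Λ n) :
    ε ≤ 4 * C ^ 2 * (p : ℝ) ^ (2 * k) * (|h 1 1 - h 0 0| + |h 0 1|) := by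
  have h1 : h ≠ 1 := by
    rintro rfl
    exact hk.ne' (Nat.add_eq_left.1 (hΛ.injective (hmap.trans (one_smul _ _))))
  obtain ⟨x, hx, hxC, hne⟩ := smul_ne_of_basis h1 hgC
  rw [← hg] at hx
  have hC : 0 ≤ C := (abs_nonneg _).trans (hxC 0)
  obtain ⟨hx0, hx1⟩ := hh.abs_smul_sub_le hxC
  set P : ℝ := (p : ℝ) ^ k
  have hP : 0 < P := by positivity
  have hmem : P • (h • x - x) ∈ Λ n := by
    rw [smul_sub]
    refine (Λ n).sub_mem (hΛ.down (hmap ▸ AddSubgroup.smul_mem_pointwise_smul _ _ _ hx)) ?_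
    simpa [P] using natCast_smul_mem (Λ n) (p ^ k) hx
  have habs (i : Fin 2) : |(P • (h • x - x)) i| = P * |(h • x - x) i| := by
    rw [Pi.smul_apply, smul_eq_mul, abs_mul, abs_of_pos hP]
  have hprod : ε ≤ |(P • (h • x - x)) 0| * |(P • (h • x - x)) 1| := by
    rw [← abs_mul]
    refine (hF _ hmem (smul_ne_zero hP.ne' (sub_ne_zero.2 hne))).resolve_right ?_
    rw [habs]
    nlinarith
  calc ε ≤ (P * |(h • x - x) 0|) * (P * |(h • x - x) 1|) := by rwa [habs, habs] at hprod
    _ ≤ (P * (C * (2 * (|h 1 1 - h 0 0| + |h 0 1|)))) * (P * (2 * C)) := by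
        gcongr
        refine hx0.trans ?_
        gcongr
        linarith [hh.abs_apply_zero_sub_one_le]
    _ = _ := by rw [two_mul k, pow_add]; ring

end LatticeSeq

section NearReturn

/-- Residues modulo `M ^ 2` of the vectors of `M • Γ`, a lattice between `M ^ 2 • ℤ²` and `ℤ²`
in the intended use. -/
def residues (M : ℕ) (Γ : AddSubgroup (Fin 2 → ℝ)) : Set (Fin 2 → ZMod (M ^ 2)) :=
  {z | ∃ a : Fin 2 → ℤ, (fun i => (a i : ZMod (M ^ 2))) = z ∧
    ∃ y ∈ Γ, (M : ℝ) • y = fun i => (a i : ℝ)}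

lemma le_of_residues_subset {M : ℕ} (hM : M ≠ 0) {Γ Γ' : AddSubgroup (Fin 2 → ℝ)}
    (hΓ : ∀ y ∈ Γ, (M : ℝ) • y ∈ intLattice) (hΓ' : ∀ x ∈ intLattice, (M : ℝ) • x ∈ Γ')
    (h : residues M Γ ⊆ residues M Γ') : Γ ≤ Γ' := by
  intro y hy
  obtain ⟨a, ha⟩ := hΓ y hy
  obtain ⟨a', haa', y', hy', ha'⟩ := h ⟨a, rfl, y, hy, ha.symm⟩
  have hdvd (i : Fin 2) : ∃ u : ℤ, (a i : ℝ) = a' i + (M : ℝ) ^ 2 * u := by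
    obtain ⟨u, hu⟩ := (ZMod.intCast_eq_intCast_iff_dvd_sub _ _ _).1 (congrFun haa' i)
    refine ⟨u, ?_⟩
    have : a i = a' i + (M : ℤ) ^ 2 * u := by push_cast at hu; linarith
    exact_mod_cast this
  choose u hu using hdvd
  have hyy' : y = y' + (M : ℝ) • fun i => (u i : ℝ) := by
    apply smul_right_injective _ (Nat.cast_ne_zero.2 hM : (M : ℝ) ≠ 0)
    simp only [smul_add, ha', smul_smul, ← ha]
    ext i
    simp only [Pi.add_apply, Pi.smul_apply, smul_eq_mul, ← sq, ← hu]
    rfl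
  rw [hyy']
  exact Γ'.add_mem hy' (hΓ' _ (intCast_mem_intLattice u))

lemma IsLatticeSeq.eq_of_residues_eq {p : ℕ} (hp : p ≠ 0) {Λ : SubgroupSeq}
    (hΛ : IsLatticeSeq p Λ) {n m j : ℕ} {g g' : SL(2, ℝ)} (hg : Λ n = g • intLattice)
    (hg' : Λ m = g' • intLattice)
    (h : residues (p ^ j) (g⁻¹ • Λ (n + j)) = residues (p ^ j) (g'⁻¹ • Λ (m + j))) :
    Λ (m + j) = (g' * g⁻¹) • Λ (n + j) := by
  have bounds {n : ℕ} {g : SL(2, ℝ)} (hg : Λ n = g • intLattice) :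
      (∀ y ∈ g⁻¹ • Λ (n + j), ((p ^ j : ℕ) : ℝ) • y ∈ intLattice) ∧
        ∀ x ∈ intLattice, ((p ^ j : ℕ) : ℝ) • x ∈ g⁻¹ • Λ (n + j) := by
    have hg1 : g⁻¹ • Λ n = intLattice := by rw [hg, inv_smul_smul]
    push_cast
    rw [← hg1]
    exact ⟨fun y hy => (hΛ.smul g⁻¹).down hy, fun x hx => (hΛ.smul g⁻¹).up hx⟩
  have hpj : p ^ j ≠ 0 := pow_ne_zero j hp
  have heq : g⁻¹ • Λ (n + j) = g'⁻¹ • Λ (m + j) :=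
    (le_of_residues_subset hpj (bounds hg).1 (bounds hg').2 h.subset).antisymm
      (le_of_residues_subset hpj (bounds hg').1 (bounds hg).2 h.superset)
  rw [← smul_smul, heq, smul_inv_smul]

/-- The bases have boundedly many positions up to a small error, and in each of them there are
boundedly many possibilities for the next `k` lattices. -/
lemma exists_near_return {p : ℕ} (hp : p ≠ 0) {C r : ℝ} (hC : 0 < C) (hr : 0 < r) (k : ℕ) :
    ∃ N : ℕ, ∀ Λ : SubgroupSeq, IsLatticeSeq p Λ → ∀ K : Finset ℕ, N < K.card →
      (∀ n ∈ K, ∃ g : SL(2, ℝ), Λ n = g • intLattice ∧ ∀ i j, |g i j| ≤ C) →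
      ∃ n ∈ K, ∃ m ∈ K, n < m ∧ ∃ h : SL(2, ℝ), NearOne r h ∧
        ∀ j ≤ k, Λ (m + j) = h • Λ (n + j) := by
  classical
  set ρ : ℝ := r / (4 * C)
  have hρ : 0 < ρ := by positivity
  obtain ⟨t, -, htfin, ht⟩ := Metric.finite_approx_of_totallyBounded
    (isCompact_closedBall (0 : Fin 2 → Fin 2 → ℝ) C).totallyBounded ρ hρ
  have := htfin.to_subtype
  have (j : Fin (k + 1)) : NeZero ((p ^ (j : ℕ)) ^ 2) := ⟨by positivity⟩
  let Color := t × ∀ j : Fin (k + 1), Set (Fin 2 → ZMod ((p ^ (j : ℕ)) ^ 2))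
  have : Fintype Color := Fintype.ofFinite _
  refine ⟨Fintype.card Color, fun Λ hΛ K hK hbasis => ?_⟩
  choose! g hg hgC using hbasis
  have hnet (n : K) : ∃ y ∈ t, dist (fun i j => g n i j) y < ρ := by
    have hball : (fun i j => g n i j : Fin 2 → Fin 2 → ℝ) ∈ Metric.closedBall 0 C := by
      rw [mem_closedBall_zero_iff, pi_norm_le_iff_of_nonneg hC.le]
      intro i
      rw [pi_norm_le_iff_of_nonneg hC.le]
      exact hgC n n.2 i
    simpa only [mem_iUnion, Metric.mem_ball, exists_prop] using ht hball
  choose c hct hc using hnet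
  let color (n : K) : Color :=
    (⟨c n, hct n⟩, fun j => residues (p ^ (j : ℕ)) ((g n)⁻¹ • Λ (n + j)))
  obtain ⟨n, m, hnm, hcol⟩ := Fintype.exists_ne_map_eq_of_card_lt color (by simpa using hK)
  wlog hlt : (n : ℕ) < m generalizing n m
  · exact this m n hnm.symm hcol.symm
      (lt_of_le_of_ne (not_lt.1 hlt) fun h => hnm (Subtype.ext h.symm))
  refine ⟨n, n.2, m, m.2, hlt, g m * (g n)⁻¹, ?_, fun j hj => ?_⟩
  · have hcc : c n = c m := congrArg (fun z => (z.1 : Fin 2 → Fin 2 → ℝ)) hcol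
    have hdist : dist (fun i j => g m i j : Fin 2 → Fin 2 → ℝ) (fun i j => g n i j) ≤ 2 * ρ := by
      linarith [dist_triangle_right (fun i j => g m i j : Fin 2 → Fin 2 → ℝ)
        (fun i j => g n i j) (c m), hc m, hcc ▸ hc n]
    refine (nearOne_mul_inv (ρ := 2 * ρ) (hgC n n.2) fun i j => ?_).mono (le_of_eq ?_)
    · exact ((dist_le_pi_dist (fun j => g m i j) (fun j => g n i j) j).trans
        (dist_le_pi_dist (fun i j => g m i j) (fun i j => g n i j) i)).trans hdist
    · simp only [ρ]; field_simp; norm_num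
  · exact hΛ.eq_of_residues_eq hp (hg n n.2) (hg m m.2)
      (congrFun (congrArg Prod.snd hcol) ⟨j, by omega⟩)

end NearReturn

/-! ### Observables on sequences of lattices -/

/-- The sequence without its first `n` terms. -/
def shift (n : ℕ) (Γ : SubgroupSeq) : SubgroupSeq := fun j => Γ (n + j)

/-- The first `k + 1` terms of `Γ'` are the images of those of `Γ` under one matrix within `r` of
the identity. -/
def IsNear (r : ℝ) (k : ℕ) (Γ Γ' : SubgroupSeq) : Prop :=
  ∃ h, NearOne r h ∧ ∀ j ≤ k, Γ' j = h • Γ j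

/-- Bounded functions on sequences, up to a uniformly small error uniformly continuous functions
of finitely many of the terms. -/
def IsObservable (φ : SubgroupSeq → ℝ) : Prop :=
  (∃ M, ∀ Γ, |φ Γ| ≤ M) ∧ ∀ ε > 0, ∃ r > 0, ∃ k, ∀ Γ Γ', IsNear r k Γ Γ' → |φ Γ' - φ Γ| ≤ ε

/-- The values of `φ` along the lower unipotent orbit of `Γ`. -/
def alongShear (φ : SubgroupSeq → ℝ) (Γ : SubgroupSeq) (δ : ℝ) : ℝ := φ (lowerShear δ • Γ)

section Observable

variable {φ ψ : SubgroupSeq → ℝ}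

lemma IsNear.mono {r r' : ℝ} {k k' : ℕ} {Γ Γ' : SubgroupSeq} (h : IsNear r k Γ Γ') (hr : r ≤ r')
    (hk : k' ≤ k) : IsNear r' k' Γ Γ' := by
  obtain ⟨g, hg, hj⟩ := h
  exact ⟨g, hg.mono hr, fun j hj' => hj j (hj'.trans hk)⟩

lemma IsObservable.add (hφ : IsObservable φ) (hψ : IsObservable ψ) :
    IsObservable fun Γ => φ Γ + ψ Γ := by
  obtain ⟨⟨M, hM⟩, h1⟩ := hφ
  obtain ⟨⟨M', hM'⟩, h2⟩ := hψ
  refine ⟨⟨M + M', fun Γ => (abs_add_le _ _).trans (add_le_add (hM Γ) (hM' Γ))⟩, fun ε hε => ?_⟩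
  obtain ⟨r, hr, k, h⟩ := h1 (ε / 2) (by positivity)
  obtain ⟨r', hr', k', h'⟩ := h2 (ε / 2) (by positivity)
  refine ⟨min r r', lt_min hr hr', max k k', fun Γ Γ' hc => ?_⟩
  have e1 := h _ _ (hc.mono (min_le_left _ _) (le_max_left _ _))
  have e2 := h' _ _ (hc.mono (min_le_right _ _) (le_max_right _ _))
  rw [add_sub_add_comm]
  exact (abs_add_le _ _).trans (by linarith)

lemma IsObservable.mul (hφ : IsObservable φ) (hψ : IsObservable ψ) :
    IsObservable fun Γ => φ Γ * ψ Γ := by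
  obtain ⟨⟨M, hM⟩, h1⟩ := hφ
  obtain ⟨⟨M', hM'⟩, h2⟩ := hψ
  have hM0 : 0 ≤ M := (abs_nonneg _).trans (hM fun _ => ⊥)
  have hM0' : 0 ≤ M' := (abs_nonneg _).trans (hM' fun _ => ⊥)
  refine ⟨⟨M * M', fun Γ => by
    rw [abs_mul]; exact mul_le_mul (hM Γ) (hM' Γ) (abs_nonneg _) hM0⟩, fun ε hε => ?_⟩
  obtain ⟨r, hr, k, h⟩ := h1 (ε / (2 * (M' + 1))) (by positivity)
  obtain ⟨r', hr', k', h'⟩ := h2 (ε / (2 * (M + 1))) (by positivity)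
  refine ⟨min r r', lt_min hr hr', max k k', fun Γ Γ' hc => ?_⟩
  have e1 := h _ _ (hc.mono (min_le_left _ _) (le_max_left _ _))
  have e2 := h' _ _ (hc.mono (min_le_right _ _) (le_max_right _ _))
  calc |φ Γ' * ψ Γ' - φ Γ * ψ Γ| = |(φ Γ' - φ Γ) * ψ Γ' + φ Γ * (ψ Γ' - ψ Γ)| := by ring_nf
    _ ≤ |φ Γ' - φ Γ| * |ψ Γ'| + |φ Γ| * |ψ Γ' - ψ Γ| := by
        rw [← abs_mul, ← abs_mul]; exact abs_add_le _ _
    _ ≤ ε / (2 * (M' + 1)) * (M' + 1) + (M + 1) * (ε / (2 * (M + 1))) := by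
        gcongr
        · exact (hM' _).trans (by linarith)
        · exact (hM _).trans (by linarith)
    _ = ε := by field_simp; ring

lemma isObservable_const (a : ℝ) : IsObservable fun _ => a :=
  ⟨⟨|a|, fun _ => le_rfl⟩, fun ε hε => ⟨1, one_pos, 0, fun _ _ _ => by simpa using hε.le⟩⟩

lemma IsObservable.const_mul (hφ : IsObservable φ) (a : ℝ) : IsObservable fun Γ => a * φ Γ :=
  (isObservable_const a).mul hφ

lemma IsObservable.comp_shift (hφ : IsObservable φ) (k : ℕ) :
    IsObservable fun Γ => φ (shift k Γ) := by
  obtain ⟨⟨M, hM⟩, h1⟩ := hφ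
  refine ⟨⟨M, fun Γ => hM _⟩, fun ε hε => ?_⟩
  obtain ⟨r, hr, k', h⟩ := h1 ε hε
  exact ⟨r, hr, k + k', fun Γ Γ' ⟨g, hg, hj⟩ =>
    h _ _ ⟨g, hg, fun j hj' => hj (k + j) (by omega)⟩⟩

lemma IsObservable.lipschitz_comp (hφ : IsObservable φ) {χ : ℝ → ℝ} {L : ℝ} (hL : 0 < L)
    (hχ : ∀ x y, |χ x - χ y| ≤ L * |x - y|) {M : ℝ} (hM : ∀ x, |χ x| ≤ M) :
    IsObservable fun Γ => χ (φ Γ) := by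
  refine ⟨⟨M, fun Γ => hM _⟩, fun ε hε => ?_⟩
  obtain ⟨r, hr, k, h⟩ := hφ.2 (ε / L) (by positivity)
  refine ⟨r, hr, k, fun Γ Γ' hc => (hχ _ _).trans ?_⟩
  have := h _ _ hc
  rw [le_div_iff₀ hL] at this
  linarith

lemma IsObservable.continuous_alongShear (hφ : IsObservable φ) (Γ : SubgroupSeq) :
    Continuous (alongShear φ Γ) := by
  rw [Metric.continuous_iff]
  intro δ ε hε
  obtain ⟨r, hr, k, h⟩ := hφ.2 (ε / 2) (by positivity)
  refine ⟨r, hr, fun δ' hδ' => ?_⟩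
  rw [Real.dist_eq] at hδ' ⊢
  refine (h _ _ ⟨lowerShear (δ' - δ), ?_, fun j _ => ?_⟩).trans_lt (half_lt_self hε)
  · exact nearOne_iff.2 (by simpa [coe_lowerShear, hr.le, abs_sub_comm] using hδ'.le)
  · rw [Pi.smul_apply, Pi.smul_apply, smul_smul, ← lowerShear_add, sub_add_cancel]

end Observable

section LatticeSup

/-- The supremum of `f` over `L`; only used for `f` bounded above. -/
noncomputable def latticeSup (f : (Fin 2 → ℝ) → ℝ) (L : AddSubgroup (Fin 2 → ℝ)) : ℝ :=
  sSup (f '' L)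

variable {f : (Fin 2 → ℝ) → ℝ} {L : AddSubgroup (Fin 2 → ℝ)}

lemma le_latticeSup {M : ℝ} (hM : ∀ x, f x ≤ M) {x : Fin 2 → ℝ} (hx : x ∈ L) :
    f x ≤ latticeSup f L :=
  le_csSup ⟨M, by rintro _ ⟨y, -, rfl⟩; exact hM y⟩ ⟨x, hx, rfl⟩

lemma latticeSup_le {a : ℝ} (h : ∀ x ∈ L, f x ≤ a) : latticeSup f L ≤ a :=
  csSup_le ⟨_, 0, L.zero_mem, rfl⟩ (by rintro _ ⟨y, hy, rfl⟩; exact h y hy)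

lemma latticeSup_nonneg (h0 : ∀ x, 0 ≤ f x) {M : ℝ} (hM : ∀ x, f x ≤ M)
    (L : AddSubgroup (Fin 2 → ℝ)) : 0 ≤ latticeSup f L :=
  (h0 0).trans (le_latticeSup hM L.zero_mem)

lemma abs_latticeSup_smul_sub_le {M : ℝ} (hM : ∀ x, f x ≤ M) {h : SL(2, ℝ)} {ε : ℝ}
    (hε : ∀ x, |f (h • x) - f x| ≤ ε) (L : AddSubgroup (Fin 2 → ℝ)) :
    |latticeSup f (h • L) - latticeSup f L| ≤ ε := by
  rw [abs_sub_le_iff, sub_le_iff_le_add', sub_le_iff_le_add']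
  constructor
  · refine latticeSup_le ?_
    rintro _ ⟨x, hx, rfl⟩
    exact (sub_le_iff_le_add'.1 (abs_le.1 (hε x)).2).trans
      (add_le_add_left (le_latticeSup hM hx) _)
  · refine latticeSup_le fun x hx => ?_
    have := le_latticeSup hM (AddSubgroup.smul_mem_pointwise_smul x h L hx)
    linarith [(abs_le.1 (hε x)).1]

lemma exists_nearOne_abs_smul_sub_le (hf : Continuous f) {M : ℝ} (hM : 0 < M)
    (hsupp : ∀ x, M < ‖x‖ → f x = 0) {ε : ℝ} (hε : 0 < ε) :
    ∃ r > 0, ∀ h, NearOne r h → ∀ x, |f (h • x) - f x| ≤ ε := by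
  have hfc : HasCompactSupport f :=
    .of_support_subset_isCompact (isCompact_closedBall 0 M) fun x hx => by
      rw [mem_closedBall_zero_iff]
      exact not_lt.1 fun h => hx (hsupp x h)
  have huc : UniformContinuous f := hfc.uniformContinuous_of_continuous hf
  obtain ⟨δ, hδ, huc⟩ := Metric.uniformContinuous_iff.1 huc ε hε
  refine ⟨min (1 / 4) (δ / (8 * M)), by positivity, fun h hh x => ?_⟩
  have hd := hh.norm_smul_sub_le x
  set r := min (1 / 4) (δ / (8 * M))
  have hr4 : r ≤ 1 / 4 := min_le_left _ _
  have hrδ : r ≤ δ / (8 * M) := min_le_right _ _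
  by_cases hx : ‖x‖ ≤ 2 * M
  · refine (huc (a := h • x) (b := x) ?_).le
    calc dist (h • x) x ≤ 2 * r * ‖x‖ := by rwa [dist_eq_norm]
      _ ≤ 2 * (δ / (8 * M)) * (2 * M) := by gcongr
      _ = δ / 2 := by field_simp; norm_num
      _ < δ := half_lt_self hδ
  · have hle : 2 * r * ‖x‖ ≤ ‖x‖ / 2 := by nlinarith [norm_nonneg x]
    have hxh : ‖x‖ ≤ ‖h • x - x‖ + ‖h • x‖ := by
      rw [norm_sub_rev]; exact norm_le_norm_sub_add x (h • x)
    rw [hsupp x (by linarith), hsupp (h • x) (by linarith)]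
    simpa using hε.le

lemma isObservable_latticeSup (h0 : ∀ x, 0 ≤ f x) {b : ℝ} (hb : ∀ x, f x ≤ b)
    (hf : Continuous f) {M : ℝ} (hM : 0 < M) (hsupp : ∀ x, M < ‖x‖ → f x = 0) :
    IsObservable fun Γ => latticeSup f (Γ 0) := by
  refine ⟨⟨b, fun Γ => ?_⟩, fun ε hε => ?_⟩
  · rw [abs_of_nonneg (latticeSup_nonneg h0 hb _)]
    exact latticeSup_le fun x _ => hb x
  · obtain ⟨r, hr, h⟩ := exists_nearOne_abs_smul_sub_le hf hM hsupp hε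
    refine ⟨r, hr, 0, fun Γ Γ' ⟨g, hg, hj⟩ => ?_⟩
    simp only [hj 0 le_rfl]
    exact abs_latticeSup_smul_sub_le hb (h g hg) (Γ 0)

end LatticeSup

section Plateau

/-- A function with values in `[0, 1]` equal to `1` on `{ε l ≤ |x₀| ≤ l, |x₁| ≤ K l}` and supported
in `{x₀ ≠ 0, |x₀| ≤ 2 l, |x₁| ≤ 2 K l}`. -/
noncomputable def plateau (ε l K : ℝ) (x : Fin 2 → ℝ) : ℝ :=
  max 0 (min 1 (min (2 * |x 0| / (ε * l) - 1) (min (2 - |x 0| / l) (2 - |x 1| / (K * l)))))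

/-- The observable detecting a vector of the first lattice on the plateau. -/
noncomputable def detector (ε l K : ℝ) (Γ : SubgroupSeq) : ℝ := latticeSup (plateau ε l K) (Γ 0)

variable {ε l K : ℝ} {L : AddSubgroup (Fin 2 → ℝ)}

lemma plateau_nonneg (x : Fin 2 → ℝ) : 0 ≤ plateau ε l K x := le_max_left _ _

lemma plateau_le_one (x : Fin 2 → ℝ) : plateau ε l K x ≤ 1 :=
  max_le zero_le_one (min_le_left _ _)

lemma continuous_plateau : Continuous (plateau ε l K) := by
  unfold plateau; fun_prop

lemma of_plateau_pos (hl : 0 < l) (hK : 0 < K) {x : Fin 2 → ℝ} (h : 0 < plateau ε l K x) :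
    x 0 ≠ 0 ∧ |x 0| < 2 * l ∧ |x 1| < 2 * (K * l) := by
  simp only [plateau, lt_max_iff, lt_self_iff_false, false_or, lt_min_iff] at h
  obtain ⟨-, h1, h2, h3⟩ := h
  refine ⟨fun h0 => ?_, (div_lt_iff₀ hl).1 (by linarith), (div_lt_iff₀ (by positivity)).1 ?_⟩
  · norm_num [h0] at h1
  · linarith

lemma plateau_eq_one (hε : 0 < ε) (hl : 0 < l) (hK : 0 < K) {x : Fin 2 → ℝ}
    (h1 : ε * l ≤ |x 0|) (h2 : |x 0| ≤ l) (h3 : |x 1| ≤ K * l) : plateau ε l K x = 1 := by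
  have e1 : 1 ≤ |x 0| / (ε * l) := by rwa [one_le_div (by positivity)]
  have e2 : |x 0| / l ≤ 1 := by rwa [div_le_one hl]
  have e3 : |x 1| / (K * l) ≤ 1 := by rwa [div_le_one (by positivity)]
  rw [plateau, min_eq_left, max_eq_right zero_le_one]
  rw [mul_div_assoc]
  refine le_min ?_ (le_min ?_ ?_) <;> linarith

lemma isObservable_detector (hl : 0 < l) (hK : 0 < K) : IsObservable (detector ε l K) := by
  have hKl : 0 < K * l := by positivity
  refine isObservable_latticeSup plateau_nonneg plateau_le_one continuous_plateau
    (M := 2 * l + 2 * (K * l)) (by positivity) fun x hx => ?_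
  contrapose! hx
  obtain ⟨-, h1, h2⟩ := of_plateau_pos hl hK ((plateau_nonneg x).lt_of_ne' hx)
  rw [pi_norm_le_iff_of_nonneg (by positivity), Fin.forall_fin_two]
  constructor <;> rw [Real.norm_eq_abs] <;> linarith

lemma detector_nonneg (Γ : SubgroupSeq) : 0 ≤ detector ε l K Γ :=
  latticeSup_nonneg plateau_nonneg plateau_le_one _

lemma detector_le_one (Γ : SubgroupSeq) : detector ε l K Γ ≤ 1 :=
  latticeSup_le fun x _ => plateau_le_one x

lemma alongShear_detector_eq_zero (hl : 0 < l) (hK : 0 < K)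
    (hlε : 2 * l * (2 * (K * l) + 2 * l) ≤ ε) {Γ : SubgroupSeq}
    (hF : IsFat ε (2 * (K * l) + 2 * l) (Γ 0)) {δ : ℝ} (hδ : δ ∈ Icc (-1 : ℝ) 0) :
    alongShear (detector ε l K) Γ δ = 0 := by
  refine le_antisymm (latticeSup_le ?_) (detector_nonneg _)
  rintro _ ⟨x, hx, rfl⟩
  by_contra! hcon
  obtain ⟨h0, h1, h2⟩ := of_plateau_pos hl hK hcon
  simp only [DistribSMul.toAddMonoidHom_apply, DistribMulAction.toAddMonoidEnd_apply,
    lowerShear_smul_zero, lowerShear_smul_one] at h0 h1 h2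
  have hδ1 : |δ| ≤ 1 := abs_le.2 ⟨hδ.1, hδ.2.trans zero_le_one⟩
  have hx1 : |x 1| < 2 * (K * l) + 2 * l := by
    calc |x 1| = |(x 1 - δ * x 0) + δ * x 0| := by ring_nf
      _ ≤ |x 1 - δ * x 0| + |δ| * |x 0| := by rw [← abs_mul]; exact abs_add_le _ _
      _ < _ := by nlinarith [abs_nonneg (x 0), abs_nonneg δ]
  rcases hF x hx (fun h => h0 (congrFun h 0)) with h | h
  · rw [abs_mul] at h
    exact (mul_lt_mul'' h1 hx1 (abs_nonneg _) (abs_nonneg _)).not_ge (hlε.trans h)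
  · exact hx1.not_ge h

/-- Minkowski's theorem provides a lattice vector whose first coordinate is of the order of `l`;
the shears by multiples of `κ` move its second coordinate in steps of size at most `K l`. -/
lemma exists_one_le_alongShear_detector {κ₀ J Θ : ℝ} (hε : 0 < ε) (hl : 0 < l) (hK : 0 < K)
    (hκ₀ : 0 < κ₀) (hJ : (1 / l + l) / (κ₀ * (ε * l)) + 1 ≤ J) (hΘ : 1 / l < Θ)
    {Γ : SubgroupSeq} (hΓ : IsUnimodular (Γ 0)) (hF : IsFat ε Θ (Γ 0)) {δ κ : ℝ}
    (hδ : δ ∈ Icc (-1 : ℝ) 0) (hκ : κ₀ ≤ |κ|) (hκK : |κ| ≤ K) :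
    ∃ i : ℤ, |(i : ℝ)| ≤ J ∧ 1 ≤ alongShear (detector ε l K) Γ (δ - i * κ) := by
  obtain ⟨x, hx, hne, hx0, hx1⟩ := hΓ.exists_mem_box hl
  have hlow : ε * l ≤ |x 0| := by
    rcases hF x hx hne with h | h
    · have : |x 0| * |x 1| ≤ |x 0| * (1 / l) := by gcongr
      rw [abs_mul] at h
      rw [← le_div_iff₀ hl, div_eq_mul_one_div]
      exact h.trans this
    · exact absurd (h.trans hx1) hΘ.not_ge
  set z := x 1 - δ * x 0
  set w := κ * x 0
  have hw : κ₀ * (ε * l) ≤ |w| := by rw [abs_mul]; gcongr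
  have hwne : w ≠ 0 := abs_pos.1 (lt_of_lt_of_le (by positivity) hw)
  have hround := abs_sub_round (-(z / w))
  set i := round (-(z / w))
  refine ⟨i, le_trans ?_ hJ, ?_⟩
  · have hz : |z| ≤ 1 / l + l := by
      have hδ1 : |δ| ≤ 1 := abs_le.2 ⟨hδ.1, hδ.2.trans zero_le_one⟩
      refine (abs_sub _ _).trans ?_
      rw [abs_mul]
      nlinarith [abs_nonneg (x 0), abs_nonneg δ]
    have hzw : |z / w| ≤ (1 / l + l) / (κ₀ * (ε * l)) := by
      rw [abs_div]; gcongr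
    have := abs_sub_abs_le_abs_sub (i : ℝ) (-(z / w))
    rw [abs_sub_comm, abs_neg] at this
    linarith
  · have hy : lowerShear (δ - i * κ) • x ∈ lowerShear (δ - i * κ) • Γ 0 :=
      AddSubgroup.smul_mem_pointwise_smul _ _ _ hx
    refine le_trans (le_of_eq (plateau_eq_one hε hl hK ?_ ?_ ?_).symm)
      (le_latticeSup plateau_le_one hy)
    · rwa [lowerShear_smul_zero]
    · rwa [lowerShear_smul_zero]
    · have hmul : x 1 - (δ - i * κ) * x 0 = -(w * (-(z / w) - i)) := by
        rw [mul_sub, mul_neg, mul_div_cancel₀ _ hwne]; ring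
      rw [lowerShear_smul_one, hmul, abs_neg, abs_mul, abs_mul κ]
      calc |κ| * |x 0| * |-(z / w) - i| ≤ K * l * (1 / 2) := by gcongr
        _ ≤ K * l := by nlinarith [mul_pos hK hl]

end Plateau

/-! ### Shears and almost invariant functions -/

lemma NearOne.conj_lowerShear {h : SL(2, ℝ)} {r R δ : ℝ} (hh : NearOne r h) (hδ : |δ| ≤ R) :
    NearOne (r * (1 + R) ^ 2) (lowerShear δ * h * lowerShear (-δ)) := by
  obtain ⟨h00, h01, h10, h11⟩ := nearOne_iff.1 hh
  have hr : 0 ≤ r := (abs_nonneg _).trans h00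
  have hR : 0 ≤ R := (abs_nonneg _).trans hδ
  have hδ01 : |δ * h 0 1| ≤ R * r := by rw [abs_mul]; gcongr
  have h1r : r * (1 + R) ≤ r * (1 + R) ^ 2 := by nlinarith [mul_nonneg hr hR]
  refine nearOne_iff.2 ⟨?_, ?_, ?_, ?_⟩
  · have e : (lowerShear δ * h * lowerShear (-δ)) 0 0 - 1 = (h 0 0 - 1) + δ * h 0 1 := by
      simp [mul_apply, coe_lowerShear]; ring
    rw [e]
    exact (abs_add_le _ _).trans (by linarith)
  · have e : (lowerShear δ * h * lowerShear (-δ)) 0 1 = h 0 1 := by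
      simp [mul_apply, coe_lowerShear]
    rw [e]
    exact h01.trans (by nlinarith)
  · have e : (lowerShear δ * h * lowerShear (-δ)) 1 0 =
        h 1 0 + δ * ((h 1 1 - 1) - (h 0 0 - 1) - δ * h 0 1) := by
      simp [mul_apply, coe_lowerShear]; ring
    have hd : |(h 1 1 - 1) - (h 0 0 - 1) - δ * h 0 1| ≤ r + r + R * r :=
      (abs_sub _ _).trans (add_le_add ((abs_sub _ _).trans (add_le_add h11 h00)) hδ01)
    rw [e]
    refine (abs_add_le _ _).trans ?_
    rw [abs_mul]
    calc |h 1 0| + |δ| * |(h 1 1 - 1) - (h 0 0 - 1) - δ * h 0 1|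
        ≤ r + R * (r + r + R * r) := by gcongr
      _ = r * (1 + R) ^ 2 := by ring
  · have e : (lowerShear δ * h * lowerShear (-δ)) 1 1 - 1 = (h 1 1 - 1) - δ * h 0 1 := by
      simp [mul_apply, coe_lowerShear]; ring
    rw [e]
    exact (abs_sub _ _).trans (by linarith)

lemma nearOne_mul_lowerShear {h : SL(2, ℝ)} {r K : ℝ} (h00 : |h 0 0 - 1| ≤ r) (h01 : |h 0 1| ≤ r)
    (h11 : |h 1 1 - 1| ≤ r) (hK : |h 1 0| ≤ K) :
    NearOne (r * (1 + K)) (h * lowerShear (h 1 0)) := by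
  have hr : 0 ≤ r := (abs_nonneg _).trans h00
  have hK0 : 0 ≤ K := (abs_nonneg _).trans hK
  refine nearOne_iff.2 ⟨?_, ?_, ?_, ?_⟩
  · have e : (h * lowerShear (h 1 0)) 0 0 - 1 = (h 0 0 - 1) - h 0 1 * h 1 0 := by
      simp [mul_apply, coe_lowerShear]; ring
    rw [e]
    refine (abs_sub _ _).trans ?_
    rw [abs_mul, mul_one_add]
    gcongr
  · simp only [mul_apply, coe_lowerShear]
    simpa using h01.trans (by nlinarith)
  · have e : (h * lowerShear (h 1 0)) 1 0 = -((h 1 1 - 1) * h 1 0) := by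
      simp [mul_apply, coe_lowerShear]; ring
    rw [e, abs_neg, abs_mul]
    calc |h 1 1 - 1| * |h 1 0| ≤ r * K := by gcongr
      _ ≤ r * (1 + K) := by gcongr; linarith
  · simp only [mul_apply, coe_lowerShear]
    simpa using h11.trans (by nlinarith)

lemma exists_forall_sub_mul_notMem {X Y : Set ℝ} {J : ℕ}
    (h : (2 * J + 1) * volume X + volume Y < 1) (κ : ℝ) :
    ∃ δ ∈ Icc (-1 : ℝ) 0, δ ∉ Y ∧ ∀ i : ℤ, |i| ≤ J → δ - i * κ ∉ X := by
  by_contra! hcon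
  set I := Finset.Icc (-(J : ℤ)) J
  have hsub : Icc (-1 : ℝ) 0 ⊆ (⋃ i ∈ I, (fun δ : ℝ => δ + -(i * κ)) ⁻¹' X) ∪ Y := by
    intro δ hδ
    by_cases hδY : δ ∈ Y
    · exact Or.inr hδY
    · obtain ⟨i, hi, hiX⟩ := hcon δ hδ hδY
      refine Or.inl (mem_iUnion₂.2 ⟨i, Finset.mem_Icc.2 (abs_le.1 hi), ?_⟩)
      simpa [← sub_eq_add_neg] using hiX
  have hcard : (I.card : ENNReal) = 2 * J + 1 := by
    rw [Int.card_Icc, show ((J : ℤ) + 1 - -(J : ℤ)).toNat = 2 * J + 1 by omega]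
    push_cast; ring
  refine h.not_ge ?_
  calc (1 : ENNReal) = volume (Icc (-1 : ℝ) 0) := by rw [Real.volume_Icc]; norm_num
    _ ≤ ∑ i ∈ I, volume ((fun δ : ℝ => δ + -(i * κ)) ⁻¹' X) + volume Y :=
        (measure_mono hsub).trans ((measure_union_le _ _).trans
          (add_le_add_left (measure_biUnion_finset_le _ _) _))
    _ = (2 * J + 1) * volume X + volume Y := by
        simp only [measure_preimage_add_right, Finset.sum_const, nsmul_eq_mul, hcard]

lemma abs_sub_zero_le_of_abs_succ_sub_le {F : ℤ → ℝ} {e : ℝ} {J : ℤ}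
    (h : ∀ i, |i| ≤ J → |F (i + 1) - F i| ≤ e) {i : ℤ} (hi : |i| ≤ J) :
    |F i - F 0| ≤ |(i : ℝ)| * e := by
  induction i with
  | zero => simp
  | succ i ih =>
    have h1 := ih (by rw [abs_le] at hi ⊢; omega)
    have h2 := h i (by rw [abs_le] at hi ⊢; omega)
    have h3 := abs_sub_le (F (i + 1)) (F i) (F 0)
    rw [show |((i + 1 : ℤ) : ℝ)| = |((i : ℤ) : ℝ)| + 1 by
      push_cast; rw [Nat.abs_cast, abs_of_nonneg (by positivity)]]
    linarith
  | pred i ih =>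
    have h1 := ih (by rw [abs_le] at hi ⊢; omega)
    have h2 := h (-i - 1) hi
    rw [sub_add_cancel, abs_sub_comm] at h2
    have h3 := abs_sub_le (F (-i - 1)) (F (-i)) (F 0)
    rw [show |((-i - 1 : ℤ) : ℝ)| = |((-i : ℤ) : ℝ)| + 1 by
      rw [show (-i - 1 : ℤ) = -(i + 1) by ring]
      push_cast; rw [abs_neg, abs_neg, Nat.abs_cast, abs_of_nonneg (by positivity)]]
    linarith

/-- If `g` were the translate of `f` by `κ`, then, both being close to `e`, the function `f` would
be almost `κ`-periodic along an orbit avoiding the exceptional set `X`: it could not decrease from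
a value larger than `c` to a value smaller than `c / 2`. -/
lemma exists_lt_abs_sub_of_translate {f g e β : ℝ → ℝ} {X Y : Set ℝ} {R κ K c c₁ : ℝ} {J : ℕ}
    (hXY : (2 * J + 1) * volume X + volume Y < 1) (hc : 0 < c) (hR : 1 + J * K ≤ R)
    (hκ : |κ| ≤ K) (hJc : J * (3 * c₁) ≤ c / 2)
    (hX : ∀ δ, |δ| ≤ R → δ ∉ X →
      |g δ - e δ| ≤ c₁ ∧ |f δ - e δ| ≤ c₁ ∧ f δ ^ 2 * β δ < c ^ 2 / 4)
    (hY : ∀ δ ∈ Icc (-1 : ℝ) 0, δ ∉ Y → c < |f δ|)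
    (hβ : ∀ δ ∈ Icc (-1 : ℝ) 0, ∃ i : ℤ, |(i : ℝ)| ≤ J ∧ 1 ≤ β (δ - i * κ)) :
    ∃ δ, |δ| ≤ R ∧ c₁ < |g δ - f (δ - κ)| := by
  by_contra! hshift
  obtain ⟨δ, hδ, hδY, hgood⟩ := exists_forall_sub_mul_notMem hXY κ
  have hrange : ∀ i : ℤ, |i| ≤ J → |δ - i * κ| ≤ R := by
    intro i hi
    have hi' : |(i : ℝ)| ≤ J := by exact_mod_cast hi
    have hδ1 : |δ| ≤ 1 := abs_le.2 ⟨hδ.1, hδ.2.trans zero_le_one⟩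
    refine (abs_sub _ _).trans (le_trans ?_ hR)
    rw [abs_mul]
    gcongr
  have hstep : ∀ i : ℤ, |i| ≤ J → |f (δ - (i + 1 : ℤ) * κ) - f (δ - i * κ)| ≤ 3 * c₁ := by
    intro i hi
    obtain ⟨a1, a2, -⟩ := hX _ (hrange i hi) (hgood i hi)
    have a3 := hshift _ (hrange i hi)
    rw [show δ - (i + 1 : ℤ) * κ = δ - i * κ - κ by push_cast; ring]
    rw [abs_le] at a1 a2 a3 ⊢
    constructor <;> linarith
  obtain ⟨i, hi, hiβ⟩ := hβ δ hδ
  have hiJ : |i| ≤ J := by exact_mod_cast hi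
  have hfar := abs_sub_zero_le_of_abs_succ_sub_le (F := fun i => f (δ - i * κ)) hstep hiJ
  simp only [Int.cast_zero, zero_mul, sub_zero] at hfar
  have hc₁ : 0 ≤ 3 * c₁ := (abs_nonneg _).trans (hstep 0 (by simp))
  have hlow : c / 2 ≤ |f (δ - i * κ)| := by
    have h1 := abs_sub_abs_le_abs_sub (f δ) (f (δ - i * κ))
    rw [abs_sub_comm] at h1
    have h2 : |(i : ℝ)| * (3 * c₁) ≤ J * (3 * c₁) := by gcongr
    linarith [hY δ hδ hδY]
  have hsq : (c / 2) ^ 2 ≤ f (δ - i * κ) ^ 2 := by rw [← sq_abs (f _)]; gcongr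
  nlinarith [(hX _ (hrange i hiJ) (hgood i hiJ)).2.2, sq_nonneg (f (δ - i * κ))]

/-! ### The variational problem -/

/-- The functional `∫_{-R}^R (1_{[-1,0]} - f)² - 1`. -/
noncomputable def quad (R : ℝ) (f : ℝ → ℝ) : ℝ :=
  (∫ x in (-R)..R, f x ^ 2) - 2 * ∫ x in (-1 : ℝ)..0, f x

/-- A Lipschitz cutoff equal to `1` on `[-c, c]` and to `0` outside `[-2c, 2c]`. -/
noncomputable def cutoff (c x : ℝ) : ℝ := max 0 (min 1 (2 - |x| / c))

section Cutoff

variable {c : ℝ}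

lemma cutoff_nonneg (x : ℝ) : 0 ≤ cutoff c x := le_max_left _ _

lemma cutoff_le_one (x : ℝ) : cutoff c x ≤ 1 := max_le zero_le_one (min_le_left _ _)

lemma cutoff_eq_one (hc : 0 < c) {x : ℝ} (hx : |x| ≤ c) : cutoff c x = 1 := by
  have : |x| / c ≤ 1 := by rwa [div_le_one hc]
  rw [cutoff, min_eq_left (by linarith), max_eq_right zero_le_one]

lemma mul_cutoff_le (hc : 0 < c) (x : ℝ) : x * cutoff c x ≤ 2 * c := by
  rcases le_or_gt |x| (2 * c) with h | h
  · calc x * cutoff c x ≤ |x| * 1 := by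
          gcongr
          · exact cutoff_nonneg x
          · exact le_abs_self x
          · exact cutoff_le_one x
      _ ≤ 2 * c := by rwa [mul_one]
  · have h2 : 2 - |x| / c ≤ 0 := by rw [sub_nonpos, le_div_iff₀ hc]; exact h.le
    rw [cutoff, max_eq_left ((min_le_right _ _).trans h2)]
    linarith

lemma abs_cutoff_sub_le (hc : 0 < c) (x y : ℝ) :
    |cutoff c x - cutoff c y| ≤ (1 / c) * |x - y| := by
  have hn : 0 ≤ (1 / c) * |x - y| := by positivity
  have hlin : |(2 - |x| / c) - (2 - |y| / c)| ≤ (1 / c) * |x - y| := by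
    rw [show (2 - |x| / c) - (2 - |y| / c) = (1 / c) * (|y| - |x|) by ring, abs_mul,
      abs_of_pos (one_div_pos.2 hc), abs_sub_comm x y]
    exact mul_le_mul_of_nonneg_left (abs_abs_sub_abs_le y x) (by positivity)
  refine (abs_max_sub_max_le_max _ _ _ _).trans (max_le (by simpa using hn) ?_)
  exact (abs_min_sub_min_le_max _ _ _ _).trans (max_le (by simpa using hn) hlin)

lemma continuous_cutoff : Continuous (cutoff c) := by unfold cutoff; fun_prop

end Cutoff

section Quad

variable {R : ℝ} {f g : ℝ → ℝ}

lemma quad_add (hf : Continuous f) (hg : Continuous g) (R : ℝ) :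
    quad R (fun x => f x + g x) = quad R f +
      2 * ((∫ x in (-R)..R, f x * g x) - ∫ x in (-1 : ℝ)..0, g x) +
      ∫ x in (-R)..R, g x ^ 2 := by
  have h1 : (∫ x in (-R)..R, (f x + g x) ^ 2) = (∫ x in (-R)..R, f x ^ 2) +
      2 * (∫ x in (-R)..R, f x * g x) + ∫ x in (-R)..R, g x ^ 2 := by
    rw [← intervalIntegral.integral_const_mul, ← intervalIntegral.integral_add,
      ← intervalIntegral.integral_add]
    · congr 1; ext x; ring
    all_goals apply Continuous.intervalIntegrable; fun_prop
  have h2 : (∫ x in (-1 : ℝ)..0, (f x + g x)) = (∫ x in (-1 : ℝ)..0, f x) +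
      ∫ x in (-1 : ℝ)..0, g x := by
    rw [← intervalIntegral.integral_add]
    all_goals apply Continuous.intervalIntegrable; fun_prop
  unfold quad
  rw [h1, h2]; ring

lemma quad_midpoint (hf : Continuous f) (hg : Continuous g) (R : ℝ) :
    (∫ x in (-R)..R, (g x - f x) ^ 2) =
      2 * quad R f + 2 * quad R g - 4 * quad R (fun x => f x + (1 / 2) * (g x - f x)) := by
  have e1 := quad_add (g := fun x => (1 / 2) * (g x - f x)) hf (by fun_prop) R
  have e2 := quad_add (g := fun x => (g x - f x)) hf (by fun_prop) R
  have h1 : (∫ x in (-R)..R, f x * ((1 / 2) * (g x - f x))) =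
      (1 / 2) * ∫ x in (-R)..R, f x * (g x - f x) := by
    simp only [mul_left_comm _ (1 / 2 : ℝ), intervalIntegral.integral_const_mul]
  simp only [add_sub_cancel] at e2
  simp only [h1, mul_pow, intervalIntegral.integral_const_mul] at e1
  rw [e1, e2]; ring

lemma half_integral_sq_le_quad (hR : 1 ≤ R) (hf : Continuous f) :
    (1 / 2) * (∫ x in (-R)..R, f x ^ 2) - 2 ≤ quad R f := by
  have h1 : (∫ x in (-1 : ℝ)..0, f x ^ 2) ≤ ∫ x in (-R)..R, f x ^ 2 :=
    intervalIntegral.integral_mono_interval (by linarith) (by norm_num) (by linarith)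
      (Eventually.of_forall fun x => sq_nonneg _) ((hf.pow 2).intervalIntegrable _ _)
  have h2 : 2 * (∫ x in (-1 : ℝ)..0, f x) ≤ ∫ x in (-1 : ℝ)..0, ((1 / 2) * f x ^ 2 + 2) := by
    rw [← intervalIntegral.integral_const_mul]
    apply intervalIntegral.integral_mono_on (by norm_num)
    · exact Continuous.intervalIntegrable (by fun_prop) _ _
    · exact Continuous.intervalIntegrable (by fun_prop) _ _
    · intro x _; nlinarith [sq_nonneg (f x - 2)]
  rw [intervalIntegral.integral_add (Continuous.intervalIntegrable (by fun_prop) _ _) (by simp),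
    intervalIntegral.integral_const_mul, intervalIntegral.integral_const, smul_eq_mul] at h2
  unfold quad
  linarith

lemma abs_quad_le {M : ℝ} (hR : 0 ≤ R) (hf : ∀ x, |f x| ≤ M) :
    |quad R f| ≤ M ^ 2 * (2 * R) + 2 * M := by
  have h1 : |∫ x in (-R)..R, f x ^ 2| ≤ M ^ 2 * |R - -R| := by
    rw [← Real.norm_eq_abs]
    refine intervalIntegral.norm_integral_le_of_norm_le_const fun x _ => ?_
    rw [Real.norm_eq_abs, abs_pow]
    exact pow_le_pow_left₀ (abs_nonneg _) (hf x) 2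
  have h2 : |∫ x in (-1 : ℝ)..0, f x| ≤ M * |0 - (-1 : ℝ)| := by
    rw [← Real.norm_eq_abs]
    exact intervalIntegral.norm_integral_le_of_norm_le_const fun x _ => hf x
  rw [sub_neg_eq_add, ← two_mul, abs_of_nonneg (by positivity : 0 ≤ 2 * R)] at h1
  norm_num at h2
  refine (abs_sub _ _).trans ?_
  rw [abs_mul, abs_two]
  linarith

lemma quad_add_neg_mul_le (hR : 0 ≤ R) (hf : Continuous f) (hg : Continuous g) (hg0 : ∀ x, 0 ≤ g x)
    (hg1 : ∀ x, g x ≤ 1) (hgz : ∀ x ∈ Icc (-1 : ℝ) 0, g x = 0) (θ : ℝ) :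
    quad R (fun x => f x + -θ * (g x * f x)) ≤ quad R f - 2 * θ * (∫ x in (-R)..R, f x ^ 2 * g x) +
      θ ^ 2 * ∫ x in (-R)..R, f x ^ 2 := by
  have h1 := quad_add hf (g := fun x => -θ * (g x * f x)) (by fun_prop) R
  have h2 : (∫ x in (-1 : ℝ)..0, -θ * (g x * f x)) = 0 := by
    rw [intervalIntegral.integral_congr (g := fun _ => 0), intervalIntegral.integral_zero]
    intro x hx
    rw [uIcc_of_le (by norm_num)] at hx
    simp [hgz x hx]
  have h3 : (∫ x in (-R)..R, f x * (-θ * (g x * f x))) = -θ * ∫ x in (-R)..R, f x ^ 2 * g x := by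
    rw [← intervalIntegral.integral_const_mul]
    congr 1; ext x; ring
  have h4 : (∫ x in (-R)..R, (-θ * (g x * f x)) ^ 2) ≤ θ ^ 2 * ∫ x in (-R)..R, f x ^ 2 := by
    rw [← intervalIntegral.integral_const_mul]
    refine intervalIntegral.integral_mono_on (by linarith)
      (Continuous.intervalIntegrable (by fun_prop) _ _)
      (Continuous.intervalIntegrable (by fun_prop) _ _) fun x _ => ?_
    rw [mul_pow, neg_sq, mul_pow]
    gcongr
    exact mul_le_of_le_one_left (sq_nonneg _) (pow_le_one₀ (hg0 x) (hg1 x))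
  rw [h2, h3] at h1
  rw [h1]
  linarith

lemma quad_add_mul_cutoff_le {c θ : ℝ} (hR : 0 ≤ R) (hc : 0 < c) (hθ : 0 ≤ θ) (hf : Continuous f) :
    quad R (fun x => f x + θ * cutoff c (f x)) ≤ quad R f +
      2 * θ * (4 * c * R - ∫ x in (-1 : ℝ)..0, cutoff c (f x)) + θ ^ 2 * (2 * R) := by
  have hcc : Continuous fun x => cutoff c (f x) := continuous_cutoff.comp hf
  have h1 := quad_add hf (hcc.const_mul θ) R
  have h2 : (∫ x in (-R)..R, f x * (θ * cutoff c (f x))) ≤ ∫ _x in (-R)..R, θ * (2 * c) := by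
    refine intervalIntegral.integral_mono_on (by linarith)
      (Continuous.intervalIntegrable (by fun_prop) _ _) (by simp) fun x _ => ?_
    rw [mul_left_comm]
    exact mul_le_mul_of_nonneg_left (mul_cutoff_le hc _) hθ
  have h3 : (∫ x in (-R)..R, (θ * cutoff c (f x)) ^ 2) ≤ ∫ _x in (-R)..R, θ ^ 2 := by
    refine intervalIntegral.integral_mono_on (by linarith)
      (Continuous.intervalIntegrable (by fun_prop) _ _) (by simp) fun x _ => ?_
    rw [mul_pow]
    exact mul_le_of_le_one_right (sq_nonneg _) (pow_le_one₀ (cutoff_nonneg _) (cutoff_le_one _))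
  rw [intervalIntegral.integral_const, smul_eq_mul] at h2 h3
  rw [intervalIntegral.integral_const_mul] at h1
  linarith

end Quad

section MeanQuad

variable {ι : Type*} {P : Finset ι} {Γ : ι → SubgroupSeq} {R θ c : ℝ} {φ ψ β : SubgroupSeq → ℝ}

/-- The average of `quad` over a finite sample of sequences of lattices. -/
noncomputable def meanQuad (R : ℝ) (P : Finset ι) (Γ : ι → SubgroupSeq) (φ : SubgroupSeq → ℝ) : ℝ :=
  𝔼 i ∈ P, quad R (alongShear φ (Γ i))

lemma expect_integral_sq_le (hP : P.Nonempty) (hR : 1 ≤ R) (hφ : IsObservable φ) :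
    𝔼 i ∈ P, ∫ x in (-R)..R, alongShear φ (Γ i) x ^ 2 ≤ 2 * meanQuad R P Γ φ + 4 := by
  have h := Finset.expect_le_expect fun i (_ : i ∈ P) =>
    half_integral_sq_le_quad hR (hφ.continuous_alongShear (Γ i))
  rw [Finset.expect_sub_distrib, ← Finset.mul_expect, Finset.expect_const hP] at h
  unfold meanQuad
  linarith

lemma expect_integral_sub_sq (hφ : IsObservable φ) (hψ : IsObservable ψ) :
    𝔼 i ∈ P, ∫ x in (-R)..R, (alongShear ψ (Γ i) x - alongShear φ (Γ i) x) ^ 2 =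
      2 * meanQuad R P Γ φ + 2 * meanQuad R P Γ ψ -
        4 * meanQuad R P Γ (fun Δ => φ Δ + 1 / 2 * (ψ Δ - φ Δ)) := by
  simp only [meanQuad, Finset.mul_expect, ← Finset.expect_add_distrib, ← Finset.expect_sub_distrib]
  exact Finset.expect_congr rfl fun i _ =>
    quad_midpoint (hφ.continuous_alongShear (Γ i)) (hψ.continuous_alongShear (Γ i)) R

lemma meanQuad_add_neg_mul_le (hR : 0 ≤ R) (hφ : IsObservable φ) (hβ : IsObservable β)
    (hβ0 : ∀ Δ, 0 ≤ β Δ) (hβ1 : ∀ Δ, β Δ ≤ 1)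
    (hβz : ∀ i ∈ P, ∀ δ ∈ Icc (-1 : ℝ) 0, alongShear β (Γ i) δ = 0) (θ : ℝ) :
    meanQuad R P Γ (fun Δ => φ Δ + -θ * (β Δ * φ Δ)) ≤ meanQuad R P Γ φ -
      2 * θ * (𝔼 i ∈ P, ∫ x in (-R)..R, alongShear φ (Γ i) x ^ 2 * alongShear β (Γ i) x) +
      θ ^ 2 * 𝔼 i ∈ P, ∫ x in (-R)..R, alongShear φ (Γ i) x ^ 2 := by
  simp only [meanQuad, Finset.mul_expect, ← Finset.expect_add_distrib, ← Finset.expect_sub_distrib]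
  exact Finset.expect_le_expect fun i hi =>
    quad_add_neg_mul_le hR (hφ.continuous_alongShear _) (hβ.continuous_alongShear _)
      (fun _ => hβ0 _) (fun _ => hβ1 _) (hβz i hi) θ

lemma meanQuad_add_mul_cutoff_le (hP : P.Nonempty) (hR : 0 ≤ R) (hc : 0 < c) (hθ : 0 ≤ θ)
    (hφ : IsObservable φ) :
    meanQuad R P Γ (fun Δ => φ Δ + θ * cutoff c (φ Δ)) ≤ meanQuad R P Γ φ +
      2 * θ * (4 * c * R - 𝔼 i ∈ P, ∫ x in (-1 : ℝ)..0, cutoff c (alongShear φ (Γ i) x)) +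
      θ ^ 2 * (2 * R) := by
  rw [← Finset.expect_const hP (4 * c * R), ← Finset.expect_const hP (θ ^ 2 * (2 * R))]
  simp only [meanQuad, Finset.mul_expect, ← Finset.expect_add_distrib, ← Finset.expect_sub_distrib]
  exact Finset.expect_le_expect fun i _ =>
    quad_add_mul_cutoff_le hR hc hθ (hφ.continuous_alongShear _)

lemma expect_integral_sub_sq_le {d η : ℝ} (hφ : IsObservable φ) (hψ : IsObservable ψ)
    (hφd : meanQuad R P Γ φ ≤ d + η) (hψd : meanQuad R P Γ ψ ≤ d + 2 * η)
    (hd : d - η ≤ meanQuad R P Γ (fun Δ => φ Δ + 1 / 2 * (ψ Δ - φ Δ))) :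
    𝔼 i ∈ P, ∫ x in (-R)..R, (alongShear ψ (Γ i) x - alongShear φ (Γ i) x) ^ 2 ≤ 10 * η := by
  rw [expect_integral_sub_sq hφ hψ]
  linarith

lemma expect_integral_sq_mul_le {d : ℝ} (hP : P.Nonempty) (hR : 1 ≤ R) (hφ : IsObservable φ)
    (hβ : IsObservable β) (hβ0 : ∀ Δ, 0 ≤ β Δ) (hβ1 : ∀ Δ, β Δ ≤ 1)
    (hβz : ∀ i ∈ P, ∀ δ ∈ Icc (-1 : ℝ) 0, alongShear β (Γ i) δ = 0) (hθ : 0 < θ) (hθ1 : θ ≤ 1)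
    (hd : d ≤ 0) (hφd : meanQuad R P Γ φ ≤ d + 2 * θ ^ 2)
    (hdφ : d - θ ^ 2 ≤ meanQuad R P Γ (fun Δ => φ Δ + -θ * (β Δ * φ Δ))) :
    𝔼 i ∈ P, ∫ x in (-R)..R, alongShear φ (Γ i) x ^ 2 * alongShear β (Γ i) x ≤ 6 * θ := by
  have h := hdφ.trans (meanQuad_add_neg_mul_le (by linarith) hφ hβ hβ0 hβ1 hβz θ)
  have hsq : 𝔼 i ∈ P, ∫ x in (-R)..R, alongShear φ (Γ i) x ^ 2 ≤ 8 := by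
    linarith [expect_integral_sq_le (Γ := Γ) hP hR hφ, pow_le_one₀ hθ.le hθ1 (n := 2)]
  refine le_of_mul_le_mul_left ?_ (by positivity : 0 < 2 * θ)
  linarith [mul_le_mul_of_nonneg_left hsq (sq_nonneg θ), sq_nonneg θ]

lemma expect_integral_cutoff_le {d : ℝ} (hP : P.Nonempty) (hR : 0 ≤ R) (hc : 0 < c) (hθ : 0 < θ)
    (hφ : IsObservable φ) (hφd : meanQuad R P Γ φ ≤ d + 2 * θ ^ 2)
    (hd : d - θ ^ 2 ≤ meanQuad R P Γ (fun Δ => φ Δ + θ * cutoff c (φ Δ))) :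
    𝔼 i ∈ P, ∫ x in (-1 : ℝ)..0, cutoff c (alongShear φ (Γ i) x) ≤
      4 * c * R + θ * (3 / 2 + R) := by
  have h := hd.trans (meanQuad_add_mul_cutoff_le hP hR hc hθ.le hφ)
  refine le_of_mul_le_mul_left ?_ (by positivity : 0 < 2 * θ)
  linarith

lemma neg_two_le_meanQuad (hP : P.Nonempty) (hR : 1 ≤ R) (hφ : IsObservable φ) :
    -2 ≤ meanQuad R P Γ φ := by
  have h0 : 0 ≤ 𝔼 i ∈ P, ∫ x in (-R)..R, alongShear φ (Γ i) x ^ 2 :=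
    Finset.expect_nonneg fun i _ =>
      intervalIntegral.integral_nonneg (by linarith) fun x _ => sq_nonneg _
  linarith [expect_integral_sq_le (Γ := Γ) hP hR hφ]

/-- Along an ultrafilter, `¬ ∀ᶠ, a ≤ x` means `∀ᶠ, x < a`: a single value `d`, the infimum of the
eventual upper bounds, is both nearly attained and nearly a lower bound for every observable. -/
lemma exists_almost_minimal {J : Type*} (𝓤 : Ultrafilter J) {P : J → Finset ι}
    (hP : ∀ j, (P j).Nonempty) (hR : 1 ≤ R) {η : ℝ} (hη : 0 < η) :
    ∃ φ, IsObservable φ ∧ ∃ d ≤ 0, (∀ᶠ j in (𝓤 : Filter J), meanQuad R (P j) Γ φ ≤ d + η) ∧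
      ∀ ψ, IsObservable ψ → ∀ᶠ j in (𝓤 : Filter J), d - η ≤ meanQuad R (P j) Γ ψ := by
  set X : Set ℝ := {x | ∃ φ, IsObservable φ ∧ ∀ᶠ j in (𝓤 : Filter J), meanQuad R (P j) Γ φ ≤ x}
  have h0 : (0 : ℝ) ∈ X := ⟨fun _ => 0, isObservable_const 0, Eventually.of_forall fun j => by
    simp [meanQuad, alongShear, quad]⟩
  have hX : BddBelow X := by
    refine ⟨-2, fun x ⟨φ, hφ, h⟩ => ?_⟩
    obtain ⟨j, hj⟩ := h.exists
    exact (neg_two_le_meanQuad (hP j) hR hφ).trans hj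
  obtain ⟨x, ⟨φ, hφ, hφx⟩, hx⟩ := exists_lt_of_csInf_lt ⟨0, h0⟩
    (show sInf X < sInf X + η by linarith)
  refine ⟨φ, hφ, sInf X, csInf_le hX h0, hφx.mono fun j hj => hj.trans hx.le, fun ψ hψ => ?_⟩
  by_contra hcon
  rw [← Ultrafilter.eventually_not] at hcon
  have : sInf X - η ∈ X := ⟨ψ, hψ, hcon.mono fun j hj => (not_le.1 hj).le⟩
  linarith [csInf_le hX this]

end MeanQuad

section Shift

variable {α : Type*} {R M ζ c : ℝ} {φ β : SubgroupSeq → ℝ} {Λ : α → SubgroupSeq}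

lemma shift_shift (k n : ℕ) (Γ : SubgroupSeq) : shift k (shift n Γ) = shift (n + k) Γ := by
  ext1 j
  simp only [shift, add_assoc]

lemma expect_range_add_le {f : ℕ → ℝ} (hM : ∀ n, |f n| ≤ M) (k j : ℕ) :
    𝔼 n ∈ Finset.range (j + 1), f (n + k) ≤
      𝔼 n ∈ Finset.range (j + 1), f n + k * (2 * M / (j + 1)) := by
  induction k with
  | zero => simp
  | succ k ih =>
    have h : 𝔼 n ∈ Finset.range (j + 1), f (n + (k + 1)) - 𝔼 n ∈ Finset.range (j + 1), f (n + k) ≤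
        2 * M / (j + 1) := by
      rw [← Finset.expect_sub_distrib, Finset.expect_eq_sum_div_card, Finset.card_range,
        Nat.cast_succ]
      simp only [← add_assoc, add_right_comm _ k 1]
      rw [Finset.sum_range_sub fun n => f (n + k)]
      gcongr
      linarith [le_abs_self (f (j + 1 + k)), neg_abs_le (f (0 + k)), hM (j + 1 + k), hM (0 + k)]
    push_cast
    linarith

/-- The sample made of the first `j + 1` shifts of the sequences `Λ a`, for `a ∈ A`. -/
def shiftSample (A : Finset α) (j : ℕ) : Finset (α × ℕ) := A ×ˢ Finset.range (j + 1)

/-- The sequence of lattices attached to an element of `shiftSample`. -/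
def shiftOf (Λ : α → SubgroupSeq) (x : α × ℕ) : SubgroupSeq := shift x.2 (Λ x.1)

lemma meanQuad_comp_shift_le (hR : 0 ≤ R) (hM : ∀ Δ, |φ Δ| ≤ M) {A : Finset α} (hA : A.Nonempty)
    (k j : ℕ) :
    meanQuad R (shiftSample A j) (shiftOf Λ) (fun Δ => φ (shift k Δ)) ≤
      meanQuad R (shiftSample A j) (shiftOf Λ) φ +
        k * (2 * (M ^ 2 * (2 * R) + 2 * M) / (j + 1)) := by
  have hk (x : α × ℕ) : quad R (alongShear (fun Δ => φ (shift k Δ)) (shiftOf Λ x)) =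
      quad R (alongShear φ (shift (x.2 + k) (Λ x.1))) := by
    rw [← shift_shift]; rfl
  simp only [meanQuad, shiftSample, hk, Finset.expect_product]
  rw [← Finset.expect_const hA ((k : ℝ) * _), ← Finset.expect_add_distrib]
  exact Finset.expect_le_expect fun a _ => expect_range_add_le
    (f := fun n => quad R (alongShear φ (shift n (Λ a))))
    (fun n => abs_quad_le hR fun x => hM _) k j

lemma eventually_meanQuad_comp_shift_le (hR : 0 ≤ R) (hφ : IsObservable φ) {l : Filter ℕ}
    (hl : l ≤ atTop) {A : ℕ → Finset α} (hA : ∀ j, (A j).Nonempty) (k : ℕ) {η : ℝ} (hη : 0 < η) :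
    ∀ᶠ j in l, meanQuad R (shiftSample (A j) j) (shiftOf Λ) (fun Δ => φ (shift k Δ)) ≤
      meanQuad R (shiftSample (A j) j) (shiftOf Λ) φ + η := by
  obtain ⟨M, hM⟩ := hφ.1
  have ht : Tendsto (fun j : ℕ => (k : ℝ) * (2 * (M ^ 2 * (2 * R) + 2 * M) / ((j : ℝ) + 1))) atTop
      (𝓝 ((k : ℝ) * 0)) :=
    (tendsto_const_div_atTop_nhds_zero_nat (2 * (M ^ 2 * (2 * R) + 2 * M)) |>.comp
      (tendsto_add_atTop_nat 1) |>.congr fun j => by simp).const_mul _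
  rw [mul_zero] at ht
  filter_upwards [hl (ht.eventually (gt_mem_nhds hη))] with j hj
  exact (meanQuad_comp_shift_le hR hM (hA j) k j).trans (by gcongr)

/-- An almost minimiser of `meanQuad` is almost invariant under shifts by the parallelogram law,
since its shifts are almost minimisers too. Moving it towards `0` on the support of `β`, or away
from `0` on `[-1, 0]`, cannot decrease `meanQuad` by much either. -/
theorem exists_almost_invariant (𝓤 : Ultrafilter ℕ) (h𝓤 : (𝓤 : Filter ℕ) ≤ atTop)
    {A : ℕ → Finset α} (hA : ∀ j, (A j).Nonempty) (hR : 1 ≤ R) (hβ : IsObservable β)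
    (hβ0 : ∀ Δ, 0 ≤ β Δ) (hβ1 : ∀ Δ, β Δ ≤ 1)
    (hβz : ∀ k, ∀ᶠ j in (𝓤 : Filter ℕ), ∀ a ∈ A j, ∀ n ≤ j + k, ∀ δ ∈ Icc (-1 : ℝ) 0,
      alongShear β (shift n (Λ a)) δ = 0)
    (hζ : 0 < ζ) (hc : 0 < c) :
    ∃ φ, IsObservable φ ∧ ∀ k, ∀ᶠ j in (𝓤 : Filter ℕ),
      𝔼 x ∈ shiftSample (A j) j, (∫ δ in (-R)..R, (alongShear φ (shift k (shiftOf Λ x)) δ -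
        alongShear φ (shiftOf Λ x) δ) ^ 2) ≤ ζ ∧
      𝔼 x ∈ shiftSample (A j) j, (∫ δ in (-R)..R, alongShear φ (shift k (shiftOf Λ x)) δ ^ 2 *
        alongShear β (shift k (shiftOf Λ x)) δ) ≤ ζ ∧
      𝔼 x ∈ shiftSample (A j) j, (∫ δ in (-1 : ℝ)..0,
        cutoff c (alongShear φ (shift k (shiftOf Λ x)) δ)) ≤ 4 * c * R + ζ := by
  have hR0 : 0 ≤ R := by linarith
  set θ := min 1 (ζ / (12 * (1 + R)))
  have hθ : 0 < θ := lt_min one_pos (by positivity)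
  have hθ1 : θ ≤ 1 := min_le_left _ _
  have hθζ : θ * (12 * (1 + R)) ≤ ζ := (le_div_iff₀ (by positivity)).1 (min_le_right _ _)
  have hS (j) : (shiftSample (A j) j).Nonempty := (hA j).product (by simp)
  obtain ⟨φ, hφ, d, hd, hφd, hlow⟩ := exists_almost_minimal (Γ := shiftOf Λ) 𝓤 hS hR (pow_pos hθ 2)
  refine ⟨φ, hφ, fun k => ?_⟩
  have hφk := hφ.comp_shift k
  have hβk := hβ.comp_shift k
  have hcut : IsObservable fun Δ => cutoff c (φ (shift k Δ)) :=
    hφk.lipschitz_comp (by positivity) (abs_cutoff_sub_le hc) (M := 1) fun x =>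
      (abs_of_nonneg (cutoff_nonneg x)).trans_le (cutoff_le_one x)
  have hmid : IsObservable fun Δ => φ Δ + 1 / 2 * (φ (shift k Δ) - φ Δ) := by
    simpa only [sub_eq_add_neg, neg_one_mul] using
      hφ.add ((hφk.add (hφ.const_mul (-1))).const_mul (1 / 2))
  filter_upwards [hφd, eventually_meanQuad_comp_shift_le hR0 hφ h𝓤 hA k (pow_pos hθ 2),
    hlow _ (hφk.add ((hβk.mul hφk).const_mul (-θ))), hlow _ hmid,
    hlow _ (hφk.add (hcut.const_mul θ)), hβz k] with j hj hjk hdis hmid hcut hz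
  have hjk' := hjk.trans ((add_le_add_left hj _).trans_eq (by ring : _ = d + 2 * θ ^ 2))
  refine ⟨(expect_integral_sub_sq_le hφ hφk hj hjk' hmid).trans (by nlinarith),
    (expect_integral_sq_mul_le (hS j) hR hφk hβk (fun _ => hβ0 _) (fun _ => hβ1 _)
      (fun x hx δ hδ => ?_) hθ hθ1 hd hjk' hdis).trans (by nlinarith),
    (expect_integral_cutoff_le (hS j) hR0 hc hθ hφk hjk' hcut).trans (by nlinarith)⟩
  rw [shiftSample, Finset.mem_product, Finset.mem_range] at hx
  have := hz x.1 hx.1 (x.2 + k) (by omega) δ hδ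
  rwa [← shift_shift] at this

end Shift

section Defect

variable {ε K κ₀ : ℝ} {φ : SubgroupSeq → ℝ} {Γ : SubgroupSeq}

/-- The constants of the shift argument: by translating at most `J` times by an amount between `κ₀`
and `K` one moves from `[-1, 0]` to the support of the detector `detector ε l K`, staying in
`[-R, R]`, and a function changing by at most `3 * c₁` under each translation cannot decrease from
`c` to `c / 2` meanwhile; `υ` bounds the measure of the exceptional sets. -/
structure ShiftParams (ε K κ₀ : ℝ) where
  (l R c c₁ υ : ℝ)
  J : ℕ
  l_pos : 0 < l
  c_pos : 0 < c
  c₁_pos : 0 < c₁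
  υ_pos : 0 < υ
  l_le : 2 * l * (2 * (K * l) + 2 * l) ≤ ε
  le_J : (1 / l + l) / (κ₀ * (ε * l)) + 1 ≤ J
  le_R : 1 + J * K ≤ R
  υ_le : (2 * J + 1) * (3 * υ) ≤ 1 / 2
  c₁_le : J * (3 * c₁) ≤ c / 2

lemma exists_shiftParams (hε : 0 < ε) (hK : 0 < K) (κ₀ : ℝ) {ζ : ℝ} (hζ : 0 < ζ) :
    ∃ C : ShiftParams ε K κ₀, 16 * C.c * C.R ≤ ζ := by
  set l := min 1 (ε / (4 * K + 4))
  have hl : 0 < l := by positivity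
  have hlε : l * (4 * K + 4) ≤ ε := (le_div_iff₀ (by positivity)).1 (min_le_right _ _)
  obtain ⟨J, hJ⟩ := exists_nat_ge ((1 / l + l) / (κ₀ * (ε * l)) + 1)
  set c := ζ / (16 * (1 + J * K))
  have hc : 0 < c := by positivity
  refine ⟨{ l := l, R := 1 + J * K, c := c, c₁ := c / (6 * (J + 1)), υ := 1 / (6 * (2 * J + 1)),
            J := J, l_pos := hl, c_pos := hc, c₁_pos := by positivity, υ_pos := by positivity,
            l_le := ?_, le_J := hJ, le_R := le_rfl, υ_le := ?_, c₁_le := ?_ }, ?_⟩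
  · nlinarith [min_le_left 1 (ε / (4 * K + 4)), mul_pos hl hl, mul_pos (mul_pos hl hl) hK]
  · exact le_of_eq (by field_simp; norm_num)
  · rw [show (J : ℝ) * (3 * (c / (6 * (J + 1)))) = J / (J + 1) * (c / 2) by field_simp; ring]
    exact mul_le_of_le_one_left (by positivity) ((div_le_one (by positivity)).2 (by linarith))
  · exact le_of_eq (by simp only [c]; field_simp)

lemma ShiftParams.one_le_R (C : ShiftParams ε K κ₀) (hK : 0 ≤ K) : 1 ≤ C.R := by
  have : 0 ≤ C.J * K := by positivity
  linarith [C.le_R]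

/-- Measures how far `φ`, along `shift k Γ`, is from being close to its values along `Γ`, from
vanishing on the support of the detector, and from being large on `[-1, 0]`. -/
noncomputable def defect (C : ShiftParams ε K κ₀) (φ : SubgroupSeq → ℝ) (k : ℕ)
    (Γ : SubgroupSeq) : ℝ :=
  (∫ δ in (-C.R)..C.R, (alongShear φ (shift k Γ) δ - alongShear φ Γ δ) ^ 2) / (C.c₁ ^ 2 * C.υ) +
  (∫ δ in (-C.R)..C.R, alongShear φ (shift k Γ) δ ^ 2 *
    alongShear (detector ε C.l K) (shift k Γ) δ) / (C.c ^ 2 / 4 * C.υ) +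
  4 * ∫ δ in (-1 : ℝ)..0, cutoff C.c (alongShear φ (shift k Γ) δ)

lemma defect_nonneg (C : ShiftParams ε K κ₀) (hK : 0 ≤ K) (φ : SubgroupSeq → ℝ) (k : ℕ)
    (Γ : SubgroupSeq) : 0 ≤ defect C φ k Γ := by
  have hR : -C.R ≤ C.R := by linarith [C.one_le_R hK]
  have := C.υ_pos
  have := C.c₁_pos
  have := C.c_pos
  have h1 := intervalIntegral.integral_nonneg (μ := volume) hR fun δ _ =>
    sq_nonneg (alongShear φ (shift k Γ) δ - alongShear φ Γ δ)
  have h2 := intervalIntegral.integral_nonneg (μ := volume) hR fun δ _ =>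
    mul_nonneg (sq_nonneg (alongShear φ (shift k Γ) δ))
      (detector_nonneg (ε := ε) (l := C.l) (K := K) (lowerShear δ • shift k Γ))
  have h3 := intervalIntegral.integral_nonneg (μ := volume) (by norm_num : (-1 : ℝ) ≤ 0) fun δ _ =>
    cutoff_nonneg (c := C.c) (alongShear φ (shift k Γ) δ)
  exact add_nonneg (add_nonneg (div_nonneg h1 (by positivity)) (div_nonneg h2 (by positivity)))
    (mul_nonneg (by norm_num) h3)

lemma expect_defect_le {ι : Type*} {P : Finset ι} {Λ : ι → SubgroupSeq} (C : ShiftParams ε K κ₀)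
    {k : ℕ} {ζ : ℝ}
    (h1 : 𝔼 i ∈ P, (∫ δ in (-C.R)..C.R, (alongShear φ (shift k (Λ i)) δ -
      alongShear φ (Λ i) δ) ^ 2) ≤ ζ)
    (h2 : 𝔼 i ∈ P, (∫ δ in (-C.R)..C.R, alongShear φ (shift k (Λ i)) δ ^ 2 *
      alongShear (detector ε C.l K) (shift k (Λ i)) δ) ≤ ζ)
    (h3 : 𝔼 i ∈ P, (∫ δ in (-1 : ℝ)..0, cutoff C.c (alongShear φ (shift k (Λ i)) δ)) ≤
      4 * C.c * C.R + ζ) :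
    𝔼 i ∈ P, defect C φ k (Λ i) ≤
      ζ * (1 / (C.c₁ ^ 2 * C.υ) + 1 / (C.c ^ 2 / 4 * C.υ) + 4) + 16 * C.c * C.R := by
  have := C.υ_pos
  have := C.c₁_pos
  have := C.c_pos
  simp only [defect, Finset.expect_add_distrib, ← Finset.expect_div, ← Finset.mul_expect]
  have e1 := div_le_div_of_nonneg_right h1 (by positivity : 0 ≤ C.c₁ ^ 2 * C.υ)
  have e2 := div_le_div_of_nonneg_right h2 (by positivity : 0 ≤ C.c ^ 2 / 4 * C.υ)
  rw [mul_add, mul_add, mul_one_div, mul_one_div]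
  linarith

theorem exists_expect_defect_le {α : Type*} {Λ : α → SubgroupSeq} (C : ShiftParams ε K κ₀)
    (hK : 0 < K) (𝓤 : Ultrafilter ℕ) (h𝓤 : (𝓤 : Filter ℕ) ≤ atTop) {A : ℕ → Finset α}
    (hA : ∀ j, (A j).Nonempty)
    (hF : ∀ k, ∀ᶠ j in (𝓤 : Filter ℕ), ∀ a ∈ A j, ∀ n ≤ j + k,
      IsFat ε (2 * (K * C.l) + 2 * C.l) (Λ a n))
    {ζ : ℝ} (hζ : 16 * C.c * C.R < ζ) :
    ∃ φ, IsObservable φ ∧ ∀ k, ∀ᶠ j in (𝓤 : Filter ℕ),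
      𝔼 x ∈ shiftSample (A j) j, defect C φ k (shiftOf Λ x) ≤ ζ := by
  set Q := 1 / (C.c₁ ^ 2 * C.υ) + 1 / (C.c ^ 2 / 4 * C.υ) + 4
  have hQ : 0 < Q := by
    have := C.υ_pos
    have := C.c₁_pos
    have := C.c_pos
    positivity
  obtain ⟨φ, hφ, h⟩ := exists_almost_invariant (Λ := Λ) 𝓤 h𝓤 hA (C.one_le_R hK.le)
    (isObservable_detector (ε := ε) C.l_pos hK) detector_nonneg detector_le_one
    (fun k => (hF k).mono fun j hj a ha n hn δ hδ =>
      alongShear_detector_eq_zero C.l_pos hK C.l_le (hj a ha n hn) hδ)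
    (div_pos (sub_pos.2 hζ) hQ) C.c_pos
  refine ⟨φ, hφ, fun k => (h k).mono fun j hj => (expect_defect_le C hj.1 hj.2.1 hj.2.2).trans ?_⟩
  rw [div_mul_cancel₀ _ hQ.ne', sub_add_cancel]

lemma volume_le_of_integral_le {F : ℝ → ℝ} (hF : Continuous F) {a b η υ : ℝ} (hab : a ≤ b)
    (h0 : ∀ x, 0 ≤ F x) (hη : 0 < η) (h : ∫ x in a..b, F x ≤ η * υ) :
    volume {x | x ∈ Icc a b ∧ η ≤ F x} ≤ ENNReal.ofReal υ := by
  have h1 := mul_meas_ge_le_integral_of_nonneg (μ := volume.restrict (Icc a b))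
    (Eventually.of_forall h0) hF.continuousOn.integrableOn_Icc η
  rw [integral_Icc_eq_integral_Ioc, ← intervalIntegral.integral_of_le hab] at h1
  have hset : volume {x | x ∈ Icc a b ∧ η ≤ F x} =
      (volume.restrict (Icc a b)) {x | η ≤ F x} := by
    rw [Measure.restrict_apply (measurableSet_le measurable_const hF.measurable)]
    congr 1
    ext x
    exact and_comm
  rw [hset, ← ofReal_measureReal]
  exact ENNReal.ofReal_le_ofReal (le_of_mul_le_mul_left (h1.trans h) hη)

lemma volume_le_of_defect_lt_one {C : ShiftParams ε K κ₀} {k : ℕ} (hK : 0 < K)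
    (hφ : IsObservable φ) (h : defect C φ k Γ < 1) :
    volume {δ | δ ∈ Icc (-C.R) C.R ∧
      C.c₁ ^ 2 ≤ (alongShear φ (shift k Γ) δ - alongShear φ Γ δ) ^ 2} ≤ ENNReal.ofReal C.υ ∧
    volume {δ | δ ∈ Icc (-C.R) C.R ∧ C.c ^ 2 / 4 ≤ alongShear φ (shift k Γ) δ ^ 2 *
      alongShear (detector ε C.l K) (shift k Γ) δ} ≤ ENNReal.ofReal C.υ ∧
    volume {δ | δ ∈ Icc (-1 : ℝ) 0 ∧ 1 ≤ cutoff C.c (alongShear φ (shift k Γ) δ)} ≤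
      ENNReal.ofReal (1 / 4) := by
  have := C.υ_pos
  have := C.c₁_pos
  have := C.c_pos
  have hR : -C.R ≤ C.R := by linarith [C.one_le_R hK.le]
  have hφc := hφ.continuous_alongShear
  have hβc := (isObservable_detector (ε := ε) C.l_pos hK).continuous_alongShear (shift k Γ)
  have h1 : ∀ δ, 0 ≤ (alongShear φ (shift k Γ) δ - alongShear φ Γ δ) ^ 2 := fun δ => sq_nonneg _
  have h2 : ∀ δ, 0 ≤ alongShear φ (shift k Γ) δ ^ 2 *
      alongShear (detector ε C.l K) (shift k Γ) δ :=
    fun δ => mul_nonneg (sq_nonneg _) (detector_nonneg _)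
  have h3 : ∀ δ, 0 ≤ cutoff C.c (alongShear φ (shift k Γ) δ) := fun δ => cutoff_nonneg _
  have p1 : 0 < C.c₁ ^ 2 * C.υ := by positivity
  have p2 : 0 < C.c ^ 2 / 4 * C.υ := by positivity
  have q1 := div_nonneg (intervalIntegral.integral_nonneg (μ := volume) hR fun δ _ => h1 δ) p1.le
  have q2 := div_nonneg (intervalIntegral.integral_nonneg (μ := volume) hR fun δ _ => h2 δ) p2.le
  have q3 := intervalIntegral.integral_nonneg (μ := volume) (by norm_num : (-1 : ℝ) ≤ 0)
    fun δ _ => h3 δ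
  unfold defect at h
  exact ⟨volume_le_of_integral_le (((hφc _).sub (hφc _)).pow 2) hR h1 (by positivity)
      ((div_le_one p1).1 (by simp only [Pi.sub_apply, Pi.pow_apply]; linarith)),
    volume_le_of_integral_le (((hφc _).pow 2).mul hβc) hR h2 (by positivity)
      ((div_le_one p2).1 (by simp only [Pi.mul_apply, Pi.pow_apply]; linarith)),
    volume_le_of_integral_le (continuous_cutoff.comp (hφc _)) (by norm_num) h3 one_pos
      (by simp only [Function.comp]; linarith)⟩

lemma exists_lt_abs_alongShear_sub {C : ShiftParams ε K κ₀} {Θ κ : ℝ} {k k' : ℕ} (hε : 0 < ε)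
    (hK : 0 < K) (hκ₀ : 0 < κ₀) (hφ : IsObservable φ) (hΘ : 1 / C.l < Θ)
    (hΓ : IsUnimodular (Γ k)) (hF : IsFat ε Θ (Γ k)) (hκ : κ₀ ≤ |κ|) (hκK : |κ| ≤ K)
    (hk : defect C φ k Γ < 1) (hk' : defect C φ k' Γ < 1) :
    ∃ δ, |δ| ≤ C.R ∧
      C.c₁ < |alongShear φ (shift k' Γ) δ - alongShear φ (shift k Γ) (δ - κ)| := by
  obtain ⟨v1, v2, v3⟩ := volume_le_of_defect_lt_one hK hφ hk
  obtain ⟨v1', -, -⟩ := volume_le_of_defect_lt_one hK hφ hk'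
  have hυ := C.υ_pos.le
  set X₁ := {δ | δ ∈ Icc (-C.R) C.R ∧
      C.c₁ ^ 2 ≤ (alongShear φ (shift k Γ) δ - alongShear φ Γ δ) ^ 2}
  set X₁' := {δ | δ ∈ Icc (-C.R) C.R ∧
      C.c₁ ^ 2 ≤ (alongShear φ (shift k' Γ) δ - alongShear φ Γ δ) ^ 2}
  set X₂ := {δ | δ ∈ Icc (-C.R) C.R ∧ C.c ^ 2 / 4 ≤ alongShear φ (shift k Γ) δ ^ 2 *
      alongShear (detector ε C.l K) (shift k Γ) δ}
  set Y := {δ | δ ∈ Icc (-1 : ℝ) 0 ∧ 1 ≤ cutoff C.c (alongShear φ (shift k Γ) δ)}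
  have hX : volume (X₁ ∪ X₁' ∪ X₂) ≤ ENNReal.ofReal (3 * C.υ) := by
    refine (measure_union_le _ _).trans ((add_le_add (measure_union_le _ _) le_rfl).trans ?_)
    refine (add_le_add (add_le_add v1 v1') v2).trans_eq ?_
    rw [← ENNReal.ofReal_add hυ hυ, ← ENNReal.ofReal_add (by positivity) hυ]
    ring_nf
  refine exists_lt_abs_sub_of_translate (e := alongShear φ Γ) (X := X₁ ∪ X₁' ∪ X₂) (Y := Y)
    (β := alongShear (detector ε C.l K) (shift k Γ)) ?_ C.c_pos C.le_R hκK C.c₁_le ?_ ?_ fun δ hδ =>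
      exists_one_le_alongShear_detector hε C.l_pos hK hκ₀ C.le_J hΘ hΓ hF hδ hκ hκK
  · calc (2 * C.J + 1) * volume (X₁ ∪ X₁' ∪ X₂) + volume Y
        ≤ (2 * C.J + 1) * ENNReal.ofReal (3 * C.υ) + ENNReal.ofReal (1 / 4) := by gcongr
      _ = ENNReal.ofReal ((2 * C.J + 1) * (3 * C.υ) + 1 / 4) := by
        rw [ENNReal.ofReal_add (by positivity) (by positivity),
          ENNReal.ofReal_mul (by positivity : (0 : ℝ) ≤ 2 * C.J + 1),
          ENNReal.ofReal_add (by positivity) zero_le_one, ENNReal.ofReal_mul zero_le_two]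
        simp
      _ < 1 := by
        rw [ENNReal.ofReal_lt_one]
        linarith [C.υ_le]
  · intro δ hδ hδX
    have hmem : δ ∈ Icc (-C.R) C.R := abs_le.1 hδ
    simp only [X₁, X₁', X₂, mem_union, mem_ofPred_eq, hmem, true_and, not_or, not_le] at hδX
    exact ⟨(abs_lt_of_sq_lt_sq hδX.1.2 C.c₁_pos.le).le, (abs_lt_of_sq_lt_sq hδX.1.1 C.c₁_pos.le).le,
      hδX.2⟩
  · intro δ hδ hδY
    by_contra! hle
    exact hδY ⟨hδ, (cutoff_eq_one C.c_pos hle).ge⟩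

end Defect

/-! ### Frequencies and maximal inequalities -/

section Frequency

open scoped Finset

variable {α β : Type*} {A : Finset α} {P Q : α → Prop}

open Classical in
/-- The proportion of the elements of `A` satisfying `P`, with the value `0` when `A` is empty. -/
noncomputable def freq (A : Finset α) (P : α → Prop) : ℝ := 𝔼 a ∈ A, if P a then 1 else 0

lemma card_mul_freq (A : Finset α) (P : α → Prop) [DecidablePred P] :
    #A * freq A P = #{a ∈ A | P a} := by
  classical
  rw [freq, ← nsmul_eq_mul, Finset.card_smul_expect, ← Finset.sum_boole]
  congr!

lemma freq_nonneg (A : Finset α) (P : α → Prop) : 0 ≤ freq A P :=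
  Finset.expect_nonneg fun _ _ => by positivity

lemma freq_le_one (A : Finset α) (P : α → Prop) : freq A P ≤ 1 := by
  rcases A.eq_empty_or_nonempty with rfl | hA
  · simp [freq]
  · exact Finset.expect_le hA fun _ _ => by split_ifs <;> norm_num

lemma freq_mono (h : ∀ a ∈ A, P a → Q a) : freq A P ≤ freq A Q :=
  Finset.expect_le_expect fun a ha => by
    split_ifs with hP hQ
    exacts [le_rfl, absurd (h a ha hP) hQ, zero_le_one, le_rfl]

lemma freq_or_le : freq A (fun a => P a ∨ Q a) ≤ freq A P + freq A Q := by
  rw [freq, freq, freq, ← Finset.expect_add_distrib]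
  exact Finset.expect_le_expect fun a _ => by split_ifs <;> grind

lemma freq_and_not (h : ∀ a ∈ A, Q a → P a) :
    freq A (fun a => P a ∧ ¬Q a) = freq A P - freq A Q := by
  rw [freq, freq, freq, ← Finset.expect_sub_distrib]
  exact Finset.expect_congr rfl fun a ha => by split_ifs <;> grind

lemma freq_not (hA : A.Nonempty) : freq A (fun a => ¬P a) = 1 - freq A P := by
  rw [eq_sub_iff_add_eq, freq, freq, ← Finset.expect_add_distrib]
  exact (Finset.expect_congr rfl fun a _ => by split_ifs <;> norm_num).trans
    (Finset.expect_const hA 1)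

lemma exists_not_of_freq_lt_one (hA : A.Nonempty) (h : freq A P < 1) : ∃ a ∈ A, ¬P a := by
  by_contra! hP
  have := freq_mono (P := fun _ => True) fun a ha _ => hP a ha
  simp [freq, Finset.expect_const hA] at this h
  linarith

lemma freq_product (A : Finset α) (B : Finset β) (P : α × β → Prop) :
    freq (A ×ˢ B) P = 𝔼 a ∈ A, freq B fun x => P (a, x) :=
  Finset.expect_product ..

lemma freq_product_right (A : Finset α) (B : Finset β) (P : α × β → Prop) :
    freq (A ×ˢ B) P = 𝔼 x ∈ B, freq A fun a => P (a, x) :=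
  (Finset.expect_product ..).trans (Finset.expect_comm ..)

lemma freq_one_le_le_expect {f : α → ℝ} (hf : ∀ a ∈ A, 0 ≤ f a) :
    freq A (fun a => 1 ≤ f a) ≤ 𝔼 a ∈ A, f a :=
  Finset.expect_le_expect fun a ha => by
    split_ifs with h
    exacts [h, hf a ha]

end Frequency

section TimeMaximal

lemma count_sub_add_count (P : ℕ → Prop) [DecidablePred P] {d t : ℕ} (hd : d ≤ t) :
    Nat.count P (t - d) + Nat.count (fun i => P (t - i)) (d + 1) = Nat.count P (t + 1) := by
  induction d with
  | zero => simp [Nat.count_succ]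
  | succ d ih =>
    rw [← ih (by omega), Nat.count_succ _ (d + 1), show t - d = t - (d + 1) + 1 by omega,
      Nat.count_succ P]
    ring

lemma natCast_mul_freq_range (P : ℕ → Prop) [DecidablePred P] (n : ℕ) :
    n * freq (Finset.range n) P = Nat.count P n := by
  simpa [Nat.count_eq_card_filter_range] using card_mul_freq (Finset.range n) P

/-- The one-sided weak-type maximal inequality on `ℕ`. -/
lemma mul_freq_range_le {P M : ℕ → Prop} {ζ : ℝ} (hζ : 0 ≤ ζ)
    (hM : ∀ t, M t → ∃ d ≤ t, ζ ≤ freq (Finset.range (d + 1)) fun i => P (t - i)) (n : ℕ) :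
    ζ * freq (Finset.range n) M ≤ freq (Finset.range n) P := by
  classical
  have key : ζ * Nat.count M n ≤ Nat.count P n := by
    induction n using Nat.strong_induction_on with
    | _ n ih =>
    rcases n with _ | t
    · simp
    by_cases ht : M t
    · obtain ⟨d, hd, h⟩ := hM t ht
      have hwin : ζ * (d + 1 : ℕ) ≤ Nat.count (fun i => P (t - i)) (d + 1) := by
        rw [← natCast_mul_freq_range, mul_comm]
        gcongr
      have hP := count_sub_add_count P hd
      have hM' : Nat.count M (t + 1) ≤ Nat.count M (t - d) + (d + 1) := by
        rw [← count_sub_add_count M hd]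
        gcongr
        exact Nat.count_le _
      calc ζ * Nat.count M (t + 1) ≤ ζ * (Nat.count M (t - d) + (d + 1 : ℕ)) := by
            gcongr
            exact_mod_cast hM'
        _ ≤ Nat.count P (t - d) + Nat.count (fun i => P (t - i)) (d + 1) := by
            linarith [ih (t - d) (by omega)]
        _ = Nat.count P (t + 1) := by exact_mod_cast hP
    · rw [Nat.count_succ, if_neg ht, add_zero]
      exact (ih t t.lt_succ_self).trans (by exact_mod_cast Nat.count_monotone P t.le_succ)
  rcases n.eq_zero_or_pos with rfl | hn
  · simp [freq]
  · rw [← natCast_mul_freq_range, ← natCast_mul_freq_range, mul_left_comm] at key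
    exact le_of_mul_le_mul_left key (by exact_mod_cast hn)

end TimeMaximal

section Tree

open scoped Finset

variable {α : Type*} {cell : ℕ → α → ℤ} {S : Finset α} {b : ℕ}

/-- `cell L x` is the index of the cell of level `L` containing `x`, and each cell `w` is divided
into the cells `b * w, …, b * w + b - 1` of the next level. -/
def IsAdic (b : ℕ) (cell : ℕ → α → ℤ) : Prop := ∀ L x, cell (L + 1) x / b = cell L x

lemma IsAdic.eq_of_le (hcell : IsAdic b cell) {L L' : ℕ} (hL : L ≤ L') {x y : α}
    (h : cell L' x = cell L' y) : cell L x = cell L y := by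
  induction L', hL using Nat.le_induction with
  | base => exact h
  | succ L' _ ih => exact ih (by rw [← hcell L' x, ← hcell L' y, h])

lemma IsAdic.mem_Ico (hcell : IsAdic b cell) (hb : 0 < b) (L : ℕ) (x : α) :
    cell (L + 1) x ∈ Finset.Ico (b * cell L x) (b * cell L x + b) := by
  rw [← hcell, Finset.mem_Ico]
  have h := Int.mul_ediv_add_emod (cell (L + 1) x) b
  have := Int.emod_nonneg (cell (L + 1) x) (Int.natCast_ne_zero.2 hb.ne')
  have := Int.emod_lt_of_pos (cell (L + 1) x) (Int.natCast_pos.2 hb)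
  omega

/-- The points of `S` in the same cell of level `L` as `s`. -/
def block (cell : ℕ → α → ℤ) (S : Finset α) (L : ℕ) (s : α) : Finset α :=
  {s' ∈ S | cell L s' = cell L s}

lemma mem_block {L : ℕ} {s s' : α} : s' ∈ block cell S L s ↔ s' ∈ S ∧ cell L s' = cell L s :=
  Finset.mem_filter

lemma block_subset {L : ℕ} {s : α} : block cell S L s ⊆ S := Finset.filter_subset ..

lemma block_congr {L : ℕ} {s s' : α} (h : cell L s' = cell L s) :
    block cell S L s' = block cell S L s := by
  rw [block, block, h]

lemma IsAdic.block_subset_or_disjoint (hcell : IsAdic b cell) {L L' : ℕ} (hL : L ≤ L') (s s' : α) :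
    block cell S L' s' ⊆ block cell S L s ∨ Disjoint (block cell S L s) (block cell S L' s') := by
  rw [or_iff_not_imp_right, Finset.not_disjoint_iff]
  rintro ⟨x, hx, hx'⟩ y hy
  rw [mem_block] at *
  exact ⟨hy.1, (hcell.eq_of_le hL (hy.2.trans hx'.2.symm)).trans hx.2⟩

lemma mul_card_biUnion_le_of_laminar [DecidableEq α] {ℱ : Finset (Finset α)}
    (hℱ : ∀ C ∈ ℱ, ∀ D ∈ ℱ, C ⊆ D ∨ D ⊆ C ∨ Disjoint C D) {E : Finset α} {ζ : ℝ} (hζ : 0 ≤ ζ)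
    (h : ∀ C ∈ ℱ, ζ * #C ≤ #(C ∩ E)) : ζ * #(ℱ.biUnion id) ≤ #E := by
  classical
  set ℳ : Finset (Finset α) := {C ∈ ℱ | Maximal (· ∈ ℱ) C}
  have hcover : ℱ.biUnion id ⊆ ℳ.biUnion id := by
    intro x hx
    obtain ⟨C, hC, hxC⟩ := Finset.mem_biUnion.1 hx
    obtain ⟨D, hCD, hD⟩ := ℱ.exists_le_maximal hC
    exact Finset.mem_biUnion.2 ⟨D, Finset.mem_filter.2 ⟨hD.prop, hD⟩, hCD hxC⟩
  have hdisj : (ℳ : Set (Finset α)).PairwiseDisjoint (· ∩ E) := by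
    intro C hC D hD hne
    obtain ⟨hCℱ, hC⟩ := Finset.mem_filter.1 hC
    obtain ⟨hDℱ, hD⟩ := Finset.mem_filter.1 hD
    rcases hℱ C hCℱ D hDℱ with hCD | hDC | hdisj
    · exact absurd (hC.eq_of_le hDℱ hCD) hne
    · exact absurd (hD.eq_of_le hCℱ hDC).symm hne
    · exact hdisj.mono Finset.inter_subset_left Finset.inter_subset_left
  calc ζ * #(ℱ.biUnion id) ≤ ζ * ∑ C ∈ ℳ, (#C : ℝ) := by
        gcongr
        exact_mod_cast (Finset.card_le_card hcover).trans Finset.card_biUnion_le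
    _ = ∑ C ∈ ℳ, ζ * #C := Finset.mul_sum ..
    _ ≤ ∑ C ∈ ℳ, (#(C ∩ E) : ℝ) :=
        Finset.sum_le_sum fun C hC => h C (Finset.mem_filter.1 hC).1
    _ = #(ℳ.biUnion (· ∩ E)) := by rw [Finset.card_biUnion hdisj, Nat.cast_sum]
    _ ≤ #E := by
        exact_mod_cast Finset.card_le_card
          (Finset.biUnion_subset.2 fun C _ => Finset.inter_subset_right)

/-- Some block around `s` contains a proportion of more than `ζ` of points satisfying `Q`. -/
def IsHeavy (cell : ℕ → α → ℤ) (S : Finset α) (ζ : ℝ) (Q : α → Prop) (s : α) : Prop :=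
  ∃ L, ζ < freq (block cell S L s) Q

/-- The weak-type maximal inequality along the tree of cells. -/
lemma IsAdic.mul_freq_isHeavy_le (hcell : IsAdic b cell) {ζ : ℝ} (hζ : 0 ≤ ζ) (Q : α → Prop) :
    ζ * freq S (IsHeavy cell S ζ Q) ≤ freq S Q := by
  classical
  set E : Finset α := {a ∈ S | Q a} with hE
  set ℱ : Finset (Finset α) :=
    {C ∈ S.powerset | (∃ L s, C = block cell S L s) ∧ ζ * #C ≤ #(C ∩ E)} with hℱ
  have hlam : ∀ C ∈ ℱ, ∀ D ∈ ℱ, C ⊆ D ∨ D ⊆ C ∨ Disjoint C D := by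
    intro C hC D hD
    obtain ⟨-, ⟨L, s, rfl⟩, -⟩ := Finset.mem_filter.1 hC
    obtain ⟨-, ⟨L', s', rfl⟩, -⟩ := Finset.mem_filter.1 hD
    rcases le_total L L' with h | h
    · exact .inr (hcell.block_subset_or_disjoint h s s')
    · exact (hcell.block_subset_or_disjoint h s' s).imp_right fun h => .inr h.symm
  have hcover : ({s ∈ S | IsHeavy cell S ζ Q s} : Finset α) ⊆ ℱ.biUnion id := by
    intro s hs
    obtain ⟨hs, L, hL⟩ := Finset.mem_filter.1 hs
    refine Finset.mem_biUnion.2 ⟨block cell S L s, Finset.mem_filter.2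
      ⟨Finset.mem_powerset.2 block_subset, ⟨L, s, rfl⟩, ?_⟩, mem_block.2 ⟨hs, rfl⟩⟩
    have hfilter : block cell S L s ∩ E = {a ∈ block cell S L s | Q a} := by
      rw [hE, Finset.inter_filter, Finset.inter_eq_left.2 block_subset]
    rw [hfilter, ← card_mul_freq, mul_comm]
    gcongr
  have key := mul_card_biUnion_le_of_laminar hlam hζ fun C hC => (Finset.mem_filter.1 hC).2.2
  rcases S.eq_empty_or_nonempty with rfl | hS
  · simp [freq]
  refine le_of_mul_le_mul_left ?_ (Nat.cast_pos.2 hS.card_pos)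
  rw [mul_left_comm, card_mul_freq, card_mul_freq]
  exact le_trans (by gcongr) key

/-! ### Entropy -/

lemma negMulLog_le_two_mul_sqrt {x : ℝ} (hx : 0 ≤ x) : Real.negMulLog x ≤ 2 * √x := by
  rcases hx.eq_or_lt with rfl | hx
  · simp
  have hs : 0 < √x := Real.sqrt_pos.2 hx
  have hlog := Real.one_sub_inv_le_log_of_pos hs
  calc Real.negMulLog x = x * (-2 * Real.log √x) := by
        rw [Real.negMulLog, Real.log_sqrt hx.le]
        ring
    _ ≤ x * (2 * (√x)⁻¹) := mul_le_mul_of_nonneg_left (by linarith) hx.le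
    _ = 2 * √x := by
        nth_rw 1 [← Real.mul_self_sqrt hx.le]
        field_simp

lemma card_le_four_of_not_separated {H : Finset ℤ}
    (h : ∀ x ∈ H, ∀ y ∈ H, ∀ z ∈ H, x + 2 ≤ y → ¬y + 2 ≤ z) : #H ≤ 4 := by
  rcases H.eq_empty_or_nonempty with rfl | hne
  · simp
  refine (Finset.card_le_card fun y hy => ?_).trans
    (Finset.card_le_four (a := H.min' hne) (b := H.min' hne + 1) (c := H.max' hne)
      (d := H.max' hne - 1))
  have hmin := H.min'_le y hy
  have hmax := H.le_max' y hy
  have := h _ (H.min'_mem hne) y hy _ (H.max'_mem hne)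
  simp only [Finset.mem_insert, Finset.mem_singleton]
  omega

/-- The weights `p` are at least `c` at three pairwise separated integers. -/
def IsSpread (c : ℝ) (p : ℤ → ℝ) : Prop :=
  ∃ x y z, x + 2 ≤ y ∧ y + 2 ≤ z ∧ ∀ w ∈ ({x, y, z} : Finset ℤ), c ≤ p w

lemma sum_negMulLog_le_card {p : ℤ → ℝ} (hp : ∀ w, 0 ≤ p w) (I : Finset ℤ) :
    ∑ w ∈ I, Real.negMulLog (p w) ≤ #I :=
  (Finset.sum_le_card_nsmul I _ 1 fun w _ => by
    linarith [Real.negMulLog_le_one_sub_self (hp w), hp w]).trans_eq (by simp)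

lemma sum_negMulLog_le_five {p : ℤ → ℝ} (hp : ∀ w, 0 ≤ p w) {I : Finset ℤ} (hI : #I ≤ b)
    (hspread : ¬IsSpread (1 / (4 * b ^ 2)) p) : ∑ w ∈ I, Real.negMulLog (p w) ≤ 5 := by
  classical
  rw [← Finset.sum_filter_add_sum_filter_not I fun w => 1 / (4 * (b : ℝ) ^ 2) ≤ p w]
  have hheavy : #{w ∈ I | 1 / (4 * (b : ℝ) ^ 2) ≤ p w} ≤ 4 := by
    refine card_le_four_of_not_separated fun x hx y hy z hz hxy hyz => hspread
      ⟨x, y, z, hxy, hyz, fun w hw => ?_⟩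
    rw [Finset.mem_filter] at hx hy hz
    simp only [Finset.mem_insert, Finset.mem_singleton] at hw
    rcases hw with rfl | rfl | rfl
    exacts [hx.2, hy.2, hz.2]
  have hlight : ∀ w ∈ I.filter fun w => ¬1 / (4 * (b : ℝ) ^ 2) ≤ p w,
      Real.negMulLog (p w) ≤ 1 / b := by
    intro w hw
    have hw := (not_le.1 (Finset.mem_filter.1 hw).2).le
    calc Real.negMulLog (p w) ≤ 2 * √(p w) := negMulLog_le_two_mul_sqrt (hp w)
      _ ≤ 2 * √((1 / (2 * b)) ^ 2) := by
          gcongr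
          exact hw.trans_eq (by ring)
      _ = 1 / b := by
          rw [Real.sqrt_sq (by positivity)]
          ring
  have h₁ := (sum_negMulLog_le_card hp _).trans (Nat.cast_le.2 hheavy)
  have h₂ := Finset.sum_le_card_nsmul _ _ _ hlight
  have h₃ : (#(I.filter fun w => ¬1 / (4 * (b : ℝ) ^ 2) ≤ p w) : ℝ) * (1 / b) ≤ 1 := by
    rw [mul_one_div]
    exact div_le_one_of_le₀ (by exact_mod_cast (Finset.card_filter_le ..).trans hI) (by positivity)
  rw [nsmul_eq_mul] at h₂
  push_cast at h₁
  linarith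

/-- The block of `s` at level `L` has three separated children of proportion at least `c`. -/
def Spread (cell : ℕ → α → ℤ) (S : Finset α) (c : ℝ) (s : α) (L : ℕ) : Prop :=
  IsSpread c fun w => freq (block cell S L s) (cell (L + 1) · = w)

lemma sum_neg_log_freq_fiber (C : Finset α) (g : α → ℤ) {I : Finset ℤ} (hg : ∀ s ∈ C, g s ∈ I) :
    ∑ s ∈ C, -Real.log (freq C (g · = g s)) =
      #C * ∑ w ∈ I, Real.negMulLog (freq C (g · = w)) := by
  rw [← Finset.sum_fiberwise_of_maps_to hg, Finset.mul_sum]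
  refine Finset.sum_congr rfl fun w _ => ?_
  rw [Finset.sum_congr rfl fun s hs => by rw [(Finset.mem_filter.1 hs).2], Finset.sum_const,
    nsmul_eq_mul, ← card_mul_freq, Real.negMulLog]
  ring

open Classical in
lemma IsAdic.sum_log_card_block_sub_le (hcell : IsAdic b cell) (hb : 0 < b) (L : ℕ) (s₀ : α) :
    ∑ s ∈ block cell S L s₀, (Real.log #(block cell S L s) - Real.log #(block cell S (L + 1) s)) ≤
      ∑ s ∈ block cell S L s₀, (5 + b * if Spread cell S (1 / (4 * b ^ 2)) s L then (1 : ℝ) else 0)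
      := by
  set C := block cell S L s₀ with hC
  have hblock : ∀ s ∈ C, block cell S L s = C := fun s hs => block_congr (mem_block.1 hs).2
  have hchild : ∀ s ∈ C, block cell S (L + 1) s = {s' ∈ C | cell (L + 1) s' = cell (L + 1) s} := by
    intro s hs
    ext x
    rw [mem_block, Finset.mem_filter, ← hblock s hs, mem_block]
    exact ⟨fun h => ⟨⟨h.1, hcell.eq_of_le L.le_succ h.2⟩, h.2⟩, fun h => ⟨h.1.1, h.2⟩⟩
  have hlog : ∀ s ∈ C, Real.log #(block cell S L s) - Real.log #(block cell S (L + 1) s) =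
      -Real.log (freq C (cell (L + 1) · = cell (L + 1) s)) := by
    intro s hs
    have hpos : (0 : ℝ) < #(block cell S (L + 1) s) :=
      Nat.cast_pos.2 (Finset.card_pos.2 ⟨s, mem_block.2 ⟨block_subset hs, rfl⟩⟩)
    have hmul := card_mul_freq C (cell (L + 1) · = cell (L + 1) s)
    rw [← hchild s hs] at hmul
    rw [hblock s hs, ← hmul, Real.log_mul (left_ne_zero_of_mul (hmul.trans_ne hpos.ne'))
      (right_ne_zero_of_mul (hmul.trans_ne hpos.ne'))]
    ring
  have hmem : ∀ s ∈ C, cell (L + 1) s ∈ Finset.Ico (b * cell L s₀) (b * cell L s₀ + b) :=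
    fun s hs => (mem_block.1 hs).2 ▸ hcell.mem_Ico hb L s
  have hspread : ∀ s ∈ C, Spread cell S (1 / (4 * b ^ 2)) s L ↔
      IsSpread (1 / (4 * b ^ 2)) fun w => freq C (cell (L + 1) · = w) := fun s hs => by
    rw [Spread, hblock s hs]
  rw [Finset.sum_congr rfl hlog, sum_neg_log_freq_fiber C _ hmem,
    Finset.sum_congr (s₁ := C) rfl fun s hs => by rw [if_congr (hspread s hs) rfl rfl],
    Finset.sum_const, nsmul_eq_mul]
  gcongr
  split_ifs with h
  · refine (sum_negMulLog_le_card (fun _ => freq_nonneg ..) _).trans ?_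
    simp
  · refine (sum_negMulLog_le_five (fun _ => freq_nonneg ..) (by simp) h).trans ?_
    simp

lemma sum_le_sum_of_blocks (L : ℕ) {f g : α → ℝ}
    (h : ∀ s₀ ∈ S, ∑ s ∈ block cell S L s₀, f s ≤ ∑ s ∈ block cell S L s₀, g s) :
    ∑ s ∈ S, f s ≤ ∑ s ∈ S, g s := by
  classical
  have hmaps : ∀ s ∈ S, cell L s ∈ S.image (cell L) := fun s hs => Finset.mem_image_of_mem _ hs
  rw [← Finset.sum_fiberwise_of_maps_to hmaps f, ← Finset.sum_fiberwise_of_maps_to hmaps g]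
  refine Finset.sum_le_sum fun w hw => ?_
  obtain ⟨s₀, hs₀, rfl⟩ := Finset.mem_image.1 hw
  exact h s₀ hs₀

lemma IsAdic.log_card_le (hcell : IsAdic b cell) (hb : 0 < b) (hS : S.Nonempty) {T : ℕ}
    (hzero : ∀ s ∈ S, ∀ s' ∈ S, cell 0 s = cell 0 s') (hinj : Set.InjOn (cell T) S) :
    Real.log #S ≤ ∑ L ∈ Finset.range T, (5 + b * freq S (Spread cell S (1 / (4 * b ^ 2)) · L)) := by
  classical
  have htelescope : ∀ s ∈ S, Real.log #S = ∑ L ∈ Finset.range T,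
      (Real.log #(block cell S L s) - Real.log #(block cell S (L + 1) s)) := by
    intro s hs
    have hzero' : block cell S 0 s = S := Finset.filter_true_of_mem fun x hx => hzero x hx s hs
    have hT : block cell S T s = {s} := Finset.eq_singleton_iff_unique_mem.2
      ⟨mem_block.2 ⟨hs, rfl⟩, fun x hx => hinj (block_subset hx) hs (mem_block.1 hx).2⟩
    rw [Finset.sum_range_sub' fun L => Real.log #(block cell S L s), hzero', hT]
    simp
  refine le_of_mul_le_mul_left ?_ (Nat.cast_pos.2 hS.card_pos)
  rw [← nsmul_eq_mul, ← Finset.sum_const, Finset.sum_congr rfl htelescope, Finset.sum_comm,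
    Finset.mul_sum]
  refine Finset.sum_le_sum fun L _ => (sum_le_sum_of_blocks L fun s₀ _ =>
    hcell.sum_log_card_block_sub_le hb L s₀).trans_eq ?_
  rw [Finset.sum_add_distrib, ← Finset.mul_sum, Finset.sum_const, nsmul_eq_mul, mul_add,
    mul_left_comm, card_mul_freq, Finset.sum_boole]

lemma IsAdic.four_div_le_freq_spread (hcell : IsAdic b cell) (hb : 0 < b) (hS : S.Nonempty)
    {T₀ n : ℕ} (hn : 0 < n) (hzero : ∀ s ∈ S, ∀ s' ∈ S, cell 0 s = cell 0 s')
    (hinj : Set.InjOn (cell (T₀ + n)) S) (hlog : 10 * (T₀ + n : ℕ) ≤ Real.log #S)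
    (hT₀ : b * T₀ ≤ T₀ + n) :
    4 / b ≤ freq (S ×ˢ Finset.range n)
      fun x => Spread cell S (1 / (4 * b ^ 2)) x.1 (T₀ + x.2) := by
  have hinit : ∀ L ∈ Finset.range T₀, 5 + b * freq S (Spread cell S (1 / (4 * b ^ 2)) · L) ≤
      5 + (b : ℝ) := fun L _ => by
    gcongr
    exact mul_le_of_le_one_right b.cast_nonneg (freq_le_one ..)
  have hinit := Finset.sum_le_card_nsmul _ _ _ hinit
  have hsum := hlog.trans (hcell.log_card_le hb hS hzero hinj)
  rw [Finset.sum_range_add, Finset.sum_add_distrib (s := Finset.range n), ← Finset.mul_sum] at hsum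
  rw [freq_product_right, Finset.expect_eq_sum_div_card, Finset.card_range,
    div_le_div_iff₀ (by exact_mod_cast hb) (by exact_mod_cast hn), mul_comm _ (b : ℝ)]
  have hT₀ : (b : ℝ) * T₀ ≤ T₀ + n := by exact_mod_cast hT₀
  simp only [Finset.sum_const, Finset.card_range, nsmul_eq_mul] at hinit hsum
  push_cast at hsum
  linarith [(Nat.cast_nonneg T₀ : (0 : ℝ) ≤ T₀)]

end Tree

/-! ### Selection of scales -/

section Selection

open scoped Finset

variable {α ι : Type*} {cell : ℕ → α → ℤ} {S : Finset α} {b n : ℕ}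

lemma mul_freq_product_range_le {P M : α → ℕ → Prop} {ζ : ℝ} (hζ : 0 ≤ ζ)
    (hM : ∀ s t, M s t → ∃ d ≤ t, ζ ≤ freq (Finset.range (d + 1)) fun i => P s (t - i)) :
    ζ * freq (S ×ˢ Finset.range n) (fun x => M x.1 x.2) ≤
      freq (S ×ˢ Finset.range n) fun x => P x.1 x.2 := by
  rw [freq_product, freq_product, Finset.mul_expect]
  exact Finset.expect_le_expect fun s _ => mul_freq_range_le (P := P s) (M := M s) hζ (hM s) n

lemma IsAdic.mul_freq_product_isHeavy_le (hcell : IsAdic b cell) {ζ : ℝ} (hζ : 0 ≤ ζ)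
    (Q : α → ℕ → Prop) :
    ζ * freq (S ×ˢ Finset.range n) (fun x => IsHeavy cell S ζ (Q · x.2) x.1) ≤
      freq (S ×ˢ Finset.range n) fun x => Q x.1 x.2 := by
  rw [freq_product_right, freq_product_right, Finset.mul_expect]
  exact Finset.expect_le_expect fun t _ => hcell.mul_freq_isHeavy_le hζ (Q · t)

lemma freq_range_sub_le (P : ℕ → Prop) (M : ℕ) :
    freq (Finset.range n) (fun t => M ≤ t ∧ P (t - M)) ≤ freq (Finset.range n) P := by
  classical
  rcases n.eq_zero_or_pos with rfl | hn
  · simp [freq]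
  refine le_of_mul_le_mul_left ?_ (Nat.cast_pos.2 (Finset.card_range n ▸ hn))
  rw [card_mul_freq, card_mul_freq]
  refine Nat.cast_le.2 (Finset.card_le_card_of_injOn (· - M) (fun t ht => ?_) ?_)
  · simp only [Finset.coe_filter, Finset.mem_range, Set.mem_ofPred_eq] at ht ⊢
    exact ⟨by omega, ht.2.2⟩
  · intro t ht t' ht' h
    simp only [Finset.coe_filter, Set.mem_ofPred_eq] at ht ht' h
    omega

lemma freq_product_range_sub_le (P : α → ℕ → Prop) (M : ℕ) :
    freq (S ×ˢ Finset.range n) (fun x => M ≤ x.2 ∧ P x.1 (x.2 - M)) ≤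
      freq (S ×ˢ Finset.range n) fun x => P x.1 x.2 := by
  rw [freq_product, freq_product]
  exact Finset.expect_le_expect fun s _ => freq_range_sub_le (P s) M

lemma freq_range_lt_le (m : ℕ) : n * freq (Finset.range n) (· < m) ≤ m := by
  rw [natCast_mul_freq_range, Nat.count_eq_card_filter_range]
  exact_mod_cast (Finset.card_le_card fun t ht =>
    Finset.mem_range.2 (Finset.mem_filter.1 ht).2).trans_eq (Finset.card_range m)

lemma freq_half_lt_freq_le (A : Finset α) (K : Finset ι) (P : ι → α → Prop) :
    freq A (fun a => 1 / 2 < freq K (P · a)) ≤ 2 * 𝔼 k ∈ K, freq A (P k) := by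
  have hswap : 𝔼 k ∈ K, freq A (P k) = 𝔼 a ∈ A, freq K (P · a) := Finset.expect_comm ..
  rw [hswap, Finset.mul_expect]
  refine Finset.expect_le_expect fun a _ => ?_
  split_ifs with h
  · linarith
  · linarith [freq_nonneg K (P · a)]

/-- None of the last `Β` times up to `t` satisfies `P`. -/
def Idle (P : ℕ → Prop) (Β t : ℕ) : Prop := ∀ i < Β, i ≤ t → ¬P (t - i)

lemma Idle.anti {P : ℕ → Prop} {Β Β' t : ℕ} (h : Β ≤ Β') (hi : Idle P Β' t) : Idle P Β t :=
  fun i hi' => hi i (hi'.trans_le h)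

lemma Idle.sub {P : ℕ → Prop} {Β M t i : ℕ} (h : Idle P (M + Β) (t - i)) (hi : i ≤ M)
    (hM : M ≤ t) : Idle P Β (t - M) := fun l hl hlt => by
  simpa only [show t - i - (M - i + l) = t - M - l by omega] using
    h (M - i + l) (by omega) (by omega)

lemma freq_idle_maximal_le (NC : α → ℕ → Prop) (M Β : ℕ) :
    freq (S ×ˢ Finset.range n) (fun x => ∃ d ≤ x.2, 1 / 12 ≤ freq (Finset.range (d + 1))
        fun i => Idle (NC x.1) Β (x.2 - i) ∧ ¬Idle (NC x.1) (M + Β) (x.2 - i)) ≤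
      12 * (freq (S ×ˢ Finset.range n) (fun x => Idle (NC x.1) Β x.2) -
        freq (S ×ˢ Finset.range n) fun x => Idle (NC x.1) (M + Β) x.2) := by
  rw [← freq_and_not fun _ _ h => h.anti (Nat.le_add_left Β M)]
  have h := mul_freq_product_range_le (S := S) (n := n) (ζ := 1 / 12) (by norm_num)
    (P := fun s t => Idle (NC s) Β t ∧ ¬Idle (NC s) (M + Β) t) (M := fun s t => ∃ d ≤ t,
      1 / 12 ≤ freq (Finset.range (d + 1)) fun i =>
        Idle (NC s) Β (t - i) ∧ ¬Idle (NC s) (M + Β) (t - i)) fun s t h => h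
  linarith

lemma freq_idle_sub_le (hA : (S ×ˢ Finset.range n).Nonempty) (NC : α → ℕ → Prop) (M : ℕ) {Β : ℕ}
    (hΒ : 1 ≤ Β) :
    freq (S ×ˢ Finset.range n) (fun x => M ≤ x.2 ∧ Idle (NC x.1) Β (x.2 - M)) ≤
      1 - freq (S ×ˢ Finset.range n) fun x => NC x.1 x.2 := by
  rw [← freq_not hA]
  exact (freq_product_range_sub_le (fun s => Idle (NC s) Β) M).trans
    (freq_mono fun x _ h => h 0 hΒ (Nat.zero_le _))

lemma freq_product_range_lt_le (S : Finset α) {M : ℕ} {p₀ : ℝ} (hn : 0 < n)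
    (hM : 40 * M ≤ p₀ * n) : freq (S ×ˢ Finset.range n) (fun x => x.2 < 10 * M) ≤ p₀ / 4 := by
  have hn : (0 : ℝ) < n := Nat.cast_pos.2 hn
  have h := freq_range_lt_le (n := n) (10 * M)
  push_cast at h
  have hle : freq (Finset.range n) (· < 10 * M) ≤ p₀ / 4 :=
    le_of_mul_le_mul_left (by linarith) hn
  simp only [freq_product]
  rcases S.eq_empty_or_nonempty with rfl | hS
  · rw [Finset.expect_empty]
    exact (freq_nonneg ..).trans hle
  · rwa [Finset.expect_const hS]

lemma IsAdic.freq_half_lt_freq_heavy_le (hcell : IsAdic b cell) {ζ₁ ζ₂ : ℝ} (hζ₁ : 0 ≤ ζ₁)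
    (hζ₂ : 0 ≤ ζ₂) (K : Finset ι) (P : ι → α → ℕ → Prop) :
    ζ₁ * ζ₂ * freq (S ×ˢ Finset.range n) (fun x => 1 / 2 < freq K fun k => ∃ d ≤ x.2,
        ζ₂ ≤ freq (Finset.range (d + 1)) fun i => IsHeavy cell S ζ₁ (P k · (x.2 - i)) x.1) ≤
      2 * 𝔼 k ∈ K, freq (S ×ˢ Finset.range n) fun x => P k x.1 x.2 := by
  refine (mul_le_mul_of_nonneg_left (freq_half_lt_freq_le ..) (by positivity)).trans ?_
  rw [mul_left_comm, Finset.mul_expect]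
  refine mul_le_mul_of_nonneg_left (Finset.expect_le_expect fun k _ => ?_) zero_le_two
  rw [mul_assoc]
  refine le_trans ?_ (hcell.mul_freq_product_isHeavy_le hζ₁ (P k))
  refine mul_le_mul_of_nonneg_left ?_ hζ₁
  exact mul_freq_product_range_le (P := fun s t => IsHeavy cell S ζ₁ (P k · t) s)
    (M := fun s t => ∃ d ≤ t, ζ₂ ≤ freq (Finset.range (d + 1)) fun i =>
      IsHeavy cell S ζ₁ (P k · (t - i)) s) hζ₂ fun s t h => h

lemma le_two_mul_card_of_freq_le_half {N : ℕ} {P : ℕ → Prop} [DecidablePred P]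
    (h : freq (Finset.range N) P ≤ 1 / 2) : N ≤ 2 * #{k ∈ Finset.range N | ¬P k} := by
  have hmul := mul_le_mul_of_nonneg_left h N.cast_nonneg
  rw [natCast_mul_freq_range, Nat.count_eq_card_filter_range] at hmul
  have hcard : #{k ∈ Finset.range N | P k} + #{k ∈ Finset.range N | ¬P k} = N := by
    rw [Finset.card_filter_add_card_filter_not, Finset.card_range]
  have : 2 * #{k ∈ Finset.range N | P k} ≤ N := by
    rw [← Nat.cast_le (α := ℝ)]
    push_cast
    linarith
  omega

/-- Four kinds of bad pairs are excluded: those near which idle stretches become frequent, those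
shortly after an idle stretch, the early ones, and those around which too many of the events `P k`
have a large maximal function. -/
theorem IsAdic.exists_good_scale (hcell : IsAdic b cell) (hA : (S ×ˢ Finset.range n).Nonempty)
    {N : ℕ} {p₀ : ℝ} (hp₀ : 0 < p₀) {NC : α → ℕ → Prop}
    (hNC : p₀ ≤ freq (S ×ˢ Finset.range n) fun x => NC x.1 x.2) {M Β : ℕ} (hΒ : 1 ≤ Β)
    (hidle : freq (S ×ˢ Finset.range n) (fun x => Idle (NC x.1) Β x.2) -
      freq (S ×ˢ Finset.range n) (fun x => Idle (NC x.1) (M + Β) x.2) ≤ p₀ / 50)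
    (hM : 40 * M ≤ p₀ * n) {ζ ζ₁ ζ₂ : ℝ} (hζ₁ : 0 < ζ₁) (hζ₂ : 0 < ζ₂)
    (hζ : 8 * ζ < p₀ * (ζ₁ * ζ₂)) {P : ℕ → α → ℕ → Prop}
    (hP : 𝔼 k ∈ Finset.range N, freq (S ×ˢ Finset.range n) (fun x => P k x.1 x.2) ≤ ζ) :
    ∃ s ∈ S, ∃ t < n, 10 * M ≤ t ∧
      (∃ K ⊆ Finset.range N, N ≤ 2 * #K ∧ ∀ k ∈ K, ∀ d ≤ t, freq (Finset.range (d + 1))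
        (fun i => IsHeavy cell S ζ₁ (P k · (t - i)) s) ≤ ζ₂) ∧
      ∀ d < M, freq (Finset.range (d + 1)) (fun i => Idle (NC s) Β (t - i)) ≤ 1 / 12 := by
  classical
  have hn : 0 < n := by
    rw [Finset.nonempty_product, Finset.nonempty_range_iff] at hA
    exact hA.2.bot_lt
  have h₁ := freq_idle_maximal_le (S := S) (n := n) NC M Β
  have h₂ := freq_idle_sub_le hA NC M hΒ
  have h₃ := freq_product_range_lt_le S hn hM
  have h₄ := lt_of_mul_lt_mul_left ((hcell.freq_half_lt_freq_heavy_le (S := S) (n := n) hζ₁.le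
    hζ₂.le (Finset.range N) P).trans_lt (show _ < ζ₁ * ζ₂ * (p₀ / 4) by linarith)) (by positivity)
  obtain ⟨⟨s, t⟩, hst, hgood⟩ := exists_not_of_freq_lt_one hA <| calc
    _ ≤ _ := freq_or_le.trans (add_le_add (freq_or_le.trans (add_le_add h₁ h₂))
      (freq_or_le.trans (add_le_add h₃ h₄.le)))
    _ < 1 := by linarith
  simp only [not_or, not_exists, not_and, not_le, not_lt] at hgood
  obtain ⟨⟨hmax, hsub⟩, hearly, hheavy⟩ := hgood
  rw [Finset.mem_product, Finset.mem_range] at hst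
  refine ⟨s, hst.1, t, hst.2, hearly, ?_, fun d hd => ?_⟩
  · refine ⟨{k ∈ Finset.range N | ∀ d ≤ t, freq (Finset.range (d + 1)) (fun i =>
      IsHeavy cell S ζ₁ (P k · (t - i)) s) < ζ₂}, Finset.filter_subset .., ?_,
      fun k hk d hd => ((Finset.mem_filter.1 hk).2 d hd).le⟩
    simpa only [not_exists, not_and, not_le] using le_two_mul_card_of_freq_le_half hheavy
  · refine (freq_mono fun i hi hidle => ?_).trans (hmax d (by omega)).le
    rw [Finset.mem_range] at hi
    exact ⟨hidle, fun h => hsub (by omega) (h.sub (by omega) (by omega))⟩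

lemma card_filter_exists_lt_le (P : ℕ → Prop) [DecidablePred P] (Β a c : ℕ) :
    #{D ∈ Finset.Icc a c | ∃ i < Β, P (D + i)} ≤ Β * #{D ∈ Finset.Icc a (c + Β) | P D} := by
  refine (Finset.card_le_card (t := (Finset.range Β).biUnion
    fun i => {D ∈ Finset.Icc a c | P (D + i)}) fun D hD => ?_).trans
    ((Finset.card_biUnion_le_card_mul _ _ #{D ∈ Finset.Icc a (c + Β) | P D}
      fun i hi => ?_).trans_eq (by rw [Finset.card_range]))
  · simp only [Finset.mem_filter, Finset.mem_biUnion, Finset.mem_range] at hD ⊢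
    tauto
  · refine Finset.card_le_card_of_injOn (· + i) (fun D hD => ?_) (add_left_injective i).injOn
    simp only [Finset.coe_filter, Finset.mem_Icc, Finset.mem_range, Set.mem_ofPred_eq] at hD hi ⊢
    exact ⟨by omega, hD.2⟩

lemma card_le_of_forall_imp_bad {NC bad : ℕ → Prop} [DecidablePred NC] {A : Finset ℕ} {D₀ : ℕ}
    {η : ℝ} (hbad : freq (Finset.range (D₀ + 1)) bad ≤ η) {β : ℕ → ℕ} (hβ : Set.InjOn β A)
    (hβ_le : ∀ D ∈ A, β D ≤ D₀) (h : ∀ D ∈ A, NC D → bad (β D)) :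
    (#{D ∈ A | NC D} : ℝ) ≤ (D₀ + 1) * η := by
  classical
  have hmaps : #{D ∈ A | NC D} ≤ #{i ∈ Finset.range (D₀ + 1) | bad i} := by
    refine Finset.card_le_card_of_injOn β (fun D hD => ?_)
      (hβ.mono (Finset.coe_subset.2 (Finset.filter_subset ..)))
    obtain ⟨hD, hNC⟩ := Finset.mem_filter.1 hD
    exact Finset.mem_filter.2 ⟨Finset.mem_range_succ_iff.2 (hβ_le D hD), h D hD hNC⟩
  refine (Nat.cast_le.2 hmaps).trans ?_
  rw [← Nat.count_eq_card_filter_range, ← natCast_mul_freq_range, Nat.cast_succ]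
  gcongr

lemma le_card_filter_exists_lt {NC : ℕ → Prop} [DecidablePred NC] {D₀ m Β : ℕ} {η : ℝ}
    (hidle : freq (Finset.range (D₀ + m + 1)) (fun D => ∀ i < Β, ¬NC (D + i)) ≤ η) :
    (m : ℝ) + 1 ≤ #{D ∈ Finset.Icc D₀ (D₀ + m) | ∃ i < Β, NC (D + i)} + (D₀ + m + 1) * η := by
  have hcard := Finset.card_filter_add_card_filter_not (s := Finset.Icc D₀ (D₀ + m))
    fun D => ∃ i < Β, NC (D + i)
  rw [Nat.card_Icc, show D₀ + m + 1 - D₀ = m + 1 by omega] at hcard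
  have hsub : #{D ∈ Finset.Icc D₀ (D₀ + m) | ¬∃ i < Β, NC (D + i)} ≤
      #{D ∈ Finset.range (D₀ + m + 1) | ∀ i < Β, ¬NC (D + i)} := by
    refine Finset.card_le_card fun D hD => ?_
    simp only [Finset.mem_filter, Finset.mem_Icc, Finset.mem_range] at hD ⊢
    push Not at hD
    exact ⟨by omega, hD.2⟩
  have hfreq := mul_le_mul_of_nonneg_left hidle (Nat.cast_nonneg (D₀ + m + 1))
  rw [natCast_mul_freq_range, Nat.count_eq_card_filter_range] at hfreq
  have hcard' : (m : ℝ) + 1 ≤ #{D ∈ Finset.Icc D₀ (D₀ + m) | ∃ i < Β, NC (D + i)} +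
      #{D ∈ Finset.range (D₀ + m + 1) | ∀ i < Β, ¬NC (D + i)} := by
    exact_mod_cast hcard.symm.le.trans (Nat.add_le_add_left hsub _)
  push_cast at hfreq
  linarith

lemma exists_level {NC bad : ℕ → Prop} {D₀ Β : ℕ} (hΒ : 1 ≤ Β)
    (hidle : freq (Finset.range (D₀ + D₀ / 4 + 1)) (fun D => ∀ i < Β, ¬NC (D + i)) ≤ 1 / 12)
    (hbad : freq (Finset.range (D₀ + 1)) bad ≤ 1 / (50 * Β)) {β : ℕ → ℕ}
    (hβ : Set.InjOn β (Finset.Icc D₀ (D₀ + D₀ / 4 + Β)))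
    (hβ_le : ∀ D ∈ Finset.Icc D₀ (D₀ + D₀ / 4 + Β), β D ≤ D₀) :
    ∃ D ∈ Finset.Icc D₀ (D₀ + D₀ / 4 + Β), NC D ∧ ¬bad (β D) := by
  classical
  by_contra! hcon
  have h𝒟 := card_le_of_forall_imp_bad hbad hβ hβ_le hcon
  have h𝓔 := le_card_filter_exists_lt hidle
  have h𝓔𝒟 := card_filter_exists_lt_le NC Β D₀ (D₀ + D₀ / 4)
  set 𝒟 : Finset ℕ := {D ∈ Finset.Icc D₀ (D₀ + D₀ / 4 + Β) | NC D}
  set 𝓔 : Finset ℕ := {D ∈ Finset.Icc D₀ (D₀ + D₀ / 4) | ∃ i < Β, NC (D + i)}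
  have hΒ𝒟 : (Β : ℝ) * #𝒟 ≤ (D₀ + 1) / 50 := by
    have : (0 : ℝ) < Β := by exact_mod_cast hΒ
    calc (Β : ℝ) * #𝒟 ≤ Β * ((D₀ + 1) * (1 / (50 * Β))) := by gcongr
      _ = (D₀ + 1) / 50 := by field_simp
  have h𝓔𝒟 : (#𝓔 : ℝ) ≤ Β * #𝒟 := by exact_mod_cast h𝓔𝒟
  have hfloor : (D₀ : ℝ) ≤ 4 * (D₀ / 4 : ℕ) + 3 := by exact_mod_cast (by omega)
  linarith [(Nat.cast_nonneg (D₀ / 4) : (0 : ℝ) ≤ (D₀ / 4 : ℕ))]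

lemma exists_stable (𝓤 : Ultrafilter ℕ) {D : ℕ → ℕ → ℝ} (hnonneg : ∀ x j, 0 ≤ D x j)
    (hanti : ∀ j, Antitone (D · j)) (hbdd : ∃ C, ∀ x j, D x j ≤ C) {υ : ℝ} (hυ : 0 < υ) :
    ∃ Β ≥ 1, ∀ X, ∀ᶠ j in (𝓤 : Filter ℕ), D Β j - D X j ≤ υ := by
  obtain ⟨C, hC⟩ := hbdd
  set Z : Set ℝ := {z | ∃ x, ∀ᶠ j in (𝓤 : Filter ℕ), D x j ≤ z}
  have hZ : Z.Nonempty := ⟨C, 0, .of_forall (hC 0)⟩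
  have hZb : BddBelow Z := by
    refine ⟨0, ?_⟩
    rintro z ⟨x, hx⟩
    obtain ⟨j, hj⟩ := hx.exists
    exact (hnonneg x j).trans hj
  obtain ⟨z, ⟨x, hx⟩, hz⟩ := exists_lt_of_csInf_lt hZ (lt_add_of_pos_right _ (half_pos hυ))
  refine ⟨x + 1, by omega, fun X => ?_⟩
  have hX : ∀ᶠ j in (𝓤 : Filter ℕ), sInf Z - υ / 2 < D X j := by
    by_contra hcon
    rw [← Ultrafilter.eventually_not] at hcon
    have hmem : sInf Z - υ / 2 ∈ Z := ⟨X, hcon.mono fun j hj => not_lt.1 hj⟩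
    linarith [csInf_le hZb hmem]
  filter_upwards [hx, hX] with j hxj hXj
  linarith [hanti j x.le_succ]

end Selection

/-! ### Conjugating a near return -/

section Conjugation

lemma lowerShear_zero : lowerShear 0 = 1 := by
  ext i j
  fin_cases i <;> fin_cases j <;> simp [coe_lowerShear]

lemma isNear_lowerShear {h : SL(2, ℝ)} {r R K δ : ℝ} (h00 : |h 0 0 - 1| ≤ r) (h01 : |h 0 1| ≤ r)
    (h11 : |h 1 1 - 1| ≤ r) (hK : |h 1 0| ≤ K) (hδ : |δ| ≤ R) {k : ℕ} {Γ Γ' : SubgroupSeq}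
    (hmap : ∀ j ≤ k, Γ' j = h • Γ j) :
    IsNear (r * (1 + K) * (1 + R) ^ 2) k (lowerShear (δ - h 1 0) • Γ) (lowerShear δ • Γ') := by
  refine ⟨_, (nearOne_mul_lowerShear h00 h01 h11 hK).conj_lowerShear hδ, fun j hj => ?_⟩
  have hone : lowerShear (h 1 0) * (lowerShear (-δ) * lowerShear (δ - h 1 0)) = 1 := by
    rw [← lowerShear_add, ← lowerShear_add, show h 1 0 + (-δ + (δ - h 1 0)) = 0 by ring,
      lowerShear_zero]
  simp only [Pi.smul_apply, hmap j hj, smul_smul, mul_assoc, hone, mul_one]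

lemma dilation_inv_mul_lowerShear_mul_dilation (c : ℕ) [NeZero c] (v : ℝ) :
    (dilation c)⁻¹ * lowerShear v * dilation c = lowerShear (v * c ^ 2) := by
  have hc : (c : ℝ) ≠ 0 := NeZero.ne _
  rw [mul_assoc, inv_mul_eq_iff_eq_mul]
  ext i j
  fin_cases i <;> fin_cases j <;>
    (simp [mul_apply, coe_lowerShear, coe_dilation]; try field_simp)

variable (c : ℕ) [NeZero c] (v : ℝ) (h : SL(2, ℝ))

/-- The element of `SL(2, ℝ)` moving the base point of the flow by `v` and then back in time. -/
noncomputable def slide : SL(2, ℝ) := dilation c * lowerShear v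

lemma slide_mul_mul_inv_apply :
    (slide c v * h * (slide c v)⁻¹) 0 0 = h 0 0 + h 0 1 * v ∧
    (slide c v * h * (slide c v)⁻¹) 0 1 = h 0 1 * c ^ 2 ∧
    (slide c v * h * (slide c v)⁻¹) 1 0 =
      (h 1 0 + (h 1 1 - h 0 0) * v - h 0 1 * v ^ 2) / c ^ 2 ∧
    (slide c v * h * (slide c v)⁻¹) 1 1 = h 1 1 - h 0 1 * v := by
  have hc : (c : ℝ) ≠ 0 := NeZero.ne _
  refine ⟨?_, ?_, ?_, ?_⟩ <;>
    simp [slide, mul_apply, coe_lowerShear, coe_dilation, Matrix.SpecialLinearGroup.coe_inv,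
      Matrix.adjugate_fin_two] <;>
    field_simp <;> ring

end Conjugation

/-! ### The flow -/

section Flow

variable (B : ℕ) [NeZero B]

/-- The renormalization at scale `B ^ (-2 t)` around the point `s`: the vertical shear by `s`
followed by the diagonal contraction of the line `x 1 = 0`. -/
noncomputable def flow (s : ℝ) (t : ℕ) : SL(2, ℝ) := (dilation (B ^ t))⁻¹ * lowerShear s

lemma flow_eq_slide_mul_flow (s s' : ℝ) (t i : ℕ) :
    flow B s' t = slide (B ^ i) ((s' - s) * ((B ^ 2 : ℕ) : ℝ) ^ (t + i)) * flow B s (t + i) := by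
  have hshear := dilation_inv_mul_lowerShear_mul_dilation (B ^ (t + i)) (s' - s)
  have hscale : (s' - s) * ((B ^ 2 : ℕ) : ℝ) ^ (t + i) =
      (s' - s) * ((B ^ (t + i) : ℕ) : ℝ) ^ 2 := by push_cast; ring
  have hdil : dilation (B ^ (t + i)) = dilation (B ^ t) * dilation (B ^ i) := by
    simp only [pow_add, dilation_mul]
  have hs : lowerShear s' = lowerShear (s' - s) * lowerShear s := by
    rw [← lowerShear_add, sub_add_cancel]
  rw [hscale, slide, ← hshear, flow, flow, hdil, hs]
  group

end Flow

/-! ### Visible scales -/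

section Quadratic

variable {c A e η γ : ℝ}

lemma abs_add_mul_add_le {w w' : ℝ} (hγ : γ ≤ w' - w) (hw : |c + A * w + e * w ^ 2| ≤ η)
    (hw' : |c + A * w' + e * w' ^ 2| ≤ η) : |A + e * (w + w')| * γ ≤ 2 * η :=
  calc |A + e * (w + w')| * γ
      ≤ |A + e * (w + w')| * |w' - w| := by gcongr; exact hγ.trans (le_abs_self _)
    _ = |(c + A * w' + e * w' ^ 2) - (c + A * w + e * w ^ 2)| := by rw [← abs_mul]; ring_nf
    _ ≤ |c + A * w' + e * w' ^ 2| + |c + A * w + e * w ^ 2| := abs_sub _ _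
    _ ≤ 2 * η := by linarith

lemma max_abs_mul_sq_le {x y z : ℝ} (hγ : 0 < γ) (hγ1 : γ ≤ 1) (hxy : γ ≤ y - x)
    (hyz : γ ≤ z - y) (hx1 : |x| ≤ 1) (hy1 : |y| ≤ 1)
    (hx : |c + A * x + e * x ^ 2| ≤ η) (hy : |c + A * y + e * y ^ 2| ≤ η)
    (hz : |c + A * z + e * z ^ 2| ≤ η) : max |A| |e| * γ ^ 2 ≤ 6 * η := by
  have hη : 0 ≤ η := (abs_nonneg _).trans hx
  have h1 := abs_add_mul_add_le hxy hx hy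
  have h2 := abs_add_mul_add_le hyz hy hz
  have he : |e| * γ ^ 2 ≤ 2 * η := by
    have hdiff : |e| * (z - x) ≤ |A + e * (y + z)| + |A + e * (x + y)| := by
      rw [← abs_of_nonneg (by linarith : (0 : ℝ) ≤ z - x), ← abs_mul]
      exact (congrArg _ (by ring)).trans_le (abs_sub (A + e * (y + z)) (A + e * (x + y)))
    nlinarith [mul_le_mul_of_nonneg_right hdiff hγ.le,
      mul_nonneg (mul_nonneg (abs_nonneg e) hγ.le) (by linarith : 0 ≤ z - x - 2 * γ)]
  have hA : |A| ≤ |A + e * (x + y)| + |e| * 2 :=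
    calc |A| = |(A + e * (x + y)) - e * (x + y)| := by ring_nf
      _ ≤ |A + e * (x + y)| + |e| * |x + y| := by rw [← abs_mul]; exact abs_sub _ _
      _ ≤ _ := by gcongr; linarith [abs_add_le x y]
  rw [max_mul_of_nonneg _ _ (sq_nonneg γ)]
  refine max_le ?_ (by linarith)
  have hγ2 : |A + e * (x + y)| * γ ^ 2 ≤ |A + e * (x + y)| * γ := by
    gcongr
    nlinarith
  linarith [mul_le_mul_of_nonneg_right hA (sq_nonneg γ)]

end Quadratic

section Scales

/-- The size, after zooming in by `b ^ D`, of the non-constant coefficients `x`, `y` of a quadratic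
polynomial. -/
noncomputable def visibleSize (b x y : ℝ) (D : ℕ) : ℝ := max (x * b ^ D) (y * b ^ (2 * D))

variable {b x y : ℝ} (hb : 1 < b) (hx : 0 ≤ x) (hy : 0 ≤ y)

include hb hx hy

lemma mul_visibleSize_le {D D' : ℕ} (h : D < D') :
    b * visibleSize b x y D ≤ visibleSize b x y D' := by
  rw [visibleSize, mul_max_of_nonneg _ _ (by linarith)]
  refine max_le_max ?_ ?_
  · rw [mul_left_comm, ← pow_succ']
    gcongr
    exacts [hb.le, h]
  · rw [mul_left_comm, ← pow_succ']
    gcongr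
    exacts [hb.le, by omega]

omit hy in
lemma visibleSize_add_le (E i : ℕ) :
    visibleSize b x y (E + i) ≤ visibleSize b x y E * b ^ (2 * i) := by
  rw [visibleSize, visibleSize, max_mul_of_nonneg _ _ (by positivity)]
  refine max_le_max ?_ (le_of_eq (by ring))
  rw [mul_assoc, ← pow_add]
  gcongr
  exacts [hb.le, by omega]

omit hx in
lemma max_mul_pow_le_visibleSize (D : ℕ) : max x y * b ^ D ≤ visibleSize b x y D := by
  rw [visibleSize, max_mul_of_nonneg _ _ (by positivity)]
  gcongr
  exacts [hb.le, by omega]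

omit hy in
lemma visibleSize_le_max_mul_pow (D : ℕ) : visibleSize b x y D ≤ max x y * b ^ (2 * D) := by
  rw [visibleSize, max_mul_of_nonneg _ _ (by positivity)]
  gcongr
  exacts [hb.le, by omega]

lemma strictMonoOn_of_visibleSize_mem {s : Set ℕ} {β : ℕ → ℕ}
    (hβ : ∀ D ∈ s, b ^ β D ≤ visibleSize b x y D ∧ visibleSize b x y D < b ^ (β D + 1)) :
    StrictMonoOn β s := by
  intro D hD D' hD' h
  have hlt : b ^ (β D + 1) < b ^ (β D' + 1) :=
    calc b ^ (β D + 1) = b * b ^ β D := pow_succ' _ _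
      _ ≤ b * visibleSize b x y D := by gcongr; exact (hβ D hD).1
      _ ≤ visibleSize b x y D' := mul_visibleSize_le hb hx hy h
      _ < _ := (hβ D' hD').2
  have := (pow_lt_pow_iff_right₀ hb).1 hlt
  omega

lemma exists_visibleSize_lt_one_le {l₀ T : ℕ} (hsmall : max x y * b ^ (2 * l₀) < 1)
    (hbig : 1 ≤ max x y * b ^ T) :
    ∃ E, l₀ ≤ E ∧ E < T ∧ visibleSize b x y E < 1 ∧ 1 ≤ visibleSize b x y (E + 1) := by
  have hl₀ : visibleSize b x y l₀ < 1 := (visibleSize_le_max_mul_pow hb hx l₀).trans_lt hsmall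
  have hT : 1 ≤ visibleSize b x y T := hbig.trans (max_mul_pow_le_visibleSize hb hy T)
  have hl₀T : l₀ ≤ T := by
    by_contra! h
    have := mul_visibleSize_le hb hx hy h
    nlinarith
  by_contra! hcon
  have hlt : ∀ E, l₀ ≤ E → E ≤ T → visibleSize b x y E < 1 := fun E hE =>
    Nat.le_induction (fun _ => hl₀) (fun n hn ih h => hcon n hn h (ih (by omega))) E hE
  exact (hlt T hl₀T le_rfl).not_ge hT

lemma exists_scales_of_small {Β l T : ℕ} (hsmall : max x y * b ^ (2 * (2 * l + 4 * Β + 6)) < 1)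
    (hbig : 1 ≤ max x y * b ^ T) :
    ∃ D₀ ≤ T, ∃ β : ℕ → ℕ, Set.InjOn β (Finset.Icc D₀ (D₀ + D₀ / 4 + Β)) ∧
      ∀ D ∈ Finset.Icc D₀ (D₀ + D₀ / 4 + Β), β D ≤ D₀ ∧
        b ^ β D ≤ visibleSize b x y D ∧ visibleSize b x y D < b ^ (β D + 1) ∧
        y * b ^ (D + l) ≤ 1 ∧ y * b ^ (β D + l) ≤ 1 := by
  obtain ⟨E, hlE, hET, hE, hE1⟩ := exists_visibleSize_lt_one_le hb hx hy hsmall hbig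
  have hyE : y * b ^ (2 * E) ≤ 1 := (le_max_right _ _).trans hE.le
  have hy_le : ∀ i ≤ 2 * E, y * b ^ i ≤ 1 := fun i hi =>
    (mul_le_mul_of_nonneg_left (pow_le_pow_right₀ hb.le hi) hy).trans hyE
  have hone : ∀ D, E < D → 1 ≤ visibleSize b x y D := fun D hD => by
    obtain rfl | hlt := (Nat.succ_le_of_lt hD).eq_or_lt
    · exact hE1
    · nlinarith [mul_visibleSize_le hb hx hy hlt]
  choose! β hβ using fun D hD => exists_nat_pow_near (hone D hD) hb
  refine ⟨E + 1, hET, β, (strictMonoOn_of_visibleSize_mem hb hx hy fun D hD => ?_).injOn,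
    fun D hD => ?_⟩
  · exact hβ D (by simp only [Finset.coe_Icc, Set.mem_Icc] at hD; omega)
  · rw [Finset.mem_Icc] at hD
    have hED : E < D := by omega
    obtain ⟨i, rfl⟩ := Nat.exists_eq_add_of_lt hED
    have hβlt : b ^ β (E + i + 1) < b ^ (2 * (i + 1)) :=
      calc b ^ β (E + i + 1) ≤ visibleSize b x y (E + i + 1) := (hβ _ hED).1
        _ ≤ visibleSize b x y E * b ^ (2 * (i + 1)) := visibleSize_add_le hb hx E (i + 1)
        _ < 1 * b ^ (2 * (i + 1)) := by gcongr
        _ = _ := one_mul _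
    have hβi := (pow_lt_pow_iff_right₀ hb).1 hβlt
    exact ⟨by omega, (hβ _ hED).1, (hβ _ hED).2, hy_le _ (by omega), hy_le _ (by omega)⟩

omit hx hy in
lemma exists_scales {ρ : ℝ} (hρ : 0 < ρ) (Β : ℕ) :
    ∃ r > 0, ∀ τ > 0, ∃ T : ℕ, ∀ x y : ℝ, 0 ≤ x → 0 ≤ y → x ≤ r → y ≤ r → τ ≤ max x y →
      ∃ D₀ ≤ T, ∃ β : ℕ → ℕ, Set.InjOn β (Finset.Icc D₀ (D₀ + D₀ / 4 + Β)) ∧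
        ∀ D ∈ Finset.Icc D₀ (D₀ + D₀ / 4 + Β), β D ≤ D₀ ∧
          b ^ β D ≤ visibleSize b x y D ∧ visibleSize b x y D < b ^ (β D + 1) ∧
          y * b ^ D ≤ ρ ∧ y * b ^ β D ≤ ρ := by
  obtain ⟨l, hl⟩ := pow_unbounded_of_one_lt ρ⁻¹ hb
  have hle : ∀ (y : ℝ) (i : ℕ), y * b ^ (i + l) ≤ 1 → y * b ^ i ≤ ρ := fun y i h => by
    rw [pow_add, ← mul_assoc] at h
    calc y * b ^ i ≤ (b ^ l)⁻¹ := by rw [← one_div]; exact (le_div_iff₀ (by positivity)).2 h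
      _ ≤ ρ := inv_le_of_inv_le₀ hρ hl.le
  set l₀ := 2 * l + 4 * Β + 6
  refine ⟨(b ^ (2 * l₀))⁻¹ / 2, by positivity, fun τ hτ => ?_⟩
  obtain ⟨T, hT⟩ := pow_unbounded_of_one_lt τ⁻¹ hb
  refine ⟨T, fun x y hx hy hxr hyr hτxy => ?_⟩
  have hsmall : max x y * b ^ (2 * l₀) < 1 :=
    calc max x y * b ^ (2 * l₀) ≤ (b ^ (2 * l₀))⁻¹ / 2 * b ^ (2 * l₀) := by
          gcongr; exact max_le hxr hyr
      _ = 1 / 2 := by field_simp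
      _ < 1 := by norm_num
  have hbig : 1 ≤ max x y * b ^ T :=
    calc 1 = τ * τ⁻¹ := (mul_inv_cancel₀ hτ.ne').symm
      _ ≤ max x y * b ^ T := by gcongr
  obtain ⟨D₀, hD₀, β, hinj, hβ⟩ := exists_scales_of_small hb hx hy hsmall hbig
  exact ⟨D₀, hD₀, β, hinj, fun D hD => ⟨(hβ D hD).1, (hβ D hD).2.1, (hβ D hD).2.2.1,
    hle _ _ (hβ D hD).2.2.2.1, hle _ _ (hβ D hD).2.2.2.2⟩⟩

end Scales

section Return

variable {p : ℕ}

lemma IsFat.mono {ε Θ Θ' : ℝ} {Λ : AddSubgroup (Fin 2 → ℝ)} (hF : IsFat ε Θ' Λ) (h : Θ ≤ Θ') :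
    IsFat ε Θ Λ := fun x hx hx0 => (hF x hx hx0).imp_right h.trans

lemma IsLatticeSeq.shift {Λ : SubgroupSeq} (hΛ : IsLatticeSeq p Λ) (n : ℕ) :
    IsLatticeSeq p (shift n Λ) where
  isUnimodular k := hΛ.isUnimodular (n + k)
  down hx := hΛ.down (n := n + _) (by simpa only [MixedLittlewood.shift, add_assoc] using hx)
  up hx := by simpa only [MixedLittlewood.shift, add_assoc] using hΛ.up hx
  injective := hΛ.injective.comp (add_right_injective n)

lemma exists_nondegenerate_return (hp : p ≠ 0) {ε r : ℝ} (hε : 0 < ε) (hr : 0 < r) (k₀ : ℕ) :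
    ∃ N > 0, ∃ Θ : ℝ, ∃ τ > 0, ∀ Λ : SubgroupSeq, IsLatticeSeq p Λ → ∀ K ⊆ Finset.range N,
      N ≤ 2 * K.card → (∀ k ∈ K, IsFat ε Θ (Λ k)) →
      ∃ k ∈ K, ∃ k' ∈ K, ∃ h : SL(2, ℝ), NearOne r h ∧ τ ≤ max |h 1 1 - h 0 0| |h 0 1| ∧
        ∀ j ≤ k₀, Λ (k' + j) = h • Λ (k + j) := by
  set C := 1 + 1 / ε
  have hC : 0 < C := by positivity
  obtain ⟨N, hN⟩ := exists_near_return hp hC (lt_min hr one_pos) k₀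
  set P : ℝ := (p : ℝ) ^ (2 * N + 1)
  have hp1 : (1 : ℝ) ≤ p := by exact_mod_cast Nat.one_le_iff_ne_zero.2 hp
  refine ⟨2 * N + 1, by omega, 2 * C * P + 1, ε / (8 * C ^ 2 * P ^ 2), by positivity,
    fun Λ hΛ K hK hKN hF => ?_⟩
  have hbasis (k) (hk : k ∈ K) :=
    (hF k hk).exists_basis (hΛ.isUnimodular k) hε (by simp only [lt_add_iff_pos_left]; positivity)
  obtain ⟨k, hk, k', hk', hlt, h, hh, hmap⟩ := hN Λ hΛ K (by omega) hbasis
  refine ⟨k, hk, k', hk', h, hh.mono (min_le_left _ _), ?_, hmap⟩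
  obtain ⟨g, hg, hgC⟩ := hbasis k hk
  obtain ⟨d, rfl⟩ := Nat.exists_eq_add_of_lt hlt
  have hd : d + 1 ≤ 2 * N + 1 := by have := Finset.mem_range.1 (hK hk'); omega
  have hpP : (p : ℝ) ^ (d + 1) ≤ P := pow_le_pow_right₀ hp1 hd
  have hle := hΛ.le_abs_of_smul_eq hp d.succ_pos
    (by nlinarith : 2 * C * (p : ℝ) ^ (d + 1) < 2 * C * P + 1) (hF k hk) hg hgC
    (hh.mono (min_le_right _ _)) (hmap 0 (Nat.zero_le _))
  rw [div_le_iff₀ (by positivity)]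
  calc ε ≤ 4 * C ^ 2 * (p : ℝ) ^ (2 * (d + 1)) * (|h 1 1 - h 0 0| + |h 0 1|) := hle
    _ ≤ 4 * C ^ 2 * P ^ 2 * (2 * max |h 1 1 - h 0 0| |h 0 1|) := by
      rw [pow_mul', two_mul (max _ _)]
      gcongr
      exacts [le_max_left _ _, le_max_right _ _]
    _ = max |h 1 1 - h 0 0| |h 0 1| * (8 * C ^ 2 * P ^ 2) := by ring

end Return

section FloorCell

variable {b L : ℕ} {s s' : ℝ}

/-- The index of the `b`-adic interval of length `b ^ (-L)` containing `s`. -/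
noncomputable def floorCell (b : ℕ) (L : ℕ) (s : ℝ) : ℤ := ⌊(b : ℝ) ^ L * s⌋

lemma isAdic_floorCell (hb : 0 < b) : IsAdic b (floorCell b) := fun L s => by
  rw [floorCell, floorCell, pow_succ', mul_assoc, Int.natCast_mul_floor_div_cancel hb.ne']

lemma abs_sub_mul_pow_le_one_of_floorCell_eq (h : floorCell b L s' = floorCell b L s) :
    |(s' - s) * (b : ℝ) ^ L| ≤ 1 := by
  have := Int.abs_sub_lt_one_of_floor_eq_floor h
  rw [← mul_sub, mul_comm] at this
  exact this.le

lemma one_le_sub_mul_pow_of_floorCell_add_two_le (h : floorCell b L s + 2 ≤ floorCell b L s') :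
    1 ≤ (s' - s) * (b : ℝ) ^ L := by
  have h1 := Int.floor_le ((b : ℝ) ^ L * s')
  have h2 := Int.lt_floor_add_one ((b : ℝ) ^ L * s)
  have h3 : (floorCell b L s : ℝ) + 2 ≤ floorCell b L s' := by exact_mod_cast h
  rw [floorCell, floorCell] at h3
  linarith

lemma exists_of_freq_lt {α : Type*} {A : Finset α} {P Q : α → Prop} (h : freq A P < freq A Q) :
    ∃ a ∈ A, Q a ∧ ¬P a := by
  by_contra! hcon
  exact h.not_ge (freq_mono hcon)

variable {S : Finset ℝ} {c : ℝ} {bad : ℝ → Prop}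

lemma Spread.exists_lt_abs_quadratic (hb : 0 < b) (h : Spread (floorCell b) S c s L)
    (hbad : freq (block (floorCell b) S L s) bad < c) {x A e η : ℝ}
    (hη : 6 * η * b ^ 2 < max |A| |e|) :
    ∃ s' ∈ block (floorCell b) S L s, ¬bad s' ∧
      η < |x + A * ((s' - s) * b ^ L) + e * ((s' - s) * b ^ L) ^ 2| := by
  obtain ⟨w₁, w₂, w₃, h₁₂, h₂₃, hw⟩ := h
  by_contra! hcon
  have hchild : ∀ w ∈ ({w₁, w₂, w₃} : Finset ℤ), ∃ s', floorCell b (L + 1) s' = w ∧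
      |(s' - s) * (b : ℝ) ^ L| ≤ 1 ∧
      |x + A * ((s' - s) * b ^ L) + e * ((s' - s) * b ^ L) ^ 2| ≤ η := fun w hwm => by
    obtain ⟨s', hs', hcell, hs'bad⟩ := exists_of_freq_lt (hbad.trans_le (hw w hwm))
    exact ⟨s', hcell, abs_sub_mul_pow_le_one_of_floorCell_eq (mem_block.1 hs').2,
      hcon s' hs' hs'bad⟩
  have hb' : (1 : ℝ) ≤ b := by exact_mod_cast hb
  have hgap {s₁ s₂ : ℝ} (h : floorCell b (L + 1) s₁ + 2 ≤ floorCell b (L + 1) s₂) :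
      1 / (b : ℝ) ≤ (s₂ - s) * b ^ L - (s₁ - s) * b ^ L := by
    have := one_le_sub_mul_pow_of_floorCell_add_two_le h
    rw [div_le_iff₀ (by positivity)]
    linarith [this.trans_eq (by ring : _ = ((s₂ - s) * b ^ L - (s₁ - s) * b ^ L) * (b : ℝ))]
  obtain ⟨s₁, rfl, hs₁, hq₁⟩ := hchild w₁ (by simp)
  obtain ⟨s₂, rfl, hs₂, hq₂⟩ := hchild w₂ (by simp)
  obtain ⟨s₃, rfl, -, hq₃⟩ := hchild w₃ (by simp)
  have hmax := max_abs_mul_sq_le (by positivity) (div_le_one_of_le₀ hb' (by positivity))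
    (hgap h₁₂) (hgap h₂₃) hs₁ hs₂ hq₁ hq₂ hq₃
  rw [one_div, inv_pow, mul_inv_le_iff₀ (by positivity)] at hmax
  exact hη.not_ge hmax

lemma Spread.exists_shear (hb : 0 < b) (h : Spread (floorCell b) S c s L)
    (hbad : freq (block (floorCell b) S L s) bad < c) {x A e : ℝ} {D β : ℕ} (hx : |x| ≤ 1)
    (hβ : (b : ℝ) ^ β ≤ visibleSize b |A| |e| D) (hβ' : visibleSize b |A| |e| D < b ^ (β + 1)) :
    ∃ s' ∈ S, ¬bad s' ∧ ∃ v, v = (s' - s) * b ^ (L + D) ∧ |v| ≤ b ^ D ∧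
      1 / (8 * b ^ 2) ≤ |(x + A * v - e * v ^ 2) / b ^ β| ∧
      |(x + A * v - e * v ^ 2) / b ^ β| ≤ 3 * b := by
  have hb' : (1 : ℝ) ≤ b := by exact_mod_cast hb
  have hpow : 0 < (b : ℝ) ^ β := by positivity
  have hpow1 : 1 ≤ (b : ℝ) ^ β := one_le_pow₀ hb'
  set Z := visibleSize b |A| |e| D with hZ
  have hZpos : 0 < Z := hpow.trans_le hβ
  have hZmax : Z = max |A * b ^ D| |-e * b ^ (2 * D)| := by
    rw [hZ, visibleSize, abs_mul, abs_mul, abs_neg, abs_pow, abs_pow, Nat.abs_cast]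
  obtain ⟨s', hs', hs'bad, hlt⟩ := h.exists_lt_abs_quadratic hb hbad (x := x) (A := A * b ^ D)
    (e := -e * b ^ (2 * D)) (η := Z / (8 * b ^ 2)) (by rw [← hZmax]; field_simp; linarith)
  rw [mem_block] at hs'
  have hw := abs_sub_mul_pow_le_one_of_floorCell_eq hs'.2
  have hv : |(s' - s) * (b : ℝ) ^ (L + D)| ≤ b ^ D := by
    rw [pow_add, ← mul_assoc, abs_mul, abs_of_pos (by positivity : 0 < (b : ℝ) ^ D)]
    exact mul_le_of_le_one_left (by positivity) hw
  refine ⟨s', hs'.1, hs'bad, _, rfl, hv, ?_, ?_⟩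
  · rw [abs_div, abs_of_pos hpow, le_div_iff₀ hpow]
    calc 1 / (8 * (b : ℝ) ^ 2) * b ^ β ≤ 1 / (8 * (b : ℝ) ^ 2) * Z := by gcongr
      _ = Z / (8 * b ^ 2) := one_div_mul_eq_div _ _
      _ ≤ _ := hlt.le
      _ = _ := by ring_nf
  · have hAv : |A * ((s' - s) * (b : ℝ) ^ (L + D))| ≤ Z := by
      rw [abs_mul]
      exact le_max_of_le_left (by gcongr)
    have hev : |e * ((s' - s) * (b : ℝ) ^ (L + D)) ^ 2| ≤ Z := by
      rw [abs_mul, abs_pow, hZ, visibleSize, mul_comm 2 D, pow_mul]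
      exact le_max_of_le_right (by gcongr)
    rw [abs_div, abs_of_pos hpow, div_le_iff₀ hpow]
    have htri := abs_sub (x + A * ((s' - s) * (b : ℝ) ^ (L + D)))
      (e * ((s' - s) * (b : ℝ) ^ (L + D)) ^ 2)
    have htri' := abs_add_le x (A * ((s' - s) * (b : ℝ) ^ (L + D)))
    rw [pow_succ] at hβ'
    nlinarith

end FloorCell

/-! ### Spread samples have large defect -/

section Defect

variable {ε K κ₀ : ℝ} {φ : SubgroupSeq → ℝ} {r : ℝ} {k₀ : ℕ}

lemma one_le_defect_or_one_le_defect {C : ShiftParams ε K κ₀} (hε : 0 < ε) (hK : 0 < K)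
    (hκ₀ : 0 < κ₀) (hφ : IsObservable φ)
    (hmod : ∀ Γ Γ', IsNear r k₀ Γ Γ' → |φ Γ' - φ Γ| ≤ C.c₁) {r₀ Θ : ℝ}
    (hr₀ : r₀ * (1 + K) * (1 + C.R) ^ 2 ≤ r) (hΘ : 1 / C.l < Θ) {Γ : SubgroupSeq} {k k' : ℕ}
    (hΓ : IsUnimodular (Γ k)) (hF : IsFat ε Θ (Γ k)) {h : SL(2, ℝ)} (h00 : |h 0 0 - 1| ≤ r₀)
    (h01 : |h 0 1| ≤ r₀) (h11 : |h 1 1 - 1| ≤ r₀) (hκ : κ₀ ≤ |h 1 0|) (hκK : |h 1 0| ≤ K)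
    (hmap : ∀ j ≤ k₀, Γ (k' + j) = h • Γ (k + j)) :
    1 ≤ defect C φ k Γ ∨ 1 ≤ defect C φ k' Γ := by
  by_contra! hcon
  obtain ⟨δ, hδ, hlt⟩ :=
    exists_lt_abs_alongShear_sub hε hK hκ₀ hφ hΘ hΓ hF hκ hκK hcon.1 hcon.2
  exact hlt.not_ge (hmod _ _ ((isNear_lowerShear h00 h01 h11 hκK hδ hmap).mono hr₀ le_rfl))

variable {b B : ℕ} [NeZero B] (hbB : B ^ 2 = b)

include hbB

lemma Spread.exists_one_le_defect {C : ShiftParams ε (3 * b) (1 / (8 * (b : ℝ) ^ 2))} (hε : 0 < ε)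
    (hφ : IsObservable φ) (hmod : ∀ Γ Γ', IsNear r k₀ Γ Γ' → |φ Γ' - φ Γ| ≤ C.c₁) {r₁ ρ Θ : ℝ}
    (hr₁ : r₁ ≤ 1) (hr₁ρ : r₁ ≤ ρ) (hρ : 2 * ρ * (1 + 3 * b) * (1 + C.R) ^ 2 ≤ r)
    (hΘ : 1 / C.l < Θ) {Λ : SubgroupSeq} {k k' : ℕ} (hΛ : IsUnimodular (Λ k)) {S : Finset ℝ}
    {s c : ℝ} {L D β t : ℕ} {bad : ℝ → Prop} (hS : Spread (floorCell b) S c s L)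
    (hbad : freq (block (floorCell b) S L s) bad < c) (ht : t + β = L + D)
    {h : SL(2, ℝ)} (hh : NearOne r₁ h) (hβ : (b : ℝ) ^ β ≤ visibleSize b |h 1 1 - h 0 0| |h 0 1| D)
    (hβ' : visibleSize b |h 1 1 - h 0 0| |h 0 1| D < b ^ (β + 1)) (hD : |h 0 1| * b ^ D ≤ ρ)
    (h_β : |h 0 1| * b ^ β ≤ ρ) (hF : ∀ s' ∈ S, IsFat ε Θ ((flow B s' t • Λ) k))
    (hmap : ∀ j ≤ k₀,
      (flow B s (L + D) • Λ) (k' + j) = h • (flow B s (L + D) • Λ) (k + j)) :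
    ∃ s' ∈ S, ¬bad s' ∧
      (1 ≤ defect C φ k (flow B s' t • Λ) ∨ 1 ≤ defect C φ k' (flow B s' t • Λ)) := by
  subst hbB
  have hb : 0 < B ^ 2 := pow_pos (NeZero.pos B) 2
  obtain ⟨h00, -, h10, h11⟩ := nearOne_iff.1 hh
  obtain ⟨s', hs', hs'bad, v, hv, hvD, hκ, hκK⟩ :=
    hS.exists_shear hb hbad (h10.trans hr₁) hβ hβ'
  have hev : |h 0 1 * v| ≤ ρ := by
    rw [abs_mul]
    exact (mul_le_mul_of_nonneg_left hvD (abs_nonneg _)).trans hD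
  have hBβ : ((B ^ β : ℕ) : ℝ) ^ 2 = ((B ^ 2 : ℕ) : ℝ) ^ β := by push_cast; ring
  obtain ⟨e00, e01, e10, e11⟩ := slide_mul_mul_inv_apply (B ^ β) v h
  have hflow : flow B s' t = slide (B ^ β) v * flow B s (L + D) := by
    rw [flow_eq_slide_mul_flow B s s' t β, ht, hv]
  refine ⟨s', hs', hs'bad, one_le_defect_or_one_le_defect hε (by positivity) (by positivity) hφ
    hmod hρ hΘ (hΛ.smul _) (hF s' hs')
    (h := slide (B ^ β) v * h * (slide (B ^ β) v)⁻¹) ?_ ?_ ?_ ?_ ?_ fun j hj => ?_⟩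
  · rw [e00, add_sub_right_comm]
    exact (abs_add_le _ _).trans (by linarith)
  · rw [e01, hBβ, abs_mul, abs_of_pos (by positivity : 0 < ((B ^ 2 : ℕ) : ℝ) ^ β)]
    linarith [(abs_nonneg _).trans hev]
  · rw [e11, sub_right_comm]
    exact (abs_sub _ _).trans (by linarith)
  · rwa [e10, hBβ]
  · rwa [e10, hBβ]
  · simp only [Pi.smul_apply, hflow] at hmap ⊢
    rw [mul_smul, hmap j hj, mul_smul, mul_smul, mul_smul, inv_smul_smul]

end Defect

section Samples

variable {p b B : ℕ} [NeZero B] {ε p₀ ζ : ℝ} {φ : SubgroupSeq → ℝ}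

/-- `S` is spread among the children of the `b`-adic cell of level `T₀ + τ` containing `s`. -/
def IsSpreadAt (b : ℕ) (S : Finset ℝ) (T₀ : ℕ) (s : ℝ) (τ : ℕ) : Prop :=
  Spread (floorCell b) S (1 / (4 * b ^ 2)) s (T₀ + τ)

lemma freq_block_or_le_of_not_isHeavy {α : Type*} {cell : ℕ → α → ℤ} {S : Finset α} {ζ : ℝ}
    {P Q : α → Prop} {s : α} (h : ¬(IsHeavy cell S ζ P s ∨ IsHeavy cell S ζ Q s)) (L : ℕ) :
    freq (block cell S L s) (fun s' => P s' ∨ Q s') ≤ 2 * ζ := by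
  rw [not_or, IsHeavy, IsHeavy, not_exists, not_exists] at h
  have hor := freq_or_le (A := block cell S L s) (P := P) (Q := Q)
  linarith [not_lt.1 (h.1 L), not_lt.1 (h.2 L)]

lemma NearOne.abs_one_one_sub_zero_zero_le {r : ℝ} {h : SL(2, ℝ)} (hh : NearOne r h) :
    |h 1 1 - h 0 0| ≤ 2 * r := by
  obtain ⟨h00, -, -, h11⟩ := nearOne_iff.1 hh
  have := abs_sub (h 1 1 - 1) (h 0 0 - 1)
  rw [sub_sub_sub_cancel_right] at this
  linarith

lemma one_div_lt_freq_isHeavy_of_return (hB : 1 < B) (hbB : B ^ 2 = b) (hε : 0 < ε) {Β : ℕ}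
    (hΒ : 1 ≤ Β) {C : ShiftParams ε (3 * b) (1 / (8 * (b : ℝ) ^ 2))} (hφ : IsObservable φ)
    {r r₁ ρ Θ : ℝ} {k₀ : ℕ} (hmod : ∀ Γ Γ', IsNear r k₀ Γ Γ' → |φ Γ' - φ Γ| ≤ C.c₁)
    (hr₁ : r₁ ≤ 1) (hr₁ρ : r₁ ≤ ρ) (hρ : 2 * ρ * (1 + 3 * b) * (1 + C.R) ^ 2 ≤ r)
    (hΘ : 1 / C.l < Θ) {Λ : SubgroupSeq} {k k' : ℕ} (hΛ : IsUnimodular (Λ k)) {S : Finset ℝ}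
    {s : ℝ} {T₀ t : ℕ} (hF : ∀ s' ∈ S, ∀ t' ≤ t, IsFat ε Θ ((flow B s' (T₀ + t') • Λ) k))
    {h : SL(2, ℝ)} (hh : NearOne r₁ h)
    (hmap : ∀ j ≤ k₀, (flow B s (T₀ + t) • Λ) (k' + j) = h • (flow B s (T₀ + t) • Λ) (k + j))
    {D₀ : ℕ} (hD₀ : D₀ + D₀ / 4 + Β ≤ t)
    (hidle : freq (Finset.range (D₀ + D₀ / 4 + 1))
      (fun i => Idle (IsSpreadAt b S T₀ s) Β (t - i)) ≤ 1 / 12)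
    {β : ℕ → ℕ} (hinj : Set.InjOn β (Finset.Icc D₀ (D₀ + D₀ / 4 + Β)))
    (hβ : ∀ D ∈ Finset.Icc D₀ (D₀ + D₀ / 4 + Β), β D ≤ D₀ ∧
      (b : ℝ) ^ β D ≤ visibleSize b |h 1 1 - h 0 0| |h 0 1| D ∧
      visibleSize b |h 1 1 - h 0 0| |h 0 1| D < b ^ (β D + 1) ∧
      |h 0 1| * b ^ D ≤ ρ ∧ |h 0 1| * b ^ β D ≤ ρ) :
    1 / (50 * Β) < freq (Finset.range (D₀ + 1)) fun i =>
      IsHeavy (floorCell b) S (1 / (12 * (b : ℝ) ^ 2))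
        (fun s' => 1 ≤ defect C φ k (flow B s' (T₀ + (t - i)) • Λ)) s ∨
      IsHeavy (floorCell b) S (1 / (12 * (b : ℝ) ^ 2))
        (fun s' => 1 ≤ defect C φ k' (flow B s' (T₀ + (t - i)) • Λ)) s := by
  by_contra! hheavy
  have hb : (0 : ℝ) < b := by rw [← hbB]; positivity
  obtain ⟨D, hD, hspread, hlight⟩ := exists_level (NC := fun D => IsSpreadAt b S T₀ s (t - D)) hΒ
    ((freq_mono fun D _ hD i hi _ => by rw [← Nat.sub_add_eq]; exact hD i hi).trans hidle)
    hheavy hinj fun D hD => (hβ D hD).1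
  obtain ⟨hβD, hβ1, hβ2, hyD, hyβ⟩ := hβ D hD
  rw [Finset.mem_Icc] at hD
  have hLD : T₀ + (t - D) + D = T₀ + t := by omega
  rw [← hLD] at hmap
  have hlight' := (freq_block_or_le_of_not_isHeavy hlight (T₀ + (t - D))).trans_lt
    (show _ < 1 / (4 * (b : ℝ) ^ 2) by field_simp; norm_num)
  obtain ⟨s', -, hs', hdefect⟩ := Spread.exists_one_le_defect hbB hε hφ hmod hr₁ hr₁ρ hρ hΘ hΛ
    hspread hlight' (by omega : T₀ + (t - β D) + β D = T₀ + (t - D) + D) hh hβ1 hβ2 hyD hyβ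
    (fun s' hs' => hF s' hs' _ (Nat.sub_le _ _)) hmap
  exact hs' hdefect

theorem exists_lt_expect_defect (hp : p ≠ 0) (hB : 1 < B) (hbB : B ^ 2 = b) (hε : 0 < ε)
    (hp₀ : 0 < p₀) {Β : ℕ} (hΒ : 1 ≤ Β) (C : ShiftParams ε (3 * b) (1 / (8 * (b : ℝ) ^ 2)))
    (hφ : IsObservable φ) (hζ : 8 * ζ < p₀ * (1 / (12 * b ^ 2) * (1 / (100 * Β)))) :
    ∃ N > 0, ∃ M : ℕ, ∃ Θ : ℝ, ∀ Λ : SubgroupSeq, IsLatticeSeq p Λ →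
      ∀ (S : Finset ℝ) (T₀ n : ℕ), (S ×ˢ Finset.range n).Nonempty → 40 * M ≤ p₀ * n →
      (∀ s ∈ S, ∀ τ < n, ∀ k < N, IsFat ε Θ ((flow B s (T₀ + τ) • Λ) k)) →
      p₀ ≤ freq (S ×ˢ Finset.range n) (fun x => IsSpreadAt b S T₀ x.1 x.2) →
      freq (S ×ˢ Finset.range n) (fun x => Idle (IsSpreadAt b S T₀ x.1) Β x.2) -
        freq (S ×ˢ Finset.range n) (fun x => Idle (IsSpreadAt b S T₀ x.1) (M + Β) x.2) ≤ p₀ / 50 →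
      ζ < 𝔼 k ∈ Finset.range N, 𝔼 x ∈ S ×ˢ Finset.range n,
        defect C φ k (flow B x.1 (T₀ + x.2) • Λ) := by
  have hb : 1 < b := by rw [← hbB]; exact one_lt_pow₀ hB two_ne_zero
  have hb' : (1 : ℝ) < b := by exact_mod_cast hb
  have hΒ' : (0 : ℝ) < Β := by exact_mod_cast hΒ
  have hR := C.one_le_R (by positivity)
  obtain ⟨r, hr, k₀, hmod⟩ := hφ.2 C.c₁ C.c₁_pos
  obtain ⟨ρ, hρ, hρr⟩ : ∃ ρ > 0, 2 * ρ * (1 + 3 * b) * (1 + C.R) ^ 2 ≤ r :=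
    ⟨r / (2 * (1 + 3 * b) * (1 + C.R) ^ 2), by positivity, by field_simp; rfl⟩
  obtain ⟨r₁, hr₁, hscales⟩ := exists_scales hb' hρ Β
  obtain ⟨r₂, hr₂, ⟨hr₂ρ, hr₂1⟩, hr₂r₁⟩ : ∃ r₂ > 0, (r₂ ≤ ρ ∧ r₂ ≤ 1) ∧ r₂ ≤ r₁ / 2 :=
    ⟨min (min ρ 1) (r₁ / 2), by positivity, le_min_iff.1 (min_le_left _ _), min_le_right _ _⟩
  obtain ⟨N, hN, Θ, τ, hτ, hreturn⟩ := exists_nondegenerate_return hp hε hr₂ k₀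
  obtain ⟨T, hT⟩ := hscales τ hτ
  refine ⟨N, hN, T + T / 4 + Β + 1, max Θ (1 / C.l + 1), fun Λ hΛ S T₀ n hA hM hF hNC hidle => ?_⟩
  by_contra! hcon
  obtain ⟨s, hs, t, htn, hMt, ⟨K, hKN, hKcard, hheavy⟩, hIdle⟩ :=
    (isAdic_floorCell (zero_lt_one.trans hb)).exists_good_scale (ζ₁ := 1 / (12 * (b : ℝ) ^ 2))
      (ζ₂ := 1 / (100 * Β)) (P := fun k s τ => 1 ≤ defect C φ k (flow B s (T₀ + τ) • Λ)) hA hp₀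
      hNC hΒ hidle hM (by positivity) (by positivity) hζ
      ((Finset.expect_le_expect fun k _ => freq_one_le_le_expect fun x _ =>
        defect_nonneg C (by positivity) φ k _).trans hcon)
  have hF' (s' : ℝ) (hs' : s' ∈ S) (t' : ℕ) (ht' : t' ≤ t) (k : ℕ) (hk : k ∈ K) :=
    hF s' hs' t' (by omega) k (Finset.mem_range.1 (hKN hk))
  obtain ⟨k, hk, k', hk', h, hh, hτh, hmap⟩ := hreturn _ (hΛ.smul (flow B s (T₀ + t))) K hKN hKcard
    fun k hk => (hF' s hs t le_rfl k hk).mono (le_max_left _ _)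
  obtain ⟨D₀, hD₀, β, hinj, hβ⟩ := hT |h 1 1 - h 0 0| |h 0 1| (abs_nonneg _) (abs_nonneg _)
    (hh.abs_one_one_sub_zero_zero_le.trans (by linarith))
    ((nearOne_iff.1 hh).2.1.trans (by linarith)) hτh
  refine (one_div_lt_freq_isHeavy_of_return hB hbB hε hΒ hφ hmod hr₂1 hr₂ρ hρr
    ((lt_add_one _).trans_le (le_max_right _ _)) (hΛ.isUnimodular k)
    (fun s' hs' t' ht' => hF' s' hs' t' ht' k hk) hh hmap (by omega)
    (hIdle (D₀ + D₀ / 4) (by omega)) hinj hβ).not_ge (freq_or_le.trans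
    ((add_le_add (hheavy k hk D₀ (by omega)) (hheavy k' hk' D₀ (by omega))).trans ?_))
  field_simp
  norm_num

lemma exists_expect_expect_shift_le {α : Type*} {Λ : α → SubgroupSeq} {A : Finset α} {N j : ℕ}
    (hN : 0 < N) {f : ℕ → SubgroupSeq → ℝ}
    (h : ∀ k < N, 𝔼 x ∈ shiftSample A j, f k (shiftOf Λ x) ≤ ζ) :
    ∃ n₀ ≤ j, 𝔼 k ∈ Finset.range N, 𝔼 a ∈ A, f k (shift n₀ (Λ a)) ≤ ζ := by
  refine (Finset.exists_le_of_expect_le Finset.nonempty_range_add_one ?_).imp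
    fun n₀ hn₀ => ⟨Finset.mem_range_succ_iff.1 hn₀.1, hn₀.2⟩
  rw [Finset.expect_comm]
  refine Finset.expect_le (Finset.nonempty_range_iff.2 hN.ne') fun k hk => ?_
  rw [Finset.expect_comm]
  exact (Finset.expect_product ..).symm.trans_le (h k (Finset.mem_range.1 hk))

theorem not_eventually_isFat (hp : p ≠ 0) (hB : 1 < B) (hbB : B ^ 2 = b) (hε : 0 < ε)
    (hp₀ : 0 < p₀) {Λ : SubgroupSeq} (hΛ : IsLatticeSeq p Λ) {S : ℕ → Finset ℝ} {T₀ n : ℕ → ℕ}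
    (hS : ∀ j, (S j).Nonempty) (hn : ∀ j, j < n j)
    (hspread : ∀ j, p₀ ≤
      freq (S j ×ˢ Finset.range (n j)) fun x => IsSpreadAt b (S j) (T₀ j) x.1 x.2) :
    ¬∀ Θ : ℝ, ∀ᶠ j in atTop, ∀ s ∈ S j, ∀ t, T₀ j ≤ t → ∀ k ≤ 2 * j,
      IsFat ε Θ ((flow B s t • Λ) k) := by
  intro hF
  have hb : (0 : ℝ) < b := by rw [← hbB]; have := NeZero.pos B; positivity
  have h𝓤 : (hyperfilter ℕ : Filter ℕ) ≤ atTop := Nat.hyperfilter_le_atTop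
  have hA (j : ℕ) : (S j ×ˢ Finset.range (n j)).Nonempty :=
    (hS j).product (Finset.nonempty_range_iff.2 (Nat.ne_zero_of_lt (hn j)))
  obtain ⟨Β, hΒ, hidle⟩ := exists_stable (hyperfilter ℕ)
    (D := fun x j => freq (S j ×ˢ Finset.range (n j))
      fun y => Idle (IsSpreadAt b (S j) (T₀ j) y.1) x y.2)
    (fun _ _ => freq_nonneg ..) (fun _ _ _ hxy => freq_mono fun _ _ h => h.anti hxy)
    ⟨1, fun _ _ => freq_le_one ..⟩ (by positivity : 0 < p₀ / 50)
  set ζ₀ := p₀ * (1 / (12 * (b : ℝ) ^ 2) * (1 / (100 * Β)))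
  have hζ₀ : 0 < ζ₀ := by positivity
  obtain ⟨C, hC⟩ := exists_shiftParams hε (by positivity : (0 : ℝ) < 3 * b) (1 / (8 * (b : ℝ) ^ 2))
    (by positivity : 0 < ζ₀ / 20)
  obtain ⟨φ, hφ, hdefect⟩ := exists_expect_defect_le (ζ := ζ₀ / 16)
    (Λ := fun a : ℕ × ℝ × ℕ => flow B a.2.1 (T₀ a.1 + a.2.2) • Λ) C (by positivity)
    (hyperfilter ℕ) h𝓤 (A := fun j => {j} ×ˢ S j ×ˢ Finset.range (n j))
    (fun j => (Finset.singleton_nonempty j).product (hA j))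
    (fun k => by
      filter_upwards [h𝓤 (hF _), h𝓤 (eventually_ge_atTop k)] with j hFj hkj a ha i hi
      simp only [Finset.mem_product, Finset.mem_singleton] at ha
      exact hFj a.2.1 ha.2.1 _ (by rw [ha.1]; exact Nat.le_add_right _ _) i (by omega))
    (by linarith)
  obtain ⟨N, hN, M, Θ, hlarge⟩ := exists_lt_expect_defect hp hB hbB hε hp₀ hΒ C hφ
    (show 8 * (ζ₀ / 16) < ζ₀ by linarith)
  have hdefectN := (eventually_all_finset (Finset.range N)).2 fun k _ => hdefect k
  have hnM := ((tendsto_natCast_atTop_atTop (R := ℝ)).eventually_ge_atTop (40 * M / p₀))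
  obtain ⟨j, hj, hidle, hFj, hNj, hMj⟩ := (hdefectN.and <| (hidle (M + Β)).and
    (((hF Θ).and <| (eventually_ge_atTop N).and hnM).filter_mono h𝓤)).exists
  obtain ⟨n₀, hn₀, hsmall⟩ := exists_expect_expect_shift_le hN
    fun k hk => hj k (Finset.mem_range.2 hk)
  simp only [Finset.expect_product, Finset.expect_singleton] at hsmall
  refine (hlarge _ (hΛ.shift n₀) (S j) (T₀ j) (n j) (hA j) ?_
    (fun s hs τ _ k hk => hFj s hs _ (Nat.le_add_right _ _) (n₀ + k) (by omega))
    (hspread j) hidle).not_ge ?_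
  · rw [div_le_iff₀' hp₀] at hMj
    exact hMj.trans (by gcongr; exact (hn j).le)
  · simp only [Finset.expect_product]
    exact hsmall

end Samples

/-! ### Covering and dimension -/

section Covering

lemma exists_finset_injOn_of_finite_image {α β : Type*} {E : Set α} {f : α → β}
    (hfin : (f '' E).Finite) :
    ∃ S : Finset α, ↑S ⊆ E ∧ Set.InjOn f S ∧ S.card = (f '' E).ncard := by
  obtain ⟨u, huE, hu⟩ := Set.exists_subset_bijOn E f
  lift u to Finset α using hfin.of_injOn hu.mapsTo hu.injOn
  exact ⟨u, huE, hu.injOn, by rw [← hu.image_eq, hu.injOn.ncard_image, Set.ncard_coe_finset]⟩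

lemma finite_floorCell_image {E : Set ℝ} (hE : Bornology.IsBounded E) (b L : ℕ) :
    (floorCell b L '' E).Finite := by
  obtain ⟨R, hR⟩ := hE.subset_closedBall 0
  refine (Set.finite_Icc ⌊(b : ℝ) ^ L * -R⌋ ⌊(b : ℝ) ^ L * R⌋).subset ?_
  rintro _ ⟨s, hs, rfl⟩
  have hsR := abs_le.1 (mem_closedBall_zero_iff.1 (hR hs))
  exact ⟨Int.floor_le_floor (by gcongr; exact hsR.1), Int.floor_le_floor (by gcongr; exact hsR.2)⟩

lemma mem_Icc_floorCell {b : ℕ} (hb : 0 < b) (L : ℕ) (s : ℝ) :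
    s ∈ Icc ((floorCell b L s : ℝ) / b ^ L) ((floorCell b L s + 1 : ℝ) / b ^ L) := by
  have hpos : (0 : ℝ) < (b : ℝ) ^ L := by positivity
  rw [mem_Icc, div_le_iff₀ hpos, le_div_iff₀ hpos, mul_comm s]
  exact ⟨Int.floor_le _, (Int.lt_floor_add_one _).le⟩

lemma dimH_le_of_frequently_ncard_floorCell_le {b : ℕ} (hb : 1 < b) {d : NNReal} {E : Set ℝ}
    (hE : Bornology.IsBounded E)
    (h : ∃ᶠ L : ℕ in atTop, ((floorCell b L '' E).ncard : ℝ) ≤ ((b : ℝ) ^ (d : ℝ)) ^ L) :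
    dimH E ≤ d := by
  have hb' : (1 : ℝ) < b := by exact_mod_cast hb
  have hfin (L : ℕ) := (finite_floorCell_image hE b L).fintype
  have hdiam (L : ℕ) (i : ℤ) : Metric.ediam (Icc ((i : ℝ) / (b : ℝ) ^ L) ((i + 1 : ℝ) / b ^ L)) =
      ENNReal.ofReal ((b : ℝ)⁻¹ ^ L) := by
    rw [Real.ediam_Icc, ← sub_div, add_sub_cancel_left, one_div, inv_pow]
  refine dimH_le_of_hausdorffMeasure_ne_top (ne_top_of_le_ne_top ENNReal.one_ne_top ?_)
  refine (Measure.hausdorffMeasure_le_liminf_sum (d : ℝ) E (l := atTop)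
    (fun L : ℕ => ENNReal.ofReal ((b : ℝ)⁻¹ ^ L)) ?_
    (fun L (i : floorCell b L '' E) => Icc (((i : ℤ) : ℝ) / b ^ L) ((((i : ℤ) : ℝ) + 1) / b ^ L))
    (.of_forall fun L i => (hdiam L i).le) (.of_forall fun L s hs =>
      mem_iUnion.2 ⟨⟨_, mem_image_of_mem _ hs⟩, mem_Icc_floorCell (by omega) L s⟩)).trans ?_
  · rw [← ENNReal.ofReal_zero]
    exact ENNReal.tendsto_ofReal
      (tendsto_pow_atTop_nhds_zero_of_lt_one (by positivity) (inv_lt_one_of_one_lt₀ hb'))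
  · refine liminf_le_of_frequently_le' (h.mono fun L hL => ?_)
    simp only [hdiam, Finset.sum_const, Finset.card_univ, nsmul_eq_mul]
    rw [← Nat.card_eq_fintype_card, Nat.card_coe_set_eq,
      ENNReal.ofReal_rpow_of_nonneg (by positivity) d.coe_nonneg, ← ENNReal.ofReal_natCast,
      ← ENNReal.ofReal_mul (by positivity), ENNReal.ofReal_le_one, ← Real.rpow_pow_comm
        (by positivity), Real.inv_rpow (by positivity), inv_pow, ← div_eq_mul_inv]
    exact div_le_one_of_le₀ hL (by positivity)

end Covering

section BadlyApprox

variable {p B b : ℕ} {ε : ℝ} {Λ : SubgroupSeq}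

/-- For the lattices `padicLattice p w` attached to a `p`-adic number `v`, this says that the
products `|q| |q s - q₀| ‖q v - q₀‖` are at least `ε` as long as `|q s - q₀| < ε`. -/
def IsBadlyApprox (p : ℕ) (Λ : SubgroupSeq) (ε s : ℝ) : Prop :=
  ∀ k, IsFat ε (ε / p ^ k) (lowerShear s • Λ k)

lemma IsBadlyApprox.anti {ε' s : ℝ} (h : IsBadlyApprox p Λ ε' s) (hε : ε ≤ ε') :
    IsBadlyApprox p Λ ε s := fun k x hx hx0 =>
  (h k x hx hx0).imp hε.trans (le_trans (by gcongr))

lemma flow_smul_zero [NeZero B] (s : ℝ) (t : ℕ) (x : Fin 2 → ℝ) :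
    (flow B s t • x) 0 = (lowerShear s • x) 0 / (B : ℝ) ^ t := by
  rw [flow, mul_smul, smul_apply_zero]
  simp [Matrix.SpecialLinearGroup.coe_inv, coe_dilation, div_eq_inv_mul]

lemma flow_smul_one [NeZero B] (s : ℝ) (t : ℕ) (x : Fin 2 → ℝ) :
    (flow B s t • x) 1 = (lowerShear s • x) 1 * (B : ℝ) ^ t := by
  rw [flow, mul_smul, smul_apply_one]
  simp [Matrix.SpecialLinearGroup.coe_inv, coe_dilation, mul_comm]

lemma IsBadlyApprox.isFat_flow [NeZero B] (hp : p ≠ 0) {s : ℝ} (h : IsBadlyApprox p Λ ε s) {Θ : ℝ}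
    {t k : ℕ} (hΘ : Θ * (p : ℝ) ^ k ≤ ε * (B : ℝ) ^ t) : IsFat ε Θ ((flow B s t • Λ) k) := by
  rintro _ ⟨x, hx, rfl⟩ hx0
  have hB : (0 : ℝ) < (B : ℝ) ^ t := by have := NeZero.pos B; positivity
  have hne : lowerShear s • x ≠ 0 := by
    intro h0
    exact hx0 ((mul_smul _ _ x).trans (by rw [h0, smul_zero]))
  change ε ≤ |(flow B s t • x) 0 * (flow B s t • x) 1| ∨ Θ ≤ |(flow B s t • x) 1|
  rw [flow_smul_zero, flow_smul_one, div_mul_eq_mul_div, mul_comm _ ((B : ℝ) ^ t),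
    mul_div_assoc, mul_div_cancel_left₀ _ hB.ne', abs_mul ((B : ℝ) ^ t), abs_of_pos hB]
  refine (h k _ (AddSubgroup.smul_mem_pointwise_smul _ _ _ hx) hne).imp_right fun hε => ?_
  rw [div_le_iff₀ (by positivity)] at hε
  exact le_of_mul_le_mul_right (hΘ.trans (by nlinarith)) (by positivity : 0 < (p : ℝ) ^ k)

lemma eventually_mul_pow_le (hp : p ≠ 0) (hB : 1 < B) (hε : 0 < ε) (Θ : ℝ) :
    ∀ᶠ j : ℕ in atTop, ∀ t, (2 * p + 1) * j ≤ t → ∀ k ≤ 2 * j,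
      Θ * (p : ℝ) ^ k ≤ ε * (B : ℝ) ^ t := by
  have hB' : (2 : ℝ) ≤ B := by exact_mod_cast hB
  have hp' : (1 : ℝ) ≤ p := by exact_mod_cast Nat.one_le_iff_ne_zero.2 hp
  have hp2 : (p : ℝ) ≤ 2 ^ p := by exact_mod_cast Nat.lt_two_pow_self.le
  filter_upwards [(tendsto_pow_atTop_atTop_of_one_lt (one_lt_two (α := ℝ))).eventually_ge_atTop
    (|Θ| / ε)] with j hj t ht k hk
  rw [div_le_iff₀ hε] at hj
  calc Θ * (p : ℝ) ^ k ≤ |Θ| * (p : ℝ) ^ k := by gcongr; exact le_abs_self Θ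
    _ ≤ 2 ^ j * ε * (p : ℝ) ^ (2 * j) := by gcongr
    _ ≤ 2 ^ j * ε * (2 ^ p) ^ (2 * j) := by gcongr
    _ = ε * 2 ^ ((2 * p + 1) * j) := by ring
    _ ≤ ε * (B : ℝ) ^ ((2 * p + 1) * j) := by gcongr
    _ ≤ ε * (B : ℝ) ^ t := by gcongr; linarith

theorem eventually_ncard_floorCell_lt (hp : p ≠ 0) (hB : 1 < B) (hbB : B ^ 2 = b) (hε : 0 < ε)
    (hΛ : IsLatticeSeq p Λ) {E : Set ℝ} (hE : ∀ s ∈ E, IsBadlyApprox p Λ ε s) {a : ℤ}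
    (hEa : E ⊆ Ico (a : ℝ) (a + 1)) :
    ∀ᶠ T : ℕ in atTop, ((floorCell b T '' E).ncard : ℝ) < Real.exp (10 * T) := by
  by_contra hcon
  have : NeZero B := ⟨by omega⟩
  have hb : 0 < b := by rw [← hbB]; exact pow_pos (NeZero.pos B) 2
  have hsample (j : ℕ) : ∃ (n : ℕ) (S : Finset ℝ), ↑S ⊆ E ∧
      InjOn (floorCell b ((2 * p + 1) * j + n)) S ∧
      Real.exp (10 * ((2 * p + 1) * j + n : ℕ)) ≤ S.card ∧ j < n ∧
      b * ((2 * p + 1) * j) ≤ (2 * p + 1) * j + n := by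
    obtain ⟨T, hT, hle⟩ := (frequently_atTop.1 (not_eventually.1 hcon))
      ((2 * p + 1) * j + (b * ((2 * p + 1) * j) + j + 1))
    obtain ⟨n, rfl⟩ := Nat.exists_eq_add_of_le (Nat.le_of_add_right_le hT)
    obtain ⟨S, hSE, hinj, hcard⟩ := exists_finset_injOn_of_finite_image <|
      finite_floorCell_image ((Metric.isBounded_Ico _ _).subset hEa) b ((2 * p + 1) * j + n)
    exact ⟨n, S, hSE, hinj, by rwa [hcard, ← not_lt], by omega, by omega⟩
  choose n S hSE hinj hcard hn hbn using hsample
  have hcard_pos (j : ℕ) : (0 : ℝ) < (S j).card := (Real.exp_pos _).trans_le (hcard j)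
  have hS (j : ℕ) : (S j).Nonempty := Finset.card_pos.1 (by exact_mod_cast hcard_pos j)
  have hzero (j : ℕ) {s : ℝ} (hs : s ∈ S j) : floorCell b 0 s = a := by
    rw [floorCell, pow_zero, one_mul, Int.floor_eq_iff]
    exact hEa (hSE j hs)
  refine not_eventually_isFat hp hB hbB hε (p₀ := 4 / b) (by positivity) hΛ
    (T₀ := fun j => (2 * p + 1) * j) hS hn (fun j => ?_) fun Θ => ?_
  · exact (isAdic_floorCell hb).four_div_le_freq_spread hb (hS j) (Nat.zero_lt_of_lt (hn j))
      (fun s hs s' hs' => (hzero j hs).trans (hzero j hs').symm) (hinj j)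
      ((Real.le_log_iff_exp_le (hcard_pos j)).2 (hcard j)) (hbn j)
  · filter_upwards [eventually_mul_pow_le hp hB hε Θ] with j hj s hs t ht k hk
    exact (hE s (hSE j hs)).isFat_flow hp (hj t ht k hk)

theorem dimH_setOf_isBadlyApprox (hp : p ≠ 0) (hΛ : IsLatticeSeq p Λ) (hε : 0 < ε) :
    dimH {s | IsBadlyApprox p Λ ε s} = 0 := by
  have hcover : {s | IsBadlyApprox p Λ ε s} =
      ⋃ a : ℤ, {s | IsBadlyApprox p Λ ε s} ∩ Ico (a : ℝ) (a + 1) := by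
    rw [← inter_iUnion, iUnion_Ico_intCast, inter_univ]
  rw [hcover, dimH_iUnion, ENNReal.iSup_eq_zero]
  refine fun a => nonpos_iff_eq_zero.1 (ENNReal.le_of_forall_pos_le_add fun d hd _ => ?_)
  rw [zero_add]
  obtain ⟨B, hB⟩ := exists_nat_gt (max 1 (Real.exp (5 / d)))
  have hB1 : 1 < B := by exact_mod_cast (le_max_left _ _).trans_lt hB
  have hBd : Real.exp 10 ≤ ((B ^ 2 : ℕ) : ℝ) ^ (d : ℝ) := by
    have : (0 : ℝ) < d := hd
    calc Real.exp 10 = (Real.exp (5 / d) ^ 2) ^ (d : ℝ) := by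
          rw [← Real.exp_nat_mul, ← Real.exp_mul]
          congr 1
          field_simp
          norm_num
      _ ≤ ((B ^ 2 : ℕ) : ℝ) ^ (d : ℝ) := by
          push_cast
          gcongr
          exact ((le_max_right _ _).trans_lt hB).le
  refine dimH_le_of_frequently_ncard_floorCell_le (one_lt_pow₀ hB1 two_ne_zero)
    ((Metric.isBounded_Ico _ _).subset inter_subset_right)
    ((eventually_ncard_floorCell_lt (a := a) hp hB1 rfl hε hΛ (fun _ (hs : _ ∧ _) => hs.1)
      inter_subset_right).mono fun T hT => ?_).frequently
  calc (_ : ℝ) ≤ Real.exp 10 ^ T := by rw [← Real.exp_nat_mul, mul_comm]; exact hT.le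
    _ ≤ _ := by gcongr

end BadlyApprox

/-! ### Lattices attached to a `p`-adic integer -/

section PadicLattice

variable {p : ℕ} [NeZero p] {w : ℕ → ℤ}

/-- If the integers `w n` approximate `v ∈ ℤ_p` modulo `p ^ (2 n)`, the `n`-th term is the lattice
of pairs `(q, q₀)` with `‖q v - q₀‖ ≤ p ^ (-2 n)`, scaled to have covolume one. -/
noncomputable def padicLattice (p : ℕ) [NeZero p] (w : ℕ → ℤ) : SubgroupSeq :=
  fun n => lowerShear (-w n) • (dilation (p ^ n))⁻¹ • intLattice

lemma mem_padicLattice {n : ℕ} {x : Fin 2 → ℝ} :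
    x ∈ padicLattice p w n ↔ ∃ q q₀ : ℤ, (p : ℤ) ^ (2 * n) ∣ q * w n - q₀ ∧
      (p : ℝ) ^ n • x = ![(q : ℝ), q₀] := by
  have hp : (p : ℝ) ^ n ≠ 0 := pow_ne_zero _ (NeZero.ne _)
  have point (a : Fin 2 → ℤ) :
      (p : ℝ) ^ n • lowerShear (-w n) • (dilation (p ^ n))⁻¹ • (fun i => (a i : ℝ)) =
        ![(a 0 : ℝ), (p : ℝ) ^ (2 * n) * a 1 + w n * a 0] := by
    ext i
    fin_cases i <;>
      simp [smul_apply_zero, smul_apply_one, Matrix.SpecialLinearGroup.coe_inv, coe_lowerShear,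
        coe_dilation] <;> field_simp
    ring
  constructor
  · rintro ⟨_, ⟨_, ⟨a, rfl⟩, rfl⟩, rfl⟩
    refine ⟨a 0, (p : ℤ) ^ (2 * n) * a 1 + w n * a 0, ⟨-a 1, by ring⟩, (point a).trans ?_⟩
    push_cast
    rfl
  · rintro ⟨q, q₀, ⟨d, hd⟩, hx⟩
    refine ⟨_, ⟨_, intCast_mem_intLattice ![q, -d], rfl⟩, ?_⟩
    refine smul_right_injective _ hp ((point _).trans (.trans ?_ hx.symm))
    have hq₀ : (q₀ : ℝ) = (p : ℝ) ^ (2 * n) * (-d : ℤ) + w n * q := by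
      have : (q : ℝ) * w n - q₀ = (p : ℝ) ^ (2 * n) * d := by exact_mod_cast hd
      push_cast
      linarith
    simp [hq₀]

lemma isLatticeSeq_padicLattice (hp : 1 < p)
    (hw : ∀ n j, (p : ℤ) ^ (2 * n) ∣ w (n + j) - w n) : IsLatticeSeq p (padicLattice p w) where
  isUnimodular n := IsUnimodular.smul (IsUnimodular.smul ⟨1, (one_smul _ _).symm⟩ _) _
  down {n j x} hx := by
    obtain ⟨q, q₀, hq, hx⟩ := mem_padicLattice.1 hx
    refine mem_padicLattice.2 ⟨q, q₀, ?_, by rw [smul_smul, ← pow_add, hx]⟩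
    have hq' := (pow_dvd_pow (p : ℤ) (by omega : 2 * n ≤ 2 * (n + j))).trans hq
    calc (p : ℤ) ^ (2 * n) ∣ q * w (n + j) - q₀ - q * (w (n + j) - w n) :=
          dvd_sub hq' ((hw n j).mul_left q)
      _ = q * w n - q₀ := by ring
  up {n j x} hx := by
    obtain ⟨q, q₀, hq, hx⟩ := mem_padicLattice.1 hx
    refine mem_padicLattice.2 ⟨p ^ (2 * j) * q, p ^ (2 * j) * q₀, ?_, ?_⟩
    · calc (p : ℤ) ^ (2 * (n + j)) = p ^ (2 * j) * p ^ (2 * n) := by ring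
        _ ∣ p ^ (2 * j) * (q * w n - q₀ + q * (w (n + j) - w n)) :=
          mul_dvd_mul_left _ (dvd_add hq ((hw n j).mul_left q))
        _ = p ^ (2 * j) * q * w (n + j) - p ^ (2 * j) * q₀ := by ring
    · rw [smul_smul, show (p : ℝ) ^ (n + j) * p ^ j = p ^ (2 * j) * p ^ n by ring, ← smul_smul, hx]
      simp
  injective := by
    have vertical {m n : ℕ} (hmn : m < n) : padicLattice p w m ≠ padicLattice p w n := fun h => by
      have hmem : ![0, (p : ℝ) ^ m] ∈ padicLattice p w m :=
        mem_padicLattice.2 ⟨0, p ^ (2 * m), by simp, by simp [two_mul, pow_add]⟩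
      rw [h] at hmem
      obtain ⟨q, q₀, hq, hx⟩ := mem_padicLattice.1 hmem
      have hq0 : q = 0 := by simpa using (congrFun hx 0).symm
      have hq₀ : (q₀ : ℝ) = (p : ℝ) ^ (n + m) := by
        simpa [pow_add] using (congrFun hx 1).symm
      rw [hq0, (by exact_mod_cast hq₀ : q₀ = (p : ℤ) ^ (n + m)), zero_mul, zero_sub, dvd_neg] at hq
      have := (Nat.pow_dvd_pow_iff_le_right hp).1 (by exact_mod_cast hq)
      omega
    intro m n h
    by_contra hmn
    rcases Ne.lt_or_gt hmn with hlt | hlt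
    exacts [vertical hlt h, vertical hlt h.symm]

end PadicLattice

section Padic

variable {p : ℕ} [Fact p.Prime] {v : ℚ_[p]}

lemma exists_int_approx (hv : ‖v‖ ≤ 1) :
    ∃ w : ℕ → ℤ, ∀ n, ‖v - w n‖ ≤ (p : ℝ) ^ (-(n : ℤ)) := by
  let z : ℤ_[p] := ⟨v, hv⟩
  refine ⟨fun n => z.appr n, fun n => ?_⟩
  have := (PadicInt.norm_le_pow_iff_mem_span_pow _ _).2 (PadicInt.appr_spec n z)
  rwa [PadicInt.norm_def, PadicInt.coe_sub, PadicInt.coe_natCast, ← Int.cast_natCast] at this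

lemma pow_dvd_sub_of_norm_sub_le {n : ℕ} {a a' : ℤ} (ha : ‖v - a‖ ≤ (p : ℝ) ^ (-(n : ℤ)))
    (ha' : ‖v - a'‖ ≤ (p : ℝ) ^ (-(n : ℤ))) : (p : ℤ) ^ n ∣ a' - a := by
  rw [← Padic.norm_int_le_pow_iff_dvd]
  have split : ((a' - a : ℤ) : ℚ_[p]) = (v - a) + -(v - a') := by push_cast; ring
  rw [split]
  exact (Padic.nonarchimedean _ _).trans (max_le ha (by rwa [norm_neg]))

lemma norm_mul_sub_le_of_dvd {w q q₀ : ℤ} {n : ℕ}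
    (hw : ‖v - w‖ ≤ (p : ℝ) ^ (-(n : ℤ))) (h : (p : ℤ) ^ n ∣ q * w - q₀) :
    ‖(q : ℚ_[p]) * v - q₀‖ ≤ (p : ℝ) ^ (-(n : ℤ)) := by
  have split : (q : ℚ_[p]) * v - q₀ = q * (v - w) + ((q * w - q₀ : ℤ) : ℚ_[p]) := by
    push_cast
    ring
  rw [split]
  refine (Padic.nonarchimedean _ _).trans
    (max_le ?_ ((Padic.norm_int_le_pow_iff_dvd _ _).2 (by exact_mod_cast h)))
  rw [norm_mul]
  exact (mul_le_of_le_one_left (norm_nonneg _) (Padic.norm_int_le_one q)).trans hw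

end Padic

/-! ### Failure of the mixed Littlewood condition -/

section Cond12

lemma exists_abs_le_of_abs_mul_sub_lt_one {s : ℝ} (hs : s ≠ 0) (N : ℕ) :
    ∃ M : ℕ, ∀ q q₀ : ℤ, |q * s - q₀| < 1 → ¬((N : ℤ) ≤ |q| ∧ (N : ℤ) ≤ |q₀|) →
      |q| ≤ M ∧ |q₀| ≤ M := by
  have hs0 : 0 < |s| := abs_pos.2 hs
  obtain ⟨M, hM⟩ := exists_nat_ge (max (N * |s| + 1) (max ((N + 1) / |s|) N))
  obtain ⟨hM1, hM2, hM3⟩ : N * |s| + 1 ≤ M ∧ (N + 1) / |s| ≤ M ∧ (N : ℝ) ≤ M := by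
    simpa only [max_le_iff] using hM
  refine ⟨M, fun q q₀ hone hsmall => ?_⟩
  suffices |(q : ℝ)| ≤ M ∧ |(q₀ : ℝ)| ≤ M from
    ⟨by exact_mod_cast this.1, by exact_mod_cast this.2⟩
  have hclose : |(|(q : ℝ)| * |s| - |(q₀ : ℝ)|)| < 1 := by
    rw [← abs_mul]
    exact (abs_abs_sub_abs_le _ _).trans_lt hone
  rw [abs_lt] at hclose
  rw [not_and_or, not_le, not_le] at hsmall
  rcases hsmall with hq | hq₀
  · have hqN : |(q : ℝ)| ≤ N := by exact_mod_cast hq.le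
    have : |(q : ℝ)| * |s| ≤ N * |s| := by gcongr
    exact ⟨hqN.trans hM3, by linarith⟩
  · have hqN : |(q₀ : ℝ)| ≤ N := by exact_mod_cast hq₀.le
    refine ⟨le_trans ?_ hM2, hqN.trans hM3⟩
    rw [le_div_iff₀ hs0]
    linarith

lemma abs_mul_sub_pos {s : ℝ} (hs : Irrational s) {q q₀ : ℤ} (h : q ≠ 0 ∨ q₀ ≠ 0) :
    0 < |q * s - q₀| := by
  rw [abs_pos]
  by_cases hq : q = 0
  · subst hq
    simpa using h
  · exact ((hs.intCast_mul hq).sub_intCast q₀).ne_zero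

lemma exists_pos_forall_le_abs_mul_sub {s : ℝ} (hs : Irrational s) (M : ℕ) :
    ∃ η > 0, ∀ q q₀ : ℤ, |q| ≤ M → |q₀| ≤ M → (q ≠ 0 ∨ q₀ ≠ 0) → η ≤ |q * s - q₀| := by
  have hsmall : ∀ᶠ η : ℝ in 𝓝[>] 0,
      ∀ x ∈ Finset.Icc (-(M : ℤ)) M ×ˢ Finset.Icc (-(M : ℤ)) M,
        (x.1 ≠ 0 ∨ x.2 ≠ 0) → η ≤ |x.1 * s - x.2| := by
    rw [Filter.eventually_all_finset]
    refine fun x _ => eventually_imp_distrib_left.2 fun hx => ?_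
    exact (eventually_le_nhds (abs_mul_sub_pos hs hx)).filter_mono nhdsWithin_le_nhds
  obtain ⟨η, hη, hη0⟩ := (hsmall.and self_mem_nhdsWithin).exists
  refine ⟨η, hη0, fun q q₀ hq hq₀ => hη (q, q₀) ?_⟩
  rw [Finset.mem_product, Finset.mem_Icc, Finset.mem_Icc, ← abs_le, ← abs_le]
  exact ⟨hq, hq₀⟩

variable {p : ℕ} [Fact p.Prime] {s : ℝ} {v : ℚ_[p]}

lemma exists_forall_le_or_le_of_not_cond12 (hs : Irrational s) (h : ¬Cond12 p s v) :
    ∃ ε > 0, ∀ q q₀ : ℤ, (q ≠ 0 ∨ q₀ ≠ 0) →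
      ε ≤ |(q : ℝ)| * |q * s - q₀| * ‖(q : ℚ_[p]) * v - q₀‖ ∨ ε ≤ |q * s - q₀| := by
  unfold Cond12 at h
  push Not at h
  obtain ⟨ε, hε, N, hN⟩ := h
  obtain ⟨M, hM⟩ := exists_abs_le_of_abs_mul_sub_lt_one hs.ne_zero N
  obtain ⟨η, hη, hηM⟩ := exists_pos_forall_le_abs_mul_sub hs M
  refine ⟨min ε (min η 1), by positivity, fun q q₀ hne => ?_⟩
  by_cases hbig : (N : ℤ) ≤ |q| ∧ (N : ℤ) ≤ |q₀|
  · left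
    exact (min_le_left _ _).trans (by exact_mod_cast hN q q₀ hbig.1 hbig.2)
  right
  refine (min_le_right _ _).trans ?_
  rcases le_or_gt 1 |q * s - q₀| with hone | hone
  · exact (min_le_right _ _).trans hone
  · obtain ⟨hq, hq₀⟩ := hM q q₀ hone hbig
    exact (min_le_left _ _).trans (hηM q q₀ hq hq₀ hne)

lemma exists_isBadlyApprox_of_not_cond12 (hs : Irrational s) (h : ¬Cond12 p s v) {w : ℕ → ℤ}
    (hw : ∀ n, ‖v - w n‖ ≤ (p : ℝ) ^ (-((2 * n : ℕ) : ℤ))) :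
    ∃ ε > 0, IsBadlyApprox p (padicLattice p w) ε s := by
  obtain ⟨ε, hε, hbad⟩ := exists_forall_le_or_le_of_not_cond12 hs h
  refine ⟨ε, hε, ?_⟩
  rintro n _ ⟨x, hx, rfl⟩ hx0
  change ε ≤ |(lowerShear s • x) 0 * (lowerShear s • x) 1| ∨ _ ≤ |(lowerShear s • x) 1|
  obtain ⟨q, q₀, hq, hxq⟩ := mem_padicLattice.1 hx
  have hpn : (0 : ℝ) < (p : ℝ) ^ n := pow_pos (Nat.cast_pos.2 (NeZero.pos p)) _
  have h0 : x 0 = q / (p : ℝ) ^ n := by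
    rw [eq_div_iff hpn.ne', mul_comm]
    exact congrFun hxq 0
  have h1 : x 1 = q₀ / (p : ℝ) ^ n := by
    rw [eq_div_iff hpn.ne', mul_comm]
    exact congrFun hxq 1
  have hne : q ≠ 0 ∨ q₀ ≠ 0 := by
    by_contra! h
    refine hx0 ((congrArg (lowerShear s • ·) (funext fun i => ?_)).trans (smul_zero _))
    fin_cases i <;> simp [h0, h1, h.1, h.2]
  have hform : (lowerShear s • x) 1 = -((q * s - q₀) / (p : ℝ) ^ n) := by
    rw [lowerShear_smul_one, h0, h1]
    ring
  rw [lowerShear_smul_zero, hform, h0, abs_mul, abs_neg, abs_div, abs_div, abs_of_pos hpn]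
  refine (hbad q q₀ hne).imp (fun hprod => ?_) fun hlin => by gcongr
  calc ε ≤ |(q : ℝ)| * |q * s - q₀| * ‖(q : ℚ_[p]) * v - q₀‖ := hprod
    _ ≤ |(q : ℝ)| * |q * s - q₀| * (p : ℝ) ^ (-((2 * n : ℕ) : ℤ)) := by
        gcongr
        exact norm_mul_sub_le_of_dvd (hw n) hq
    _ = |(q : ℝ)| / (p : ℝ) ^ n * (|q * s - q₀| / (p : ℝ) ^ n) := by
        rw [zpow_neg, zpow_natCast, pow_mul']
        field_simp

theorem dimH_not_cond12_of_norm_le_one (hv : ‖v‖ ≤ 1) : dimH {u : ℝ | ¬Cond12 p u v} = 0 := by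
  have hp : p.Prime := Fact.out
  obtain ⟨w, hw⟩ := exists_int_approx hv
  have hdvd (n j : ℕ) : (p : ℤ) ^ (2 * n) ∣ w (2 * (n + j)) - w (2 * n) := by
    refine pow_dvd_sub_of_norm_sub_le (hw _) ((hw _).trans ?_)
    have : (1 : ℝ) ≤ p := by exact_mod_cast hp.one_le
    gcongr
    omega
  have hΛ := isLatticeSeq_padicLattice (w := fun n => w (2 * n)) hp.one_lt hdvd
  have hsub : {u : ℝ | ¬Cond12 p u v} ⊆ range ((↑) : ℚ → ℝ) ∪
      ⋃ k : ℕ, {s | IsBadlyApprox p (padicLattice p fun n => w (2 * n)) (1 / (k + 1)) s} := by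
    intro s hs
    by_cases hirr : Irrational s
    · obtain ⟨ε, hε, hbad⟩ := exists_isBadlyApprox_of_not_cond12 hirr hs fun n => hw (2 * n)
      obtain ⟨k, hk⟩ := exists_nat_one_div_lt hε
      exact .inr (mem_iUnion.2 ⟨k, hbad.anti hk.le⟩)
    · exact .inl (not_not.1 hirr)
  refine nonpos_iff_eq_zero.1 ((dimH_mono hsub).trans ?_)
  rw [dimH_union, dimH_iUnion, (countable_range _).dimH_zero]
  exact max_le le_rfl
    (iSup_le fun k => (dimH_setOf_isBadlyApprox hp.ne_zero hΛ (by positivity)).le)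

lemma cond12_of_pow_mul {l : ℕ}
    (h : Cond12 p ((p : ℝ) ^ l * s) ((p : ℚ_[p]) ^ l * v)) : Cond12 p s v := by
  intro ε hε N
  have hp : 1 ≤ p := (Fact.out : p.Prime).one_le
  have hpos : (0 : ℝ) < (p : ℝ) ^ l := by positivity
  obtain ⟨q, q₀, hq, hq₀, hlt⟩ := h (ε / (p : ℝ) ^ l) (by positivity) N
  refine ⟨(p : ℤ) ^ l * q, q₀, ?_, hq₀, ?_⟩
  · rw [abs_mul, abs_of_pos (by positivity)]
    exact hq.trans (le_mul_of_one_le_left (abs_nonneg q) (one_le_pow₀ (by exact_mod_cast hp)))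
  · rw [lt_div_iff₀ hpos] at hlt
    refine lt_of_eq_of_lt ?_ hlt
    push_cast
    rw [abs_mul, abs_of_pos hpos,
      show (p : ℝ) ^ l * q * s - q₀ = q * ((p : ℝ) ^ l * s) - q₀ by ring,
      show (p : ℚ_[p]) ^ l * q * v - q₀ = q * ((p : ℚ_[p]) ^ l * v) - q₀ by ring]
    ring

lemma exists_norm_pow_mul_le_one (v : ℚ_[p]) : ∃ l : ℕ, ‖(p : ℚ_[p]) ^ l * v‖ ≤ 1 := by
  have hp : (1 : ℝ) < p := by exact_mod_cast (Fact.out : p.Prime).one_lt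
  obtain ⟨l, hl⟩ := pow_unbounded_of_one_lt ‖v‖ hp
  refine ⟨l, ?_⟩
  rw [norm_mul, norm_pow, Padic.norm_p, inv_pow, inv_mul_le_iff₀ (by positivity), mul_one]
  exact hl.le

end Cond12

end MixedLittlewood

open MixedLittlewood in
/-- For every prime `p` and every `v ∈ ℚ_p`, the set of `u ∈ ℝ` such that `(u,v)` does not
satisfy condition (1.2) has Hausdorff dimension zero. -/
theorem dimH_not_cond12_eq_zero (p : ℕ) [Fact p.Prime] (v : ℚ_[p]) :
    dimH {u : ℝ | ¬ Cond12 p u v} = 0 := by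
  obtain ⟨l, hv⟩ := exists_norm_pow_mul_le_one v
  have hp : (p : ℝ) ≠ 0 := by exact_mod_cast (Fact.out : p.Prime).ne_zero
  have hscale : {u : ℝ | ¬ Cond12 p u v} ⊆
      (((p : ℝ) ^ l)⁻¹ • ·) '' {u : ℝ | ¬ Cond12 p u ((p : ℚ_[p]) ^ l * v)} := fun u hu =>
    ⟨(p : ℝ) ^ l * u, fun h => hu (cond12_of_pow_mul h), by simp [hp]⟩
  refine nonpos_iff_eq_zero.1 ((dimH_mono hscale).trans ?_)
  exact ((lipschitzWith_smul ((p : ℝ) ^ l)⁻¹).dimH_image_le _).trans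
    (dimH_not_cond12_of_norm_le_one hv).le
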